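/- arXiv:0907.2730 — 2 statements merged into one kernel-verified Lean document; each statement's English description precedes it below -/
import Mathlib

section
/- Let Γ₂ be the balloon graph with 2 balloons. Then the 2-strand braid group B₂(Γ₂) = π₁(UC²(Γ₂)) (at any basepoint) is isomorphic to the free product (coproduct of groups) of the free group on three generators, FreeGroup (Fin 3), with the free abelian group ℤ² (i.e., Multiplicative (ℤ × ℤ)). -/
/-- The ordered configuration space of `n` points on `X`. -/
abbrev Conf (n : ℕ) (X : Type*) [TopologicalSpace X] : Type _ :=
  {f : Fin n → X // Function.Injective f}

/-- Two configurations are equivalent iff they differ by a permutation of coordinates. -/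
def confSetoid (n : ℕ) (X : Type*) [TopologicalSpace X] : Setoid (Conf n X) where
  r f g := ∃ σ : Equiv.Perm (Fin n), (f : Fin n → X) = (g : Fin n → X) ∘ σ
  iseqv := by
    refine ⟨fun f => ⟨Equiv.refl _, rfl⟩, ?_, ?_⟩
    · rintro f g ⟨σ, h⟩
      exact ⟨σ.symm, funext fun x => by simp [h, Function.comp]⟩
    · rintro f g h ⟨σ, hfg⟩ ⟨τ, hgh⟩
      exact ⟨σ.trans τ, funext fun x => by simp [hfg, hgh, Function.comp]⟩

/-- The unordered configuration space of `n` points on `X`, with the quotient topology. -/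
abbrev UConf (n : ℕ) (X : Type*) [TopologicalSpace X] : Type _ :=
  Quotient (confSetoid n X)


/-- The balloon graph with `m` balloons, as a subset of `ℝ²`: a stem from `(0,-1)` to
`(0,0)`, segments from `(0,0)` to `(i,1)` for `i = 1, …, m`, and circles of radius `1/4`
centered at `(i, 5/4)` for `i = 1, …, m`. -/
def balloonGraph (m : ℕ) : Set (ℝ × ℝ) :=
  segment ℝ ((0 : ℝ), (-1 : ℝ)) ((0 : ℝ), (0 : ℝ)) ∪
    (⋃ i ∈ Finset.Icc 1 m, segment ℝ ((0 : ℝ), (0 : ℝ)) ((i : ℝ), (1 : ℝ))) ∪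
    (⋃ i ∈ Finset.Icc 1 m,
      {p : ℝ × ℝ | (p.1 - (i : ℝ)) ^ 2 + (p.2 - 5 / 4) ^ 2 = (1 / 4 : ℝ) ^ 2})


section fileA

open Set unitInterval Topology

/-- A covering-space transport with values in a group `G`, obtained from a locally constant cocycle. -/
theorem exists_transport {X ι G : Type*} [TopologicalSpace X] [Group G]
    (U : ι → Set X) (hU : ∀ i, IsOpen (U i)) (hc : ∀ x, ∃ i, x ∈ U i) (κ : ι → X → G)
    (hκ : ∀ i j x, x ∈ U i → x ∈ U j →
      ∀ᶠ y in 𝓝 x, (κ j y)⁻¹ * κ i y = (κ j x)⁻¹ * κ i x) :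
    ∃ T : ∀ x y : X, Path.Homotopic.Quotient x y → G → G,
      (∀ x g, T x x (.refl x) g = g) ∧
      (∀ x y z γ γ' g, T x z (γ.trans γ') g = T y z γ' (T x y γ g)) ∧
      (∀ i x y (γ : Path x y), (∀ t, γ t ∈ U i) → ∀ g, T x y (.mk γ) g = κ i y * (κ i x)⁻¹ * g) := by
  classical
  letI : TopologicalSpace G := ⊥
  haveI : DiscreteTopology G := ⟨rfl⟩
  choose idx hidx using hc
  let Z : FiberBundleCore ι X G :=
    { baseSet := U
      isOpen_baseSet := hU
      indexAt := idx
      mem_baseSet_at := hidx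
      coordChange := fun i j x v => (κ j x)⁻¹ * κ i x * v
      coordChange_self := by intro i x _ v; simp
      continuousOn_coordChange := by
        rintro i j ⟨x, v⟩ ⟨⟨hi, hj⟩, -⟩
        apply ContinuousAt.continuousWithinAt
        have h1 : ∀ᶠ q : X × G in 𝓝 (x, v), (κ j q.1)⁻¹ * κ i q.1 = (κ j x)⁻¹ * κ i x :=
          (continuous_fst.tendsto (x, v)).eventually (hκ i j x hi hj)
        have h2 : (fun q : X × G => (κ j x)⁻¹ * κ i x * q.2) =ᶠ[𝓝 (x, v)]
            fun p => (κ j p.1)⁻¹ * κ i p.1 * p.2 := by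
          filter_upwards [h1] with q hq
          rw [hq]
        refine ContinuousAt.congr ?_ h2
        exact (continuous_of_discreteTopology (f := fun g : G => (κ j x)⁻¹ * κ i x * g)).continuousAt.comp
          continuous_snd.continuousAt
      coordChange_comp := by intro i j k x _ v; group }
  have cov : IsCoveringMap Z.proj :=
    IsFiberBundle.isCoveringMap fun x => ⟨Z.localTriv (idx x), hidx x⟩
  let gl : Z.TotalSpace → G := fun e => κ (idx e.1) e.1 * (show G from e.2)
  let mkE : X → G → Z.TotalSpace := fun x g => ⟨x, (κ (idx x) x)⁻¹ * g⟩
  have glmk : ∀ x g, gl (mkE x g) = g := fun x g => mul_inv_cancel_left (κ (idx x) x) g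
  have mkgl : ∀ e, mkE e.1 (gl e) = e := fun e => by
    obtain ⟨x, v⟩ := e
    change (⟨x, (κ (idx x) x)⁻¹ * (κ (idx x) x * (show G from v))⟩ : Z.TotalSpace) = ⟨x, v⟩
    rw [inv_mul_cancel_left]
  refine ⟨fun x y γ g => gl (cov.monodromy γ ⟨mkE x g, rfl⟩).1, ?_, ?_, ?_⟩
  · intro x g
    simp only [cov.monodromy_refl, id, glmk]
  · intro x y z γ γ' g
    have key : ∀ e : Z.proj ⁻¹' {y}, e = ⟨mkE y (gl e.1), rfl⟩ := by
      rintro ⟨e, rfl⟩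
      exact Subtype.ext (mkgl e).symm
    change gl (cov.monodromy (γ.trans γ') ⟨mkE x g, rfl⟩).1 = _
    rw [cov.monodromy_trans_apply, key (cov.monodromy γ ⟨mkE x g, rfl⟩)]
  · intro i x y γ hγ g
    have hlift : Continuous fun t => (Z.localTriv i).toPartialEquiv.symm (γ t, (κ i x)⁻¹ * g) := by
      have := (Z.localTriv i).continuousOn_invFun
      refine this.comp_continuous (by fun_prop) ?_
      intro t
      rw [(Z.localTriv i).target_eq]
      exact ⟨hγ t, trivial⟩
    have hval : ∀ t, (Z.localTriv i).toPartialEquiv.symm (γ t, (κ i x)⁻¹ * g)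
        = mkE (γ t) (κ i (γ t) * ((κ i x)⁻¹ * g)) := by
      intro t
      change (⟨γ t, _⟩ : Z.TotalSpace) = ⟨γ t, _⟩
      congr 1
      change (κ _ _)⁻¹ * κ _ _ * _ = _
      rw [mul_assoc]
    have hlift' : Continuous fun t => mkE (γ t) (κ i (γ t) * ((κ i x)⁻¹ * g)) := by
      have h9 := funext hval
      rw [← h9]; exact hlift
    have := (cov.eq_liftPath_iff (γ := (γ : C(I, X))) (e := mkE x g) γ.source).2
      ⟨hlift', by ext t; rfl, by simp⟩
    change gl (cov.liftPath (γ : C(I, X)) (mkE x g) γ.source 1) = _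
    rw [← this, glmk]
    simp [mul_assoc]

/-- Induction principle for path classes relative to an open cover. -/
theorem path_induction {X ι : Type*} [TopologicalSpace X] (U : ι → Set X) (hU : ∀ i, IsOpen (U i))
    (hc : ∀ x, ∃ i, x ∈ U i) (b : X) (S : ∀ x, Path.Homotopic.Quotient b x → Prop)
    (h0 : S b (.refl b))
    (hs : ∀ i x y (γ : Path x y) δ, (∀ t, γ t ∈ U i) → S x δ → S y (δ.trans (.mk γ)))
    (x : X) (δ : Path.Homotopic.Quotient b x) : S x δ := by
  obtain ⟨γ⟩ := δ
  change S x (.mk γ)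
  obtain ⟨t, t0, tm, ⟨n, hn⟩, ht⟩ := exists_monotone_Icc_subset_open_cover_unitInterval
    (c := fun i => γ ⁻¹' (U i)) (fun i => (hU i).preimage γ.continuous)
    (fun s _ => by
      obtain ⟨i, hi⟩ := hc (γ s)
      exact mem_iUnion.2 ⟨i, hi⟩)
  have key : ∀ m, S (γ (t m)) (.mk ((γ.subpath 0 (t m)).cast γ.source.symm rfl)) := by
    intro m
    induction m with
    | zero =>
      rw [t0]
      have h1 : ∀ (z : X) (hz : b = z), S z (.mk ((Path.refl z).cast hz rfl)) := by
        rintro z rfl; exact h0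
      have h2 := h1 (γ 0) γ.source.symm
      rw [Path.subpath_self]
      exact h2
    | succ m ih =>
      obtain ⟨i, hi⟩ := ht m
      have h1 := hs i _ _ (γ.subpath (t m) (t (m+1))) _ ?_ ih
      · have h2 : (Path.Homotopic.Quotient.mk ((γ.subpath 0 (t m)).cast γ.source.symm rfl)).trans
          (.mk (γ.subpath (t m) (t (m+1)))) =
          .mk ((γ.subpath 0 (t (m+1))).cast γ.source.symm rfl) := by
          have h3 : ∀ (z : X) (hz : b = z) (p : Path z (γ (t m))) (q : Path (γ (t m)) (γ (t (m+1))))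
              (r : Path z (γ (t (m+1)))), (p.trans q).Homotopic r →
              (Path.Homotopic.Quotient.mk (p.cast hz rfl)).trans (.mk q) = .mk (r.cast hz rfl) := by
            rintro z rfl p q r h
            exact Quotient.sound h
          exact h3 _ _ _ _ _ ⟨Path.Homotopy.subpathTransSubpath γ 0 (t m) (t (m+1))⟩
        rw [← h2]; exact h1
      · intro s
        have h4 : γ.subpath (t m) (t (m+1)) s ∈ range (γ.subpath (t m) (t (m+1))) := ⟨s, rfl⟩
        rw [Path.range_subpath_of_le _ _ _ (tm (Nat.le_succ m))] at h4
        obtain ⟨r, hr, hr2⟩ := h4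
        rw [← hr2]
        exact hi hr
  have h5 := key n
  rw [hn n le_rfl] at h5
  have h6 : ∀ (z : X) (hz : z = x) (p : Path b z), S z (.mk p) → S x (.mk (p.cast rfl hz.symm)) := by
    rintro z rfl p h; exact h
  have h7 := h6 _ γ.target _ h5
  convert h7
  rw [Path.subpath_zero_one]
  rfl

end fileA

section fileB
open Set Topology

section qlemmas
variable {X : Type*} [TopologicalSpace X] {x y z : X}

theorem q_symm_symm (α : Path.Homotopic.Quotient x y) : α.symm.symm = α := by
  induction α using Path.Homotopic.Quotient.ind with
  | _ γ => rw [← Path.Homotopic.Quotient.mk_symm, ← Path.Homotopic.Quotient.mk_symm, Path.symm_symm]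

theorem q_cancel (α : Path.Homotopic.Quotient x y) (β : Path.Homotopic.Quotient y z) :
    α.symm.trans (α.trans β) = β := by
  rw [← Path.Homotopic.Quotient.trans_assoc, Path.Homotopic.Quotient.symm_trans,
    Path.Homotopic.Quotient.refl_trans]

theorem q_cancel' (α : Path.Homotopic.Quotient y x) (β : Path.Homotopic.Quotient y z) :
    α.trans (α.symm.trans β) = β := by
  rw [← Path.Homotopic.Quotient.trans_assoc, Path.Homotopic.Quotient.trans_symm,
    Path.Homotopic.Quotient.refl_trans]

theorem q_symm_refl : (Path.Homotopic.Quotient.refl x).symm = .refl x := rfl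

theorem q_symm_trans (α : Path.Homotopic.Quotient x y) (β : Path.Homotopic.Quotient y z) :
    (α.trans β).symm = β.symm.trans α.symm := by
  have h2 : (α.trans β).symm.trans ((α.trans β).trans (β.symm.trans α.symm)) =
    β.symm.trans α.symm := q_cancel _ _
  rw [Path.Homotopic.Quotient.trans_assoc, q_cancel', Path.Homotopic.Quotient.trans_symm,
    Path.Homotopic.Quotient.trans_refl] at h2
  exact h2

end qlemmas


/-- The path class `α` has a representative inside `S`. -/
def InSet {X : Type*} [TopologicalSpace X] (S : Set X) {x y : X}
    (α : Path.Homotopic.Quotient x y) : Prop :=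
  ∃ γ : Path x y, (∀ t, γ t ∈ S) ∧ Path.Homotopic.Quotient.mk γ = α

namespace InSet
variable {X : Type*} [TopologicalSpace X] {S S' : Set X} {x y z : X}

theorem trans {α : Path.Homotopic.Quotient x y} {β : Path.Homotopic.Quotient y z}
    (ha : InSet S α) (hb : InSet S β) : InSet S (α.trans β) := by
  obtain ⟨γ, h, rfl⟩ := ha
  obtain ⟨γ', h', rfl⟩ := hb
  refine ⟨γ.trans γ', fun t => ?_, rfl⟩
  have : γ.trans γ' t ∈ range (γ.trans γ') := ⟨t, rfl⟩
  rw [Path.trans_range] at this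
  rcases this with ⟨s, hs⟩ | ⟨s, hs⟩
  · rw [← hs]; exact h s
  · rw [← hs]; exact h' s

theorem symm {α : Path.Homotopic.Quotient x y} (ha : InSet S α) : InSet S α.symm := by
  obtain ⟨γ, h, rfl⟩ := ha
  exact ⟨γ.symm, fun t => h _, rfl⟩

theorem refl (hx : x ∈ S) : InSet S (.refl x) := ⟨Path.refl x, fun _ => hx, rfl⟩

theorem mono {α : Path.Homotopic.Quotient x y} (h : S ⊆ S') (ha : InSet S α) : InSet S' α := by
  obtain ⟨γ, h', rfl⟩ := ha
  exact ⟨γ, fun t => h (h' t), rfl⟩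

theorem left {α : Path.Homotopic.Quotient x y} (ha : InSet S α) : x ∈ S := by
  obtain ⟨γ, h', rfl⟩ := ha
  simpa using h' 0

theorem right {α : Path.Homotopic.Quotient x y} (ha : InSet S α) : y ∈ S := by
  obtain ⟨γ, h', rfl⟩ := ha
  simpa using h' 1

end InSet

/-- Generation lemma: if `X` is covered by an open `Y` and disjoint open `N j`, then a
subgroup-like predicate holding on loops of `Y` and on crossing loops holds for all loops. -/
theorem gen_loops {X J : Type*} [TopologicalSpace X] (b : X) (Y : Set X) (N : J → Set X)
    (hY : IsOpen Y) (hN : ∀ j, IsOpen (N j)) (hcov : ∀ x, x ∈ Y ∨ ∃ j, x ∈ N j)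
    (hdisj : ∀ i j x, x ∈ N i → x ∈ N j → i = j) (hb : b ∈ Y)
    (hcon : ∀ q ∈ Y, ∃ α : Path.Homotopic.Quotient b q, InSet Y α)
    (H : Path.Homotopic.Quotient b b → Prop)
    (Htrans : ∀ α β, H α → H β → H (α.trans β))
    (HY : ∀ α, InSet Y α → H α)
    (Hc : ∀ j q q' (σ : Path.Homotopic.Quotient b q) (τ : Path.Homotopic.Quotient q q')
      (σ' : Path.Homotopic.Quotient b q'), InSet Y σ → InSet Y σ' → InSet (N j) τ →
      H ((σ.trans τ).trans σ'.symm)) (α : Path.Homotopic.Quotient b b) : H α := by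
  have key := path_induction (fun o : Option J => o.elim Y N) (by rintro (_ | j); exacts [hY, hN j])
    (fun x => by
      rcases hcov x with h | ⟨j, h⟩
      exacts [⟨none, h⟩, ⟨some j, h⟩]) b
    (fun p δ => (∀ ρ : Path.Homotopic.Quotient p b, InSet Y ρ → H (δ.trans ρ)) ∧
      ∀ j q (τ : Path.Homotopic.Quotient p q) (σ : Path.Homotopic.Quotient b q),
        InSet (N j) τ → InSet Y σ → H (δ.trans (τ.trans σ.symm)))
    ⟨fun ρ hρ => by simpa only [Path.Homotopic.Quotient.refl_trans] using HY ρ hρ, fun j q τ σ h h' => by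
      simpa only [Path.Homotopic.Quotient.refl_trans] using Hc j b q (.refl b) τ σ (.refl hb) h' h⟩ ?_ b α
  · simpa only [Path.Homotopic.Quotient.trans_refl] using key.1 _ (InSet.refl hb)
  · rintro (_ | j) x y γ δ hγ ⟨h1, h2⟩
    · have hγ' : InSet Y (Path.Homotopic.Quotient.mk γ) := ⟨γ, hγ, rfl⟩
      refine ⟨fun ρ hρ => ?_, fun j q τ σ hτ hσ => ?_⟩
      · simpa only [Path.Homotopic.Quotient.trans_assoc, q_symm_symm, q_cancel] using h1 _ (hγ'.trans hρ)
      · obtain ⟨s, hs⟩ := hcon y hγ'.right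
        have e1 := h1 _ (hγ'.trans hs.symm)
        have e2 := Hc j _ _ s τ σ hs hσ hτ
        have := Htrans _ _ e1 e2
        simpa only [Path.Homotopic.Quotient.trans_assoc, q_symm_symm, q_cancel] using this
    · have hγ' : InSet (N j) (Path.Homotopic.Quotient.mk γ) := ⟨γ, hγ, rfl⟩
      refine ⟨fun ρ hρ => ?_, fun k q τ σ hτ hσ => ?_⟩
      · simpa only [Path.Homotopic.Quotient.trans_assoc, q_symm_symm, q_cancel] using h2 j _ _ ρ.symm hγ' hρ.symm
      · obtain rfl := hdisj _ _ _ hγ'.right hτ.left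
        simpa only [Path.Homotopic.Quotient.trans_assoc, q_symm_symm, q_cancel] using h2 _ _ _ σ (hγ'.trans hτ) hσ

end fileB

section fileC
open Set Topology

theorem ev_ite {X G : Type*} [TopologicalSpace X] {Vm Vp : Set X} (om : IsOpen Vm) (op : IsOpen Vp)
    (hd : Disjoint Vm Vp) (x : X) (hx : x ∈ Vm ∪ Vp) (f : Prop → G) :
    ∀ᶠ y in 𝓝 x, f (y ∈ Vp) = f (x ∈ Vp) := by
  rcases hx with hx | hx
  · filter_upwards [om.mem_nhds hx] with y hy
    have h1 : y ∉ Vp := disjoint_left.1 hd hy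
    have h2 : x ∉ Vp := disjoint_left.1 hd hx
    simp only [h1, h2]
  · filter_upwards [op.mem_nhds hx] with y hy
    simp only [hy, hx]

section
open Classical in
/-- The indicator with values in a group. -/
noncomputable def ind {G : Type*} [One G] (a : G) (d : Bool) (p : Prop) : G :=
  if d = true ∧ p then a else 1

theorem ev_ind {X G : Type*} [TopologicalSpace X] [Group G] (a : G) {A V Vm Vp : Set X}
    (om : IsOpen Vm) (op : IsOpen Vp) (hd : Disjoint Vm Vp) (h : A ∩ V ⊆ Vm ∪ Vp)
    (d e : Bool) (x : X) (h1 : x ∈ if d then V else A) (h2 : x ∈ if e then V else A) :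
    ∀ᶠ y in 𝓝 x, (ind a e (y ∈ Vp))⁻¹ * ind a d (y ∈ Vp) =
      (ind a e (x ∈ Vp))⁻¹ * ind a d (x ∈ Vp) := by
  by_cases hde : d = e
  · subst hde; simp
  · have : x ∈ Vm ∪ Vp := by
      cases d <;> cases e <;> simp at hde h1 h2
      · exact h ⟨h1, h2⟩
      · exact h ⟨h2, h1⟩
    exact ev_ite om op hd x this (fun p => (ind a e p)⁻¹ * ind a d p)

theorem ind_commute {G : Type*} [Group G] {a a' : G} (h : Commute a a') (d d' : Bool) (p p' : Prop) :
    Commute (ind a d p) (ind a' d' p') := by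
  unfold ind
  split_ifs <;> simp [h]
end

theorem abstract_transport {X : Type*} [TopologicalSpace X] 
    (A1 V1 V1m V1p A2 V2 V2m V2p Y : Set X) (N Pm Pp : Fin 3 → Set X)
    (oA1 : IsOpen A1) (oV1 : IsOpen V1) (oV1m : IsOpen V1m) (oV1p : IsOpen V1p)
    (oA2 : IsOpen A2) (oV2 : IsOpen V2) (oV2m : IsOpen V2m) (oV2p : IsOpen V2p)
    (oN : ∀ j, IsOpen (N j)) (oPm : ∀ j, IsOpen (Pm j)) (oPp : ∀ j, IsOpen (Pp j))
    (hY1 : Y = A1 ∪ V1) (hY2 : Y = A2 ∪ V2)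
    (h1 : A1 ∩ V1 ⊆ V1m ∪ V1p) (d1 : Disjoint V1m V1p)
    (h2 : A2 ∩ V2 ⊆ V2m ∪ V2p) (d2 : Disjoint V2m V2p)
    (hcov : ∀ x, x ∈ Y ∨ ∃ j, x ∈ N j)
    (hdisj : ∀ i j x, x ∈ N i → x ∈ N j → i = j)
    (hP : ∀ j, N j ∩ Y ⊆ Pm j ∪ Pp j) (hPm : ∀ j, Pm j ⊆ N j ∩ (A1 ∩ A2))
    (hPp : ∀ j, Pp j ⊆ N j ∩ (A1 ∩ A2)) (hPd : ∀ j, Disjoint (Pm j) (Pp j))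
    {G : Type*} [Group G] (a1 a2 : G) (ha : Commute a1 a2) (g : Fin 3 → G) :
    ∃ T : ∀ x y : X, Path.Homotopic.Quotient x y → G → G,
      (∀ x g, T x x (.refl x) g = g) ∧
      (∀ x y z γ γ' g, T x z (γ.trans γ') g = T y z γ' (T x y γ g)) ∧
      (∀ x y γ, InSet (A1 ∩ A2) γ → ∀ u, T x y γ u = u) ∧
      (∀ x y γ, InSet (V1 ∩ A2) γ → x ∈ V1m → y ∈ V1p → ∀ u, T x y γ u = a1 * u) ∧
      (∀ x y γ, InSet (A1 ∩ V2) γ → x ∈ V2m → y ∈ V2p → ∀ u, T x y γ u = a2 * u) ∧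
      (∀ j x y γ, InSet (N j) γ → x ∈ Pm j → y ∈ Pp j → ∀ u, T x y γ u = g j * u) := by
  classical
  let κN : X → G := fun x => if h : ∃ j, x ∈ Pp j then g h.choose else 1
  have κNp : ∀ j x, x ∈ Pp j → κN x = g j := by
    intro j x hx
    have h : ∃ j, x ∈ Pp j := ⟨j, hx⟩
    have : h.choose = j := hdisj _ _ x (hPp _ h.choose_spec).1 (hPp _ hx).1
    simp only [κN, dif_pos h, this]
  have κNm : ∀ j x, x ∈ Pm j → κN x = 1 := by
    intro j x hx
    have h : ¬ ∃ j, x ∈ Pp j := by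
      rintro ⟨k, hk⟩
      obtain rfl := hdisj _ _ x (hPp _ hk).1 (hPm _ hx).1
      exact disjoint_left.1 (hPd k) hx hk
    simp only [κN, dif_neg h]
  have κNev : ∀ j x, x ∈ Pm j ∪ Pp j → ∀ᶠ y in 𝓝 x, κN y = κN x := by
    rintro j x (hx | hx)
    · filter_upwards [(oPm j).mem_nhds hx] with y hy
      rw [κNm j _ hx, κNm j _ hy]
    · filter_upwards [(oPp j).mem_nhds hx] with y hy
      rw [κNp j _ hx, κNp j _ hy]
  let U : Option (Bool × Bool) → Set X := fun o => o.elim (⋃ j, N j)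
    (fun d => (if d.1 then V1 else A1) ∩ (if d.2 then V2 else A2))
  let κ : Option (Bool × Bool) → X → G := fun o x => o.elim (κN x)
    (fun d => ind a1 d.1 (x ∈ V1p) * ind a2 d.2 (x ∈ V2p))
  have UY : ∀ d x, x ∈ U (some d) → x ∈ Y := by
    rintro ⟨d, e⟩ x ⟨hx, -⟩
    rw [hY1]
    cases d <;> simp at hx
    exacts [.inl hx, .inr hx]
  have hsome : ∀ d e x, x ∈ U (some d) → x ∈ U (some e) →
      ∀ᶠ y in 𝓝 x, (κ (some e) y)⁻¹ * κ (some d) y = (κ (some e) x)⁻¹ * κ (some d) x := by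
    intro d e x hd he
    have k : ∀ y, (κ (some e) y)⁻¹ * κ (some d) y =
        ((ind a1 e.1 (y ∈ V1p))⁻¹ * ind a1 d.1 (y ∈ V1p)) *
        ((ind a2 e.2 (y ∈ V2p))⁻¹ * ind a2 d.2 (y ∈ V2p)) := by
      intro y
      have c1 := (ind_commute ha e.1 e.2 (y ∈ V1p) (y ∈ V2p)).inv_inv
      have c2 := (ind_commute ha d.1 e.2 (y ∈ V1p) (y ∈ V2p)).inv_right
      simp only [κ, Option.elim, mul_inv_rev]
      rw [← c1.eq]
      simp only [mul_assoc]
      rw [← mul_assoc (ind a2 e.2 (y ∈ V2p))⁻¹, ← c2.eq, mul_assoc]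
    filter_upwards [ev_ind a1 oV1m oV1p d1 h1 d.1 e.1 x hd.1 he.1,
      ev_ind a2 oV2m oV2p d2 h2 d.2 e.2 x hd.2 he.2] with y q1 q2
    rw [k, k, q1, q2]
  have hk0 : ∀ y, κ (some (false, false)) y = 1 := by intro y; simp [κ, ind]
  have hmix : ∀ d x, x ∈ U (some d) → x ∈ U none → ∀ᶠ y in 𝓝 x,
      κ (some d) y = κ (some d) x ∧ κN y = κN x := by
    intro d x hx hn
    obtain ⟨j, hj⟩ := mem_iUnion.1 hn
    have hpp := hP j ⟨hj, UY d x hx⟩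
    have hA : x ∈ U (some (false, false)) := by
      rcases hpp with h | h
      · exact (hPm j h).2
      · exact (hPp j h).2
    filter_upwards [κNev j x hpp, hsome d _ x hx hA] with y q1 q2
    rw [hk0, hk0] at q2
    exact ⟨by simpa using q2, q1⟩
  obtain ⟨T, t1, t2, t3⟩ := exists_transport U (by
      rintro (_ | ⟨d, e⟩)
      · exact isOpen_iUnion oN
      · refine IsOpen.inter ?_ ?_
        · cases d <;> simp [*]
        · cases e <;> simp [*])
    (by
      intro x
      rcases hcov x with h | ⟨j, h⟩
      · have h' := h
        rw [hY1] at h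
        rw [hY2] at h'
        rcases h with h | h <;> rcases h' with h' | h'
        · exact ⟨some (false, false), by simpa using h, by simpa using h'⟩
        · exact ⟨some (false, true), by simpa using h, by simpa using h'⟩
        · exact ⟨some (true, false), by simpa using h, by simpa using h'⟩
        · exact ⟨some (true, true), by simpa using h, by simpa using h'⟩
      · exact ⟨none, mem_iUnion.2 ⟨j, h⟩⟩) κ
    (by
      rintro (_ | d) (_ | e) x hi hj
      · simp
      · filter_upwards [hmix e x hj hi] with y hy
        rw [hy.1]
        simp only [κ, Option.elim, hy.2]
      · filter_upwards [hmix d x hi hj] with y hy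
        rw [hy.1]
        simp only [κ, Option.elim, hy.2]
      · exact hsome d e x hi hj)
  refine ⟨T, t1, t2, ?_, ?_, ?_, ?_⟩
  · rintro x y _ ⟨γ, h, rfl⟩ u
    rw [t3 (some (false, false)) x y γ (fun t => by simpa [U] using h t), hk0, hk0]; simp
  · rintro x y _ ⟨γ, h, rfl⟩ hx hy u
    have hx' : x ∉ V1p := disjoint_left.1 d1 hx
    rw [t3 (some (true, false)) x y γ (fun t => by simpa [U] using h t)]; simp [κ, ind, hy, hx']
  · rintro x y _ ⟨γ, h, rfl⟩ hx hy u
    have hx' : x ∉ V2p := disjoint_left.1 d2 hx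
    rw [t3 (some (false, true)) x y γ (fun t => by simpa [U] using h t)]; simp [κ, ind, hy, hx']
  · rintro j x y _ ⟨γ, h, rfl⟩ hx hy u
    rw [t3 none x y γ (fun t => mem_iUnion.2 ⟨j, h t⟩)]
    simp only [κ, Option.elim, κNp j y hy, κNm j x hx]; simp

end fileC

section fileD
open Set Topology

/-- The homomorphism from `ℤ²` given by two commuting elements. -/
def zzHom {P : Type*} [Group P] (A B : P) (h : Commute A B) : Multiplicative (ℤ × ℤ) →* P where
  toFun z := A ^ (Multiplicative.toAdd z).1 * B ^ (Multiplicative.toAdd z).2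
  map_one' := by simp
  map_mul' z w := by
    simp only [toAdd_mul, Prod.fst_add, Prod.snd_add, zpow_add]
    have := (h.symm.zpow_zpow (Multiplicative.toAdd z).2 (Multiplicative.toAdd w).1).eq
    simp only [mul_assoc]
    rw [← mul_assoc (B ^ (Multiplicative.toAdd z).2), this]
    simp only [mul_assoc]

theorem zz_eq (z : Multiplicative (ℤ × ℤ)) :
    z = (Multiplicative.ofAdd ((1, 0) : ℤ × ℤ)) ^ (Multiplicative.toAdd z).1 *
      (Multiplicative.ofAdd ((0, 1) : ℤ × ℤ)) ^ (Multiplicative.toAdd z).2 := by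
  apply Multiplicative.toAdd.injective
  ext <;> simp

theorem zz_ext {P : Type*} [Group P] (f g : Multiplicative (ℤ × ℤ) →* P)
    (h1 : f (.ofAdd (1, 0)) = g (.ofAdd (1, 0))) (h2 : f (.ofAdd (0, 1)) = g (.ofAdd (0, 1))) :
    f = g := by
  refine DFunLike.ext _ _ fun z => ?_
  rw [zz_eq z]
  simp only [map_mul, map_zpow, h1, h2]

abbrev F3ZZ := Monoid.Coprod (FreeGroup (Fin 3)) (Multiplicative (ℤ × ℤ))

/-- Algebraic recognition: `π` is `F₃ * ℤ²`. -/
theorem recog {P : Type*} [Group P] (a1 a2 : P) (h : Commute a1 a2) (c : Fin 3 → P)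
    (Θ : P →* Function.End F3ZZ)
    (h1 : ∀ u, Θ a1 u = Monoid.Coprod.inr (.ofAdd (1, 0)) * u)
    (h2 : ∀ u, Θ a2 u = Monoid.Coprod.inr (.ofAdd (0, 1)) * u)
    (h3 : ∀ j u, Θ (c j) u = Monoid.Coprod.inl (FreeGroup.of j) * u)
    (hgen : ∀ K : Subgroup P, a1 ∈ K → a2 ∈ K → (∀ j, c j ∈ K) → K = ⊤) :
    Nonempty (P ≃* F3ZZ) := by
  let ψ : F3ZZ →* P := Monoid.Coprod.lift (FreeGroup.lift c) (zzHom a1 a2 h)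
  let L : F3ZZ →* Function.End F3ZZ := MulAction.toEndHom
  have hL : ∀ g u, L g u = g * u := fun g u => rfl
  have hψ1 : ψ (Monoid.Coprod.inr (.ofAdd (1, 0))) = a1 := by simp [ψ, zzHom]
  have hψ2 : ψ (Monoid.Coprod.inr (.ofAdd (0, 1))) = a2 := by simp [ψ, zzHom]
  have hψ3 : ∀ j, ψ (Monoid.Coprod.inl (FreeGroup.of j)) = c j := by simp [ψ]
  have key : Θ.toHomUnits.comp ψ = L.toHomUnits := by
    apply Monoid.Coprod.hom_ext
    · apply FreeGroup.ext_hom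
      intro j
      ext1
      simp only [MonoidHom.comp_apply, hψ3, MonoidHom.coe_toHomUnits]
      funext u
      rw [h3, hL]
    · apply zz_ext
      · ext1
        simp only [MonoidHom.comp_apply, hψ1, MonoidHom.coe_toHomUnits]
        funext u
        rw [h1, hL]
      · ext1
        simp only [MonoidHom.comp_apply, hψ2, MonoidHom.coe_toHomUnits]
        funext u
        rw [h2, hL]
  have key2 : ∀ g, Θ (ψ g) 1 = g := by
    intro g
    have := congrArg (fun f => (f g : Function.End F3ZZ) 1) key
    simpa [hL] using this
  refine ⟨(MulEquiv.ofBijective ψ ⟨fun g g' hg => ?_, ?_⟩).symm⟩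
  · rw [← key2 g, ← key2 g', hg]
  · rw [← MonoidHom.range_eq_top]
    exact hgen _ ⟨_, hψ1⟩ ⟨_, hψ2⟩ fun j => ⟨_, hψ3 j⟩

theorem abstract_main {X : Type*} [TopologicalSpace X] (b : X)
    (A1 V1 V1m V1p A2 V2 V2m V2p Y : Set X) (N Pm Pp : Fin 3 → Set X)
    (oA1 : IsOpen A1) (oV1 : IsOpen V1) (oV1m : IsOpen V1m) (oV1p : IsOpen V1p)
    (oA2 : IsOpen A2) (oV2 : IsOpen V2) (oV2m : IsOpen V2m) (oV2p : IsOpen V2p)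
    (oN : ∀ j, IsOpen (N j)) (oPm : ∀ j, IsOpen (Pm j)) (oPp : ∀ j, IsOpen (Pp j))
    (hY1 : Y = A1 ∪ V1) (hY2 : Y = A2 ∪ V2)
    (h1 : A1 ∩ V1 ⊆ V1m ∪ V1p) (d1 : Disjoint V1m V1p)
    (h2 : A2 ∩ V2 ⊆ V2m ∪ V2p) (d2 : Disjoint V2m V2p)
    (hcov : ∀ x, x ∈ Y ∨ ∃ j, x ∈ N j)
    (hdisj : ∀ i j x, x ∈ N i → x ∈ N j → i = j)
    (hP : ∀ j, N j ∩ Y ⊆ Pm j ∪ Pp j) (hPm : ∀ j, Pm j ⊆ N j ∩ (A1 ∩ A2))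
    (hPp : ∀ j, Pp j ⊆ N j ∩ (A1 ∩ A2)) (hPd : ∀ j, Disjoint (Pm j) (Pp j))
    (conY : ∀ q ∈ Y, ∃ α : Path.Homotopic.Quotient b q, InSet Y α)
    (conA : ∀ q ∈ A1 ∩ A2, ∃ α : Path.Homotopic.Quotient b q, InSet (A1 ∩ A2) α)
    (scN : ∀ j x y (α β : Path.Homotopic.Quotient x y), InSet (N j) α → InSet (N j) β → α = β)
    (conN : ∀ j, ∀ x ∈ N j, ∀ y ∈ N j, ∃ α : Path.Homotopic.Quotient x y, InSet (N j) α)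
    (conPm : ∀ j, ∀ x ∈ Pm j, ∀ y ∈ Pm j, ∃ α : Path.Homotopic.Quotient x y, InSet (Pm j) α)
    (conPp : ∀ j, ∀ x ∈ Pp j, ∀ y ∈ Pp j, ∃ α : Path.Homotopic.Quotient x y, InSet (Pp j) α)
    (nem : ∀ j, (Pm j).Nonempty) (nep : ∀ j, (Pp j).Nonempty)
    (b1 b2 : X) (α1 : Path.Homotopic.Quotient b b1) (α1' : Path.Homotopic.Quotient b1 b)
    (α2 : Path.Homotopic.Quotient b b2) (α2' : Path.Homotopic.Quotient b2 b)
    (hα1 : InSet (V1 ∩ A2) α1) (hα1' : InSet (A1 ∩ A2) α1')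
    (hα2 : InSet (A1 ∩ V2) α2) (hα2' : InSet (A1 ∩ A2) α2')
    (hbV1 : b ∈ V1m) (hb1 : b1 ∈ V1p) (hbV2 : b ∈ V2m) (hb2 : b2 ∈ V2p)
    (hcomm : (α1.trans α1').trans (α2.trans α2') = (α2.trans α2').trans (α1.trans α1'))
    (hYl : ∀ α : FundamentalGroup X b, InSet Y α → ∀ K : Subgroup (FundamentalGroup X b),
      (α1.trans α1' : FundamentalGroup X b) ∈ K → (α2.trans α2' : FundamentalGroup X b) ∈ K → α ∈ K) :
    PathConnectedSpace X ∧ Nonempty (FundamentalGroup X b ≃* F3ZZ) := by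
  have hbA : b ∈ A1 ∩ A2 := hα1'.right
  have hAY : A1 ∩ A2 ⊆ Y := by rw [hY1]; exact fun x h => .inl h.1
  have hbY : b ∈ Y := hAY hbA
  choose nm hnm using nem
  choose np hnp using nep
  have oY : IsOpen Y := by rw [hY1]; exact oA1.union oV1
  constructor
  · have : ∀ x, Joined b x := by
      intro x
      rcases hcov x with h | ⟨j, h⟩
      · obtain ⟨_, γ, -⟩ := conY x h
        exact ⟨γ⟩
      · obtain ⟨_, γ, -⟩ := conY (nm j) (hAY (hPm j (hnm j)).2)
        obtain ⟨_, γ', -⟩ := conN j _ (hPm j (hnm j)).1 x h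
        exact ⟨γ.trans γ'⟩
    exact ⟨⟨b⟩, fun x y => (this x).symm.trans (this y)⟩
  choose sm hsm using fun j => conA (nm j) (hPm j (hnm j)).2
  choose sp hsp using fun j => conA (np j) (hPp j (hnp j)).2
  choose χ hχ using fun j => conN j _ (hPm j (hnm j)).1 _ (hPp j (hnp j)).1
  obtain ⟨T, t1, t2, tA, tV1, tV2, tN⟩ := abstract_transport A1 V1 V1m V1p A2 V2 V2m V2p Y N Pm Pp
    oA1 oV1 oV1m oV1p oA2 oV2 oV2m oV2p oN oPm oPp hY1 hY2 h1 d1 h2 d2 hcov hdisj hP hPm hPp hPd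
    (G := F3ZZ) (Monoid.Coprod.inr (.ofAdd (1, 0))) (Monoid.Coprod.inr (.ofAdd (0, 1)))
    ((Commute.all (Multiplicative.ofAdd ((1, 0) : ℤ × ℤ)) (.ofAdd (0, 1))).map Monoid.Coprod.inr)
    (fun j => Monoid.Coprod.inl (FreeGroup.of j))
  let Θ : FundamentalGroup X b →* Function.End F3ZZ :=
    { toFun := fun α u => T b b α u
      map_one' := by funext u; exact t1 b u
      map_mul' := by intro p q; funext u; exact t2 b b b q p u }
  let c : Fin 3 → FundamentalGroup X b := fun j => ((sm j).trans (χ j)).trans (sp j).symm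
  refine recog (P := FundamentalGroup X b) (α1.trans α1') (α2.trans α2') hcomm.symm c Θ ?_ ?_ ?_ ?_
  · intro u
    change T b b (α1.trans α1') u = _
    rw [t2, tA _ _ _ hα1', tV1 _ _ _ hα1 hbV1 hb1]
  · intro u
    change T b b (α2.trans α2') u = _
    rw [t2, tA _ _ _ hα2', tV2 _ _ _ hα2 hbV2 hb2]
  · intro j u
    change T b b (((sm j).trans (χ j)).trans (sp j).symm) u = _
    rw [t2, t2, tA _ _ _ (hsm j), tA _ _ _ (hsp j).symm, tN j _ _ _ (hχ j) (hnm j) (hnp j)]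
  · intro K k1 k2 k3
    rw [eq_top_iff]
    intro α _
    have HY : ∀ α : Path.Homotopic.Quotient b b, InSet Y α → (α : FundamentalGroup X b) ∈ K :=
      fun α hα => hYl α hα K k1 k2
    have Ht : ∀ α β : Path.Homotopic.Quotient b b, (α : FundamentalGroup X b) ∈ K →
        (β : FundamentalGroup X b) ∈ K → (α.trans β : FundamentalGroup X b) ∈ K :=
      fun α β h h' => K.mul_mem h' h
    have Hs : ∀ α : Path.Homotopic.Quotient b b, (α : FundamentalGroup X b) ∈ K →
        (α.symm : FundamentalGroup X b) ∈ K := fun α h => K.inv_mem h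
    have hmY : ∀ j, Pm j ⊆ Y := fun j x h => hAY (hPm j h).2
    have hpY : ∀ j, Pp j ⊆ Y := fun j x h => hAY (hPp j h).2
    have hmN : ∀ j, Pm j ⊆ N j := fun j x h => (hPm j h).1
    have hpN : ∀ j, Pp j ⊆ N j := fun j x h => (hPp j h).1
    have cross : ∀ j q q' (σ : Path.Homotopic.Quotient b q) (τ : Path.Homotopic.Quotient q q')
      (σ' : Path.Homotopic.Quotient b q'), InSet Y σ → InSet Y σ' → InSet (N j) τ →
      q ∈ Pm j → q' ∈ Pp j → ((σ.trans τ).trans σ'.symm : FundamentalGroup X b) ∈ K := by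
      intro j q q' σ τ σ' hσ hσ' hτ hq hq'
      obtain ⟨p, hp⟩ := conPm j q hq (nm j) (hnm j)
      obtain ⟨p', hp'⟩ := conPp j (np j) (hnp j) q' hq'
      have e : τ = (p.trans (χ j)).trans p' :=
        scN j _ _ _ _ hτ (((hp.mono (hmN j)).trans (hχ j)).trans (hp'.mono (hpN j)))
      have f1 := HY _ ((hσ.trans (hp.mono (hmY j))).trans ((hsm j).mono hAY).symm)
      have f3 := HY _ ((((hsp j).mono hAY).trans (hp'.mono (hpY j))).trans hσ'.symm)
      have f2 := Ht _ _ (Ht _ _ f1 (k3 j)) f3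
      simp only [c, Path.Homotopic.Quotient.trans_assoc, q_cancel] at f2
      rw [e]
      simp only [Path.Homotopic.Quotient.trans_assoc]
      exact f2
    refine gen_loops b Y N oY oN hcov hdisj hbY conY (fun α => (α : FundamentalGroup X b) ∈ K)
      Ht HY ?_ α
    intro j q q' σ τ σ' hσ hσ' hτ
    rcases hP j ⟨hτ.left, hσ.right⟩ with hq | hq <;> rcases hP j ⟨hτ.right, hσ'.right⟩ with hq' | hq'
    · obtain ⟨p, hp⟩ := conPm j q hq q' hq'
      obtain rfl := scN j _ _ _ _ hτ (hp.mono (hmN j))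
      exact HY _ ((hσ.trans (hp.mono (hmY j))).trans hσ'.symm)
    · exact cross j q q' σ τ σ' hσ hσ' hτ hq hq'
    · have := Hs _ (cross j q' q σ' τ.symm σ hσ' hσ hτ.symm hq' hq)
      simp only [q_symm_trans, q_symm_symm] at this
      rw [Path.Homotopic.Quotient.trans_assoc]
      exact this
    · obtain ⟨p, hp⟩ := conPp j q hq q' hq'
      obtain rfl := scN j _ _ _ _ hτ (hp.mono (hpN j))
      exact HY _ ((hσ.trans (hp.mono (hpY j))).trans hσ'.symm)

end fileD

section fileE
open Set Topology

section UC
variable {M : Type*} [TopologicalSpace M]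

/-- The unordered pair as a point of the configuration space. -/
def uc (x y : M) (h : x ≠ y) : UConf 2 M :=
  Quotient.mk (confSetoid 2 M) ⟨![x, y], by
    intro i j hij
    fin_cases i <;> fin_cases j <;> simp_all [h.symm]⟩

theorem uc_eq_iff {x y x' y' : M} (h : x ≠ y) (h' : x' ≠ y') :
    uc x y h = uc x' y' h' ↔ (x = x' ∧ y = y') ∨ (x = y' ∧ y = x') := by
  unfold uc
  rw [Quotient.eq]
  change (∃ σ : Equiv.Perm (Fin 2), ![x, y] = ![x', y'] ∘ σ) ↔ _
  constructor
  · rintro ⟨s, hs⟩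
    have h0 := congrFun hs 0
    have h1 := congrFun hs 1
    have hne : s 0 ≠ s 1 := fun e => by simpa using s.injective e
    simp only [Function.comp] at h0 h1
    generalize s 0 = i at *
    generalize s 1 = j at *
    fin_cases i <;> fin_cases j <;> simp_all
  · rintro (⟨rfl, rfl⟩ | ⟨rfl, rfl⟩)
    · exact ⟨1, rfl⟩
    · refine ⟨Equiv.swap 0 1, ?_⟩
      funext i
      fin_cases i <;> simp

theorem uc_mk (f : Conf 2 M) : Quotient.mk (confSetoid 2 M) f = uc (f.1 0) (f.1 1)
    (fun e => by simpa using f.2 e) := by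
  unfold uc
  congr 1
  apply Subtype.ext
  funext i
  fin_cases i <;> rfl

theorem uc_surj (p : UConf 2 M) : ∃ x y h, p = uc x y h := by
  induction p using Quotient.inductionOn with
  | _ f => exact ⟨_, _, _, uc_mk f⟩

theorem uc_continuous {Z : Type*} [TopologicalSpace Z] {f g : Z → M} (hf : Continuous f)
    (hg : Continuous g) (h : ∀ z, f z ≠ g z) : Continuous fun z => uc (f z) (g z) (h z) := by
  refine continuous_quotient_mk'.comp (Continuous.subtype_mk ?_ _)
  refine continuous_pi fun i => ?_
  fin_cases i
  · exact hf
  · exact hg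

/-- The set of unordered pairs having an ordering in `R`. -/
def img (R : Set (M × M)) : Set (UConf 2 M) :=
  {p | ∃ x y h, p = uc x y h ∧ (x, y) ∈ R}

theorem mem_img {R : Set (M × M)} {x y : M} (h : x ≠ y) :
    uc x y h ∈ img R ↔ (x, y) ∈ R ∨ (y, x) ∈ R := by
  constructor
  · rintro ⟨x', y', h', e, hR⟩
    rw [uc_eq_iff] at e
    rcases e with ⟨rfl, rfl⟩ | ⟨rfl, rfl⟩
    · exact .inl hR
    · exact .inr hR
  · rintro (hR | hR)
    · exact ⟨x, y, h, rfl, hR⟩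
    · exact ⟨y, x, h.symm, by rw [uc_eq_iff]; exact .inr ⟨rfl, rfl⟩, hR⟩

theorem img_open {R : Set (M × M)} (hR : IsOpen R) : IsOpen (img R) := by
  refine ((isQuotientMap_quot_mk (r := (confSetoid 2 M).r)).isOpen_preimage (s := img R)).1 ?_
  have : (Quot.mk (confSetoid 2 M).r) ⁻¹' img R =
      {f | (f.1 0, f.1 1) ∈ R} ∪ {f | (f.1 1, f.1 0) ∈ R} := by
    ext f
    change Quotient.mk (confSetoid 2 M) f ∈ img R ↔ _
    rw [uc_mk, mem_img]
    rfl
  rw [this]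
  have c : ∀ i : Fin 2, Continuous fun f : Conf 2 M => f.1 i := fun i =>
    (continuous_apply i).comp continuous_subtype_val
  exact (hR.preimage ((c 0).prodMk (c 1))).union (hR.preimage ((c 1).prodMk (c 0)))

/-- Lifting continuous maps from `img R` to `R` when `R` is open and asymmetric. -/
theorem lift_img {R : Set (M × M)} (hR : IsOpen R) (asym : ∀ x y, (x, y) ∈ R → (y, x) ∉ R)
    {Z : Type*} [TopologicalSpace Z] (γ : Z → UConf 2 M) (hγ : Continuous γ)
    (hm : ∀ z, γ z ∈ img R) :
    ∃ f g : Z → M, Continuous f ∧ Continuous g ∧ (∀ z, (f z, g z) ∈ R) ∧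
      ∀ z, ∃ h, γ z = uc (f z) (g z) h := by
  choose f g hne hz hfg using hm
  have key : Continuous fun z => (f z, g z) := by
    rw [continuous_iff_continuousAt]
    intro z
    rw [ContinuousAt, Filter.tendsto_def]
    intro W hW
    obtain ⟨W', hW', oW', hzW'⟩ := mem_nhds_iff.1 hW
    have h1 : γ z ∈ img (W' ∩ R) := by
      rw [hz z, mem_img]; exact .inl ⟨hzW', hfg z⟩
    filter_upwards [hγ.continuousAt.preimage_mem_nhds ((img_open (oW'.inter hR)).mem_nhds h1)] with z' h2
    have h3 : γ z' ∈ img (W' ∩ R) := h2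
    rw [hz z', mem_img] at h3
    rcases h3 with h3 | h3
    · exact hW' h3.1
    · exact absurd h3.2 (asym _ _ (hfg z'))
  exact ⟨f, g, continuous_fst.comp key, continuous_snd.comp key, hfg, fun z => ⟨hne z, hz z⟩⟩

end UC

section arcs
variable {M : Type*} [TopologicalSpace M]

/-- Two homotopic-through-lifts paths in the configuration space. -/
theorem uc_homotopic {p q : UConf 2 M} (γ γ' : Path p q) (F G : unitInterval × unitInterval → M)
    (hF : Continuous F) (hG : Continuous G) (hne : ∀ z, F z ≠ G z)
    (h0 : ∀ t, γ t = uc (F (0, t)) (G (0, t)) (hne _))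
    (h1 : ∀ t, γ' t = uc (F (1, t)) (G (1, t)) (hne _))
    (e0 : ∀ s, uc (F (s, 0)) (G (s, 0)) (hne _) = p)
    (e1 : ∀ s, uc (F (s, 1)) (G (s, 1)) (hne _) = q) :
    Path.Homotopic.Quotient.mk γ = .mk γ' := by
  rw [Path.Homotopic.Quotient.eq]
  refine ⟨⟨⟨⟨fun z => uc (F z) (G z) (hne z), uc_continuous hF hG hne⟩, fun t => (h0 t).symm,
    fun t => (h1 t).symm⟩, ?_⟩⟩
  rintro s t (rfl | ht)
  · change uc (F (s, 0)) (G (s, 0)) (hne _) = γ 0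
    rw [e0, γ.source]
  · obtain rfl : t = 1 := ht
    change uc (F (s, 1)) (G (s, 1)) (hne _) = γ 1
    rw [e1, γ.target]

/-- `A` is an arc parametrized by the height function `h`. -/
structure IsArc (h : M → ℝ) (A : Set M) (J : Set ℝ) (g : ℝ → M) : Prop where
  conv : Convex ℝ J
  cont : ContinuousOn g J
  mem : ∀ x ∈ A, h x ∈ J
  gmem : ∀ r ∈ J, g r ∈ A
  gh : ∀ x ∈ A, g (h x) = x
  hg : ∀ r ∈ J, h (g r) = r

variable {h : M → ℝ} {A B : Set M} {J J' : Set ℝ} {g g' : ℝ → M}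

theorem arcs_con (hA : IsArc h A J g) (hB : IsArc h B J' g') (hAB : Disjoint A B)
    (C : Set (ℝ × ℝ)) (hC : Convex ℝ C) (p q : UConf 2 M)
    (hp : p ∈ img {z : M × M | (z.1 ∈ A ∧ z.2 ∈ B) ∧ (h z.1, h z.2) ∈ C})
    (hq : q ∈ img {z : M × M | (z.1 ∈ A ∧ z.2 ∈ B) ∧ (h z.1, h z.2) ∈ C}) :
    ∃ α : Path.Homotopic.Quotient p q,
      InSet (img {z : M × M | (z.1 ∈ A ∧ z.2 ∈ B) ∧ (h z.1, h z.2) ∈ C}) α := by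
  obtain ⟨x, y, hxy, rfl, ⟨hx, hy⟩, hc⟩ := hp
  obtain ⟨x', y', hxy', rfl, ⟨hx', hy'⟩, hc'⟩ := hq
  dsimp only at hx hy hx' hy'
  let l : unitInterval → ℝ := fun t => (1 - (t : ℝ)) * h x + t * h x'
  let l' : unitInterval → ℝ := fun t => (1 - (t : ℝ)) * h y + t * h y'
  have lJ : ∀ t, l t ∈ J := fun t => hA.conv (hA.mem x hx) (hA.mem x' hx')
    (sub_nonneg.2 t.2.2) t.2.1 (by ring)
  have lJ' : ∀ t, l' t ∈ J' := fun t => hB.conv (hB.mem y hy) (hB.mem y' hy')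
    (sub_nonneg.2 t.2.2) t.2.1 (by ring)
  have lC : ∀ t, (l t, l' t) ∈ C := fun t => hC hc hc' (sub_nonneg.2 t.2.2) t.2.1 (by ring)
  have hne : ∀ t, g (l t) ≠ g' (l' t) := fun t e =>
    disjoint_left.1 hAB (hA.gmem _ (lJ t)) (e ▸ hB.gmem _ (lJ' t))
  have hlc : Continuous l := by fun_prop
  have hlc' : Continuous l' := by fun_prop
  refine ⟨.mk ⟨⟨fun t => uc (g (l t)) (g' (l' t)) (hne t), uc_continuous
    (hA.cont.comp_continuous hlc lJ) (hB.cont.comp_continuous hlc' lJ') hne⟩, ?_, ?_⟩, _, ?_, rfl⟩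
  · simp [l, l', hA.gh x hx, hB.gh y hy]
  · simp [l, l', hA.gh x' hx', hB.gh y' hy']
  · intro t
    refine ⟨_, _, hne t, rfl, ⟨hA.gmem _ (lJ t), hB.gmem _ (lJ' t)⟩, ?_⟩
    simp only [hA.hg _ (lJ t), hB.hg _ (lJ' t)]
    exact lC t

theorem arcs_sc (hh : Continuous h) (hA : IsArc h A J g) (hB : IsArc h B J' g')
    (hAB : Disjoint A B) (oA : IsOpen A) (oB : IsOpen B)
    (p q : UConf 2 M) (α β : Path.Homotopic.Quotient p q)
    (hα : InSet (img {z : M × M | z.1 ∈ A ∧ z.2 ∈ B}) α)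
    (hβ : InSet (img {z : M × M | z.1 ∈ A ∧ z.2 ∈ B}) β) : α = β := by
  obtain ⟨γ, hγ, rfl⟩ := hα
  obtain ⟨γ', hγ', rfl⟩ := hβ
  have oR : IsOpen {z : M × M | z.1 ∈ A ∧ z.2 ∈ B} := oA.prod oB
  have asym : ∀ x y, (x, y) ∈ {z : M × M | z.1 ∈ A ∧ z.2 ∈ B} →
    (y, x) ∉ {z : M × M | z.1 ∈ A ∧ z.2 ∈ B} := fun x y h h' => disjoint_left.1 hAB h.1 h'.2
  obtain ⟨f1, f2, c1, c2, m1, e1⟩ := lift_img oR asym γ γ.continuous hγ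
  obtain ⟨k1, k2, c1', c2', m2, e2⟩ := lift_img oR asym γ' γ'.continuous hγ'
  choose n1 e1 using e1
  choose n2 e2 using e2
  have same : ∀ t, γ t = γ' t → f1 t = k1 t ∧ f2 t = k2 t := by
    intro t ht
    rw [e1, e2, uc_eq_iff] at ht
    rcases ht with ht | ⟨h1, h2⟩
    · exact ht
    · exact absurd (m2 t).2 (disjoint_left.1 hAB (h1 ▸ (m1 t).1))
  let l : unitInterval × unitInterval → ℝ := fun z => (1 - (z.1 : ℝ)) * h (f1 z.2) + z.1 * h (k1 z.2)
  let l' : unitInterval × unitInterval → ℝ := fun z => (1 - (z.1 : ℝ)) * h (f2 z.2) + z.1 * h (k2 z.2)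
  have lJ : ∀ t, l t ∈ J := fun t => hA.conv (hA.mem _ (m1 _).1) (hA.mem _ (m2 _).1)
    (sub_nonneg.2 t.1.2.2) t.1.2.1 (by ring)
  have lJ' : ∀ t, l' t ∈ J' := fun t => hB.conv (hB.mem _ (m1 _).2) (hB.mem _ (m2 _).2)
    (sub_nonneg.2 t.1.2.2) t.1.2.1 (by ring)
  have hne : ∀ t, g (l t) ≠ g' (l' t) := fun t e =>
    disjoint_left.1 hAB (hA.gmem _ (lJ t)) (e ▸ hB.gmem _ (lJ' t))
  have hlc : Continuous l := by fun_prop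
  have hlc' : Continuous l' := by fun_prop
  have fin : ∀ t, f1 t = k1 t ∧ f2 t = k2 t → ∀ s, uc (g (l (s, t))) (g' (l' (s, t))) (hne _) = γ t := by
    intro t ⟨h1, h2⟩ s
    rw [e1, uc_eq_iff]
    left
    constructor
    · have : l (s, t) = h (f1 t) := by simp only [l, h1]; ring
      rw [this, hA.gh _ (m1 t).1]
    · have : l' (s, t) = h (f2 t) := by simp only [l', h2]; ring
      rw [this, hB.gh _ (m1 t).2]
  refine uc_homotopic γ γ' (fun z => g (l z)) (fun z => g' (l' z))
    (hA.cont.comp_continuous hlc lJ) (hB.cont.comp_continuous hlc' lJ') hne ?_ ?_ ?_ ?_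
  · intro t
    rw [e1]
    simp [l, l', hA.gh _ (m1 t).1, hB.gh _ (m1 t).2]
  · intro t
    rw [e2]
    simp [l, l', hA.gh _ (m2 t).1, hB.gh _ (m2 t).2]
  · intro s
    rw [fin 0 (same 0 (by simp)), γ.source]
  · intro s
    rw [fin 1 (same 1 (by simp)), γ.target]
end arcs

end fileE

section fileF
open Set Topology

section circ

theorem circ_homotopic {p q : Circle} (γ γ' : Path p q) (F G : unitInterval → ℝ)
    (hF : Continuous F) (hG : Continuous G) (h : ∀ t, γ t = Circle.exp (F t))
    (h' : ∀ t, γ' t = Circle.exp (G t)) (e0 : F 0 = G 0) (e1 : F 1 = G 1) :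
    Path.Homotopic.Quotient.mk γ = .mk γ' := by
  rw [Path.Homotopic.Quotient.eq]
  refine ⟨⟨⟨⟨fun z => Circle.exp ((1 - (z.1 : ℝ)) * F z.2 + z.1 * G z.2), by fun_prop⟩,
    fun t => by simp [h], fun t => by simp [h']⟩, ?_⟩⟩
  rintro s t (rfl | ht)
  · change Circle.exp ((1 - (s : ℝ)) * F 0 + s * G 0) = γ 0
    rw [h, ← e0]; congr 1; ring
  · obtain rfl : t = 1 := ht
    change Circle.exp ((1 - (s : ℝ)) * F 1 + s * G 1) = γ 1
    rw [h, ← e1]; congr 1; ring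

/-- The path on the circle from angle `a` to angle `b`. -/
noncomputable def cpath (a b : ℝ) : Path (Circle.exp a) (Circle.exp b) where
  toFun t := Circle.exp ((1 - (t : ℝ)) * a + t * b)
  continuous_toFun := by fun_prop
  source' := by simp
  target' := by simp

theorem cpath_apply (a b : ℝ) (t : unitInterval) :
    cpath a b t = Circle.exp ((1 - (t : ℝ)) * a + t * b) := rfl

noncomputable abbrev ci : Circle := Circle.exp (Real.pi / 2)
noncomputable abbrev cmi : Circle := Circle.exp (3 * Real.pi / 2)

theorem exp_shift (a : ℝ) (n : ℤ) : Circle.exp (a + n * (2 * Real.pi)) = Circle.exp a :=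
  Circle.periodic_exp.int_mul n a

noncomputable def om1 : Path ci cmi := cpath _ _
noncomputable def om2 : Path cmi ci :=
  (cpath (3 * Real.pi / 2) (Real.pi / 2 + (1 : ℤ) * (2 * Real.pi))).cast rfl (exp_shift _ 1).symm

noncomputable def lam (n : ℤ) : Path ci ci :=
  (cpath (Real.pi / 2) (Real.pi / 2 + n * (2 * Real.pi))).cast rfl (exp_shift _ n).symm

/-- Concatenations lift. -/
theorem circ_trans {p q r : Circle} (γ : Path p q) (γ' : Path q r) (γ'' : Path p r)
    (F F' G : unitInterval → ℝ) (hF : Continuous F) (hF' : Continuous F') (hG : Continuous G)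
    (h : ∀ t, γ t = Circle.exp (F t)) (h' : ∀ t, γ' t = Circle.exp (F' t))
    (h'' : ∀ t, γ'' t = Circle.exp (G t)) (e0 : F 0 = G 0) (e1 : F' 1 = G 1) (e : F 1 = F' 0) :
    (Path.Homotopic.Quotient.mk γ).trans (.mk γ') = .mk γ'' := by
  let P : Path (F 0) (F 1) := ⟨⟨F, hF⟩, rfl, rfl⟩
  let P' : Path (F 1) (F' 1) := ⟨⟨F', hF'⟩, e.symm, rfl⟩
  rw [← Path.Homotopic.Quotient.mk_trans]
  refine circ_homotopic (γ.trans γ') γ'' (P.trans P') G (P.trans P').continuous hG ?_ h'' ?_ ?_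
  · intro t
    rw [Path.trans_apply, Path.trans_apply]
    split_ifs
    · rw [h]; rfl
    · rw [h']; rfl
  · rw [(P.trans P').source, e0]
  · rw [(P.trans P').target, e1]

theorem om_eq : (Path.Homotopic.Quotient.mk om1).trans (.mk om2) = .mk (lam 1) := by
  refine circ_trans om1 om2 (lam 1) _ _ _ ?_ ?_ ?_ (fun t => rfl) (fun t => rfl) (fun t => rfl) ?_ ?_ ?_
  · fun_prop
  · fun_prop
  · fun_prop
  · simp
  · simp
  · simp

theorem lam_succ (n : ℤ) : (Path.Homotopic.Quotient.mk (lam n)).trans (.mk (lam 1)) = .mk (lam (n + 1)) := by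
  refine circ_trans (lam n) (lam 1) (lam (n + 1)) _
    (fun t => (1 - (t : ℝ)) * (Real.pi / 2) + t * (Real.pi / 2 + (1 : ℤ) * (2 * Real.pi)) +
      n * (2 * Real.pi)) _ ?_ ?_ ?_ (fun t => rfl) (fun t => ?_) (fun t => rfl) ?_ ?_ ?_
  · fun_prop
  · fun_prop
  · fun_prop
  · rw [exp_shift]; rfl
  · simp
  · simp; ring
  · simp

theorem lam_zero : Path.Homotopic.Quotient.mk (lam 0) = .refl ci := by
  rw [← Path.Homotopic.Quotient.mk_refl]
  refine circ_homotopic _ _ _ (fun _ => Real.pi / 2) ?_ ?_ (fun t => rfl) (fun t => rfl) ?_ ?_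
  · fun_prop
  · fun_prop
  · simp
  · simp

theorem circ_gen (α : FundamentalGroup Circle ci) (K : Subgroup (FundamentalGroup Circle ci))
    (hK : ((Path.Homotopic.Quotient.mk om1).trans (.mk om2) : FundamentalGroup Circle ci) ∈ K) :
    α ∈ K := by
  rw [om_eq] at hK
  have hl : ∀ n : ℤ, (Path.Homotopic.Quotient.mk (lam n) : FundamentalGroup Circle ci) ∈ K := by
    intro n
    induction n using Int.induction_on with
    | zero => rw [lam_zero]; exact K.one_mem
    | succ n ih => rw [← lam_succ]; exact K.mul_mem hK ih
    | pred n ih =>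
      have := lam_succ (-(n : ℤ) - 1)
      rw [sub_add_cancel] at this
      rw [← this] at ih
      exact (K.mul_mem_cancel_left hK).1 ih
  induction α using Path.Homotopic.Quotient.ind with
  | _ γ =>
    let Γ := Circle.isCoveringMap_exp.liftPath (γ : C(unitInterval, Circle)) (Real.pi / 2) γ.source
    have h1 : ∀ t, Circle.exp (Γ t) = γ t := fun t =>
      congrFun (Circle.isCoveringMap_exp.liftPath_lifts (γ : C(unitInterval, Circle)) (Real.pi / 2) γ.source) t
    have h2 : Γ 0 = Real.pi / 2 := Circle.isCoveringMap_exp.liftPath_zero _ _ _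
    have h3 := h1 1
    rw [γ.target, Circle.exp_eq_exp] at h3
    obtain ⟨n, hn⟩ := h3
    have : Path.Homotopic.Quotient.mk γ = .mk (lam n) := by
      refine circ_homotopic _ _ Γ _ Γ.continuous ?_ (fun t => (h1 t).symm) (fun t => rfl) ?_ ?_
      · fun_prop
      · simp [h2]
      · simp [hn]
    rw [this]
    exact hl n
end circ

end fileF

section fileG
open Set Topology

section circfacts
/-- real part -/
noncomputable def cre (c : Circle) : ℝ := (c : ℂ).re
/-- imaginary part -/
noncomputable def cim (c : Circle) : ℝ := (c : ℂ).im

@[fun_prop] theorem cre_cont : Continuous cre := Complex.continuous_re.comp continuous_subtype_val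
@[fun_prop] theorem cim_cont : Continuous cim := Complex.continuous_im.comp continuous_subtype_val

theorem cre_cim (c : Circle) : cre c ^ 2 + cim c ^ 2 = 1 := by
  have := Circle.normSq_coe c
  rw [Complex.normSq_apply] at this
  unfold cre cim; nlinarith

theorem cre_le (c : Circle) : cre c ≤ 1 := by nlinarith [cre_cim c, sq_nonneg (cim c)]
theorem le_cre (c : Circle) : -1 ≤ cre c := by nlinarith [cre_cim c, sq_nonneg (cim c)]

theorem c_ext {c d : Circle} (h : cre c = cre d) (h' : cim c = cim d) : c = d :=
  Subtype.ext (Complex.ext h h')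

@[simp] theorem cre_one : cre 1 = 1 := by simp [cre]
@[simp] theorem cim_one : cim 1 = 0 := by simp [cim]
theorem cre_exp (t : ℝ) : cre (Circle.exp t) = Real.cos t := by
  simp [cre, Circle.coe_exp, Complex.exp_ofReal_mul_I_re]
theorem cim_exp (t : ℝ) : cim (Circle.exp t) = Real.sin t := by
  simp [cim, Circle.coe_exp, Complex.exp_ofReal_mul_I_im]

theorem cim_zero {c : Circle} (h : cre c = 1) : cim c = 0 := by
  have := cre_cim c
  rw [h] at this
  nlinarith [sq_nonneg (cim c), pow_eq_zero_iff (n := 2) (a := cim c) (by norm_num)]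

theorem c_one {c : Circle} (h : cre c = 1) : c = 1 := c_ext (by simp [h]) (by simp [cim_zero h])

theorem cim_ne {c : Circle} (h : cim c ≠ 0) : -1 < cre c ∧ cre c < 1 := by
  have := cre_cim c
  have h2 : 0 < cim c ^ 2 := by positivity
  constructor <;> nlinarith

theorem cim_ne' {c : Circle} (h1 : -1 < cre c) (h2 : cre c < 1) : cim c ≠ 0 := by
  intro h
  have := cre_cim c
  rw [h] at this
  nlinarith

noncomputable def cup (s : ℝ) : Circle := Circle.exp (Real.arccos s)
noncomputable def cdn (s : ℝ) : Circle := Circle.exp (-Real.arccos s)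
@[fun_prop] theorem cup_cont : Continuous cup := Circle.exp.continuous.comp Real.continuous_arccos
@[fun_prop] theorem cdn_cont : Continuous cdn := Circle.exp.continuous.comp Real.continuous_arccos.neg

theorem cre_cup {s : ℝ} (h : -1 < s) (h' : s < 1) : cre (cup s) = s := by
  rw [cup, cre_exp, Real.cos_arccos h.le h'.le]
theorem cre_cdn {s : ℝ} (h : -1 < s) (h' : s < 1) : cre (cdn s) = s := by
  rw [cdn, cre_exp, Real.cos_neg, Real.cos_arccos h.le h'.le]
theorem cim_cup {s : ℝ} (h : -1 < s) (h' : s < 1) : 0 < cim (cup s) := by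
  rw [cup, cim_exp, Real.sin_arccos, Real.sqrt_pos]; nlinarith
theorem cim_cdn {s : ℝ} (h : -1 < s) (h' : s < 1) : cim (cdn s) < 0 := by
  rw [cdn, cim_exp, Real.sin_neg, Real.sin_arccos, neg_lt_zero, Real.sqrt_pos]; nlinarith

theorem cup_cre {c : Circle} (h : 0 < cim c) : cup (cre c) = c := by
  obtain ⟨h1, h2⟩ := cim_ne h.ne'
  have e := cre_cup h1 h2
  refine c_ext e ?_
  have e1 := cre_cim c
  have e2 := cre_cim (cup (cre c))
  have e3 := cim_cup h1 h2
  rw [e] at e2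
  nlinarith
theorem cdn_cre {c : Circle} (h : cim c < 0) : cdn (cre c) = c := by
  obtain ⟨h1, h2⟩ := cim_ne h.ne
  have e := cre_cdn h1 h2
  refine c_ext e ?_
  have e1 := cre_cim c
  have e2 := cre_cim (cdn (cre c))
  have e3 := cim_cdn h1 h2
  rw [e] at e2
  nlinarith

/-- same real part -/
theorem c_same {c d : Circle} (h : cre c = cre d) : c = d ∨ (0 < cim c ∧ cim d < 0) ∨
    (0 < cim d ∧ cim c < 0) := by
  have e1 := cre_cim c
  have e2 := cre_cim d
  rw [h] at e1
  have : (cim c - cim d) * (cim c + cim d) = 0 := by nlinarith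
  rcases mul_eq_zero.1 this with h3 | h3
  · exact .inl (c_ext h (by linarith))
  · rcases lt_trichotomy (cim c) 0 with h4 | h4 | h4
    · exact .inr (.inr ⟨by linarith, h4⟩)
    · exact .inl (c_ext h (by linarith))
    · exact .inr (.inl ⟨h4, by linarith⟩)
end circfacts

/-- The model of the balloon graph. -/
def Mset : Set (ℝ × ℝ × ℝ × Circle × Circle) :=
  {p | (0 ≤ p.1 ∧ p.1 ≤ 1) ∧ (0 ≤ p.2.1 ∧ p.2.1 ≤ 1) ∧ (0 ≤ p.2.2.1 ∧ p.2.2.1 ≤ 1) ∧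
    ((p.2.1 = 0 ∧ p.2.2.1 = 0 ∧ cre p.2.2.2.2 = 1 ∧ (cre p.2.2.2.1 = 1 ∨ p.1 = 1)) ∨
     (p.1 = 0 ∧ p.2.2.1 = 0 ∧ cre p.2.2.2.1 = 1 ∧ (cre p.2.2.2.2 = 1 ∨ p.2.1 = 1)) ∨
     (p.1 = 0 ∧ p.2.1 = 0 ∧ cre p.2.2.2.1 = 1 ∧ cre p.2.2.2.2 = 1))}

abbrev MM : Type := Mset

namespace MM
def u (x : MM) : ℝ := x.1.1
def v (x : MM) : ℝ := x.1.2.1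
def w (x : MM) : ℝ := x.1.2.2.1
def c1 (x : MM) : Circle := x.1.2.2.2.1
def c2 (x : MM) : Circle := x.1.2.2.2.2
noncomputable def r1 (x : MM) : ℝ := cre x.c1
noncomputable def r2 (x : MM) : ℝ := cre x.c2
noncomputable def i1 (x : MM) : ℝ := cim x.c1
noncomputable def i2 (x : MM) : ℝ := cim x.c2

@[fun_prop] theorem u_cont : Continuous u := by unfold u; fun_prop
@[fun_prop] theorem v_cont : Continuous v := by unfold v; fun_prop
@[fun_prop] theorem w_cont : Continuous w := by unfold w; fun_prop
@[fun_prop] theorem c1_cont : Continuous c1 := by unfold c1; fun_prop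
@[fun_prop] theorem c2_cont : Continuous c2 := by unfold c2; fun_prop
@[fun_prop] theorem r1_cont : Continuous r1 := by unfold r1; fun_prop
@[fun_prop] theorem r2_cont : Continuous r2 := by unfold r2; fun_prop
@[fun_prop] theorem i1_cont : Continuous i1 := by unfold i1; fun_prop
@[fun_prop] theorem i2_cont : Continuous i2 := by unfold i2; fun_prop

/-- All coordinate facts. -/
theorem spec (x : MM) : (0 ≤ x.u ∧ x.u ≤ 1) ∧ (0 ≤ x.v ∧ x.v ≤ 1) ∧ (0 ≤ x.w ∧ x.w ≤ 1) ∧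
    ((x.v = 0 ∧ x.w = 0 ∧ x.r2 = 1 ∧ (x.r1 = 1 ∨ x.u = 1)) ∨
     (x.u = 0 ∧ x.w = 0 ∧ x.r1 = 1 ∧ (x.r2 = 1 ∨ x.v = 1)) ∨
     (x.u = 0 ∧ x.v = 0 ∧ x.r1 = 1 ∧ x.r2 = 1)) := x.2

theorem r1_le (x : MM) : x.r1 ≤ 1 := cre_le _
theorem r2_le (x : MM) : x.r2 ≤ 1 := cre_le _
theorem le_r1 (x : MM) : -1 ≤ x.r1 := le_cre _
theorem le_r2 (x : MM) : -1 ≤ x.r2 := le_cre _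

/-- height -/
noncomputable def ht (x : MM) : ℝ := -x.u + x.v + x.w / 2 - (1 - x.r1) + (1 - x.r2)
@[fun_prop] theorem ht_cont : Continuous ht := by unfold ht; fun_prop

theorem ext' {x y : MM} (h1 : x.u = y.u) (h2 : x.v = y.v) (h3 : x.w = y.w) (h4 : x.c1 = y.c1)
    (h5 : x.c2 = y.c2) : x = y :=
  Subtype.ext (Prod.ext h1 (Prod.ext h2 (Prod.ext h3 (Prod.ext h4 h5))))

/-- clamp to the unit interval -/
noncomputable def cl (t : ℝ) : ℝ := max 0 (min 1 t)
theorem cl_cont : Continuous cl := by unfold cl; fun_prop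
theorem cl_mem (t : ℝ) : 0 ≤ cl t ∧ cl t ≤ 1 := by simp [cl]
theorem cl_of {t : ℝ} (h : 0 ≤ t) (h' : t ≤ 1) : cl t = t := by simp [cl, h, h']

noncomputable def e1P (t : ℝ) : MM := ⟨(cl t, 0, 0, 1, 1), cl_mem t, by simp, by simp, by simp⟩
noncomputable def e2P (t : ℝ) : MM := ⟨(0, cl t, 0, 1, 1), by simp, cl_mem t, by simp, by simp⟩
noncomputable def stP (t : ℝ) : MM := ⟨(0, 0, cl t, 1, 1), by simp, by simp, cl_mem t, by simp⟩
noncomputable def l1P (c : Circle) : MM := ⟨(1, 0, 0, c, 1), by simp, by simp, by simp, by simp⟩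
noncomputable def l2P (c : Circle) : MM := ⟨(0, 1, 0, 1, c), by simp, by simp, by simp, by simp⟩
theorem e2P_cont : Continuous e2P := by
  refine Continuous.subtype_mk ?_ _
  have := cl_cont
  fun_prop
theorem stP_cont : Continuous stP := by
  refine Continuous.subtype_mk ?_ _
  have := cl_cont
  fun_prop
@[fun_prop] theorem l1P_cont : Continuous l1P := by
  refine Continuous.subtype_mk ?_ _
  fun_prop
@[fun_prop] theorem l2P_cont : Continuous l2P := by
  refine Continuous.subtype_mk ?_ _
  fun_prop

theorem ht_l1P (c : Circle) : ht (l1P c) = cre c - 2 := by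
  simp [ht, l1P, u, v, w, r1, r2, c1, c2]; ring
theorem ht_l2P (c : Circle) : ht (l2P c) = 2 - cre c := by
  simp [ht, l2P, u, v, w, r1, r2, c1, c2]; ring

theorem eq_l1P {x : MM} (h : x.r1 < 1) : x = l1P x.c1 := by
  obtain ⟨_, _, _, h3⟩ := x.spec
  rcases h3 with ⟨a, b, c, d | d⟩ | ⟨a, b, c, d⟩ | ⟨a, b, c, d⟩ <;> try linarith
  exact ext' d a b rfl (c_one c)
theorem eq_l2P {x : MM} (h : x.r2 < 1) : x = l2P x.c2 := by
  obtain ⟨_, _, _, h3⟩ := x.spec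
  rcases h3 with ⟨a, b, c, d⟩ | ⟨a, b, c, d | d⟩ | ⟨a, b, c, d⟩ <;> try linarith
  exact ext' a d b (c_one c) rfl

theorem arc_st : IsArc ht {x | 0 < x.w} (Ioc 0 (1/2)) (fun r => stP (2 * r)) where
  conv := convex_Ioc _ _
  cont := (stP_cont.comp (by fun_prop)).continuousOn
  mem x hx := by
    have hx : 0 < x.w := hx
    obtain ⟨_, _, h2, h3⟩ := x.spec
    rcases h3 with ⟨a, b, c, d⟩ | ⟨a, b, c, d⟩ | ⟨a, b, c, d⟩ <;> try linarith
    simp only [ht, a, b, c, d]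
    constructor <;> linarith
  gmem r hr := by
    change 0 < cl (2 * r)
    rw [cl_of] <;> linarith [hr.1, hr.2]
  gh x hx := by
    have hx : 0 < x.w := hx
    obtain ⟨_, _, h2, h3⟩ := x.spec
    rcases h3 with ⟨a, b, c, d⟩ | ⟨a, b, c, d⟩ | ⟨a, b, c, d⟩ <;> try linarith
    refine ext' a.symm b.symm ?_ (c_one c).symm (c_one d).symm
    change cl (2 * ht x) = _
    rw [show 2 * ht x = x.w by simp only [ht, a, b, c, d]; ring, cl_of h2.1 h2.2]
  hg r hr := by
    simp [ht, stP, u, v, w, r1, r2, c1, c2]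
    rw [cl_of] <;> linarith [hr.1, hr.2]

theorem arc_e2 : IsArc ht {x | 0 < x.v ∧ x.v < 1} (Ioo 0 1) e2P where
  conv := convex_Ioo _ _
  cont := e2P_cont.continuousOn
  mem x hx := by
    obtain ⟨hx, hx'⟩ := hx
    obtain ⟨_, _, h2, h3⟩ := x.spec
    rcases h3 with ⟨a, b, c, d⟩ | ⟨a, b, c, d | d⟩ | ⟨a, b, c, d⟩ <;> try linarith
    simp only [ht, a, b, c, d]
    constructor <;> linarith
  gmem r hr := by
    change 0 < cl r ∧ cl r < 1
    rw [cl_of] <;> [exact hr; linarith [hr.1]; linarith [hr.2]]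
  gh x hx := by
    obtain ⟨hx, hx'⟩ := hx
    obtain ⟨_, h2, _, h3⟩ := x.spec
    rcases h3 with ⟨a, b, c, d⟩ | ⟨a, b, c, d | d⟩ | ⟨a, b, c, d⟩ <;> try linarith
    refine ext' a.symm ?_ b.symm (c_one c).symm (c_one d).symm
    change cl (ht x) = _
    rw [show ht x = x.v by simp only [ht, a, b, c, d]; ring, cl_of h2.1 h2.2]
  hg r hr := by
    simp [ht, e2P, u, v, w, r1, r2, c1, c2]
    rw [cl_of] <;> linarith [hr.1, hr.2]

theorem arc_1p : IsArc ht {x | 0 < x.i1} (Ioo (-3) (-1)) (fun r => l1P (cup (r + 2))) where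
  conv := convex_Ioo _ _
  cont := by fun_prop
  mem x hx := by
    have h := cim_ne (ne_of_gt hx)
    rw [eq_l1P h.2, ht_l1P]
    constructor <;> linarith
  gmem r hr := cim_cup (by linarith [hr.1]) (by linarith [hr.2])
  gh x hx := by
    have h := cim_ne (ne_of_gt hx)
    have e := eq_l1P h.2
    have e2 : ht x + 2 = cre x.c1 := by rw [e, ht_l1P, ← e]; ring
    rw [e2, cup_cre hx, ← e]
  hg r hr := by
    rw [ht_l1P, cre_cup] <;> linarith [hr.1, hr.2]

theorem arc_1m : IsArc ht {x | x.i1 < 0} (Ioo (-3) (-1)) (fun r => l1P (cdn (r + 2))) where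
  conv := convex_Ioo _ _
  cont := by fun_prop
  mem x hx := by
    have h := cim_ne (ne_of_lt hx)
    rw [eq_l1P h.2, ht_l1P]
    constructor <;> linarith
  gmem r hr := cim_cdn (by linarith [hr.1]) (by linarith [hr.2])
  gh x hx := by
    have h := cim_ne (ne_of_lt hx)
    have e := eq_l1P h.2
    have e2 : ht x + 2 = cre x.c1 := by rw [e, ht_l1P, ← e]; ring
    rw [e2, cdn_cre hx, ← e]
  hg r hr := by
    rw [ht_l1P, cre_cdn] <;> linarith [hr.1, hr.2]

theorem arc_2p : IsArc ht {x | 0 < x.i2} (Ioo 1 3) (fun r => l2P (cup (2 - r))) where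
  conv := convex_Ioo _ _
  cont := by fun_prop
  mem x hx := by
    have h := cim_ne (ne_of_gt hx)
    rw [eq_l2P h.2, ht_l2P]
    constructor <;> linarith
  gmem r hr := cim_cup (by linarith [hr.2]) (by linarith [hr.1])
  gh x hx := by
    have h := cim_ne (ne_of_gt hx)
    have e := eq_l2P h.2
    have e2 : 2 - ht x = cre x.c2 := by rw [e, ht_l2P, ← e]; ring
    rw [e2, cup_cre hx, ← e]
  hg r hr := by
    rw [ht_l2P, cre_cup] <;> linarith [hr.1, hr.2]

theorem arc_2m : IsArc ht {x | x.i2 < 0} (Ioo 1 3) (fun r => l2P (cdn (2 - r))) where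
  conv := convex_Ioo _ _
  cont := by fun_prop
  mem x hx := by
    have h := cim_ne (ne_of_lt hx)
    rw [eq_l2P h.2, ht_l2P]
    constructor <;> linarith
  gmem r hr := cim_cdn (by linarith [hr.2]) (by linarith [hr.1])
  gh x hx := by
    have h := cim_ne (ne_of_lt hx)
    have e := eq_l2P h.2
    have e2 : 2 - ht x = cre x.c2 := by rw [e, ht_l2P, ← e]; ring
    rw [e2, cdn_cre hx, ← e]
  hg r hr := by
    rw [ht_l2P, cre_cdn] <;> linarith [hr.1, hr.2]

end MM

end fileG

section fileK
open Set Topology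
namespace MM

theorem cl_le_one_sub (s : ℝ) : 0 ≤ cl (1 - s) ∧ cl (1 - s) ≤ 1 := cl_mem _

/-- shrink the circle towards `1` -/
noncomputable def shr (s : ℝ) (c : Circle) : Circle := Circle.exp (cl (1 - s) * Complex.arg c)

theorem shr_one (s : ℝ) : shr s 1 = 1 := by simp [shr]
theorem shr_ge {s : ℝ} (h : 1 ≤ s) (c : Circle) : shr s c = 1 := by
  have : cl (1 - s) = 0 := by
    unfold cl; rw [max_eq_left]; exact (min_le_right _ _).trans (by linarith)
  simp [shr, this]
theorem shr_le {s : ℝ} (h : s ≤ 0) (c : Circle) : shr s c = c := by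
  have : cl (1 - s) = 1 := by
    unfold cl; rw [min_eq_left (by linarith)]; simp
  simp [shr, this]
theorem cre_shr (s : ℝ) (c : Circle) : cre c ≤ cre (shr s c) := by
  have e : cre c = Real.cos |Complex.arg c| := by
    rw [Real.cos_abs, ← cre_exp, Circle.exp_arg]
  rw [e, shr, cre_exp, ← Real.cos_abs (cl (1 - s) * Complex.arg c), abs_mul, abs_of_nonneg (cl_mem _).1]
  apply Real.cos_le_cos_of_nonneg_of_le_pi
  · have := (cl_mem (1 - s)).1; positivity
  · exact Complex.abs_arg_le_pi _
  · exact mul_le_of_le_one_left (abs_nonneg _) (cl_mem _).2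

theorem mem_slit {c : Circle} (h : -1 < cre c) : (c : ℂ) ∈ Complex.slitPlane := by
  rw [Complex.mem_slitPlane_iff]
  by_contra! hh
  obtain ⟨h1, h2⟩ := hh
  have e := cre_cim c
  have h1 : cre c ≤ 0 := h1
  have h2 : cim c = 0 := h2
  rw [h2] at e
  nlinarith

theorem shr_cont {Z : Type*} [TopologicalSpace Z] {s : Z → ℝ} {c : Z → Circle} (hs : Continuous s)
    (hc : Continuous c) (h : ∀ z, -1 < cre (c z)) : Continuous fun z => shr (s z) (c z) := by
  have h1 : Continuous fun z => Complex.arg (c z) := by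
    rw [continuous_iff_continuousAt]
    intro z
    have h3 : Continuous fun z => (c z : ℂ) := continuous_subtype_val.comp hc
    exact ContinuousAt.comp (f := fun z => (c z : ℂ)) (g := Complex.arg)
      (Complex.continuousAt_arg (mem_slit (h z))) h3.continuousAt
  have h2 : Continuous fun z => cl (1 - s z) := cl_cont.comp (by fun_prop)
  exact Circle.exp.continuous.comp (h2.mul h1)

theorem arg_lt {c : Circle} (h : -1 < cre c) : Complex.arg c < Real.pi := by
  refine lt_of_le_of_ne (Complex.arg_le_pi _) fun e => ?_
  have := Circle.exp_arg c
  rw [e] at this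
  rw [← this, cre_exp, Real.cos_pi] at h
  exact lt_irrefl _ h

theorem cos_gt {θ : ℝ} (h : -Real.pi < θ) (h' : θ < Real.pi) : -1 < Real.cos θ := by
  rw [← Real.cos_abs, ← Real.cos_pi]
  exact Real.cos_lt_cos_of_nonneg_of_le_pi (abs_nonneg _) le_rfl (abs_lt.2 ⟨h, h'⟩)

/-- Deformation pushing everything (except `q2`) into the first loop. -/
noncomputable def D1 (s : ℝ) (x : MM) : MM :=
  ⟨(max x.u (min 1 (s - 2)), min x.v (max 0 (2 - s)), min x.w (max 0 (2 - s)), x.c1, shr s x.c2), by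
    obtain ⟨hu, hv, hw, h3⟩ := x.spec
    refine ⟨⟨le_max_of_le_left hu.1, max_le hu.2 (min_le_left _ _)⟩,
      ⟨le_min hv.1 (le_max_left _ _), (min_le_left _ _).trans hv.2⟩,
      ⟨le_min hw.1 (le_max_left _ _), (min_le_left _ _).trans hw.2⟩, ?_⟩
    dsimp only
    change (_ ∧ _ ∧ _ ∧ (x.r1 = 1 ∨ _)) ∨ (_ ∧ _ ∧ x.r1 = 1 ∧ _) ∨ (_ ∧ _ ∧ x.r1 = 1 ∧ _)
    have hm : (0 : ℝ) ≤ max 0 (2 - s) := le_max_left _ _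
    rcases h3 with ⟨a, b, c, d⟩ | ⟨a, b, c, d⟩ | ⟨a, b, c, d⟩
    · refine .inl ⟨by rw [a, min_eq_left hm], by rw [b, min_eq_left hm], by simp [c_one c, shr_one], ?_⟩
      rcases d with d | d
      · exact .inl d
      · right; rw [d]; simp
    · rcases le_total s 2 with h | h
      · refine .inr (.inl ⟨?_, by rw [b, min_eq_left hm], c, ?_⟩)
        · rw [a, max_eq_left]; exact (min_le_right _ _).trans (by linarith)
        · rcases d with d | d
          · left; rw [c_one d, shr_one, cre_one]
          · rcases le_total s 1 with h' | h'
            · right; rw [d, min_eq_left]; exact le_max_of_le_right (by linarith)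
            · left; rw [shr_ge h', cre_one]
      · have e : max 0 (2 - s) = 0 := max_eq_left (by linarith)
        refine .inl ⟨by rw [e, min_eq_right hv.1], by rw [e, min_eq_right hw.1],
          by rw [shr_ge (by linarith), cre_one], .inl c⟩
    · rcases le_total s 2 with h | h
      · refine .inr (.inr ⟨?_, by rw [b, min_eq_left hm], c, by rw [c_one d, shr_one, cre_one]⟩)
        rw [a, max_eq_left]; exact (min_le_right _ _).trans (by linarith)
      · have e : max 0 (2 - s) = 0 := max_eq_left (by linarith)
        refine .inl ⟨by rw [e, min_eq_right hv.1], by rw [e, min_eq_right hw.1],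
          by rw [shr_ge (by linarith), cre_one], .inl c⟩⟩

theorem D1_cont {Z : Type*} [TopologicalSpace Z] {s : Z → ℝ} {x : Z → MM} (hs : Continuous s)
    (hc : Continuous x) (h : ∀ z, -1 < (x z).r2) : Continuous fun z => D1 (s z) (x z) := by
  refine Continuous.subtype_mk ?_ _
  have := shr_cont hs (c2_cont.comp hc) h
  refine Continuous.prodMk (by fun_prop) (Continuous.prodMk (by fun_prop) (Continuous.prodMk (by fun_prop)
    (Continuous.prodMk (by fun_prop) this)))

theorem D1_c1 (s : ℝ) (x : MM) : (D1 s x).c1 = x.c1 := rfl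
theorem D1_r1 (s : ℝ) (x : MM) : (D1 s x).r1 = x.r1 := rfl
theorem D1_le {s : ℝ} (h : s ≤ 0) (x : MM) : D1 s x = x := by
  obtain ⟨hu, hv, hw, h3⟩ := x.spec
  refine ext' ?_ ?_ ?_ rfl (shr_le h _)
  · exact max_eq_left ((min_le_right _ _).trans (by linarith))
  · exact min_eq_left (le_max_of_le_right (by linarith))
  · exact min_eq_left (le_max_of_le_right (by linarith))
theorem D1_ge {s : ℝ} (h : 3 ≤ s) (x : MM) : D1 s x = l1P x.c1 := by
  obtain ⟨hu, hv, hw, h3⟩ := x.spec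
  have e : max 0 (2 - s) = 0 := max_eq_left (by linarith)
  refine ext' ?_ ?_ ?_ rfl (shr_ge (by linarith) _)
  · change max x.u (min 1 (s - 2)) = 1
    rw [min_eq_left (by linarith), max_eq_right hu.2]
  · change min x.v (max 0 (2 - s)) = 0
    rw [e, min_eq_right hv.1]
  · change min x.w (max 0 (2 - s)) = 0
    rw [e, min_eq_right hw.1]

theorem D1_u (s : ℝ) (x : MM) : x.u ≤ (D1 s x).u := le_max_left _ _
theorem D1_v (s : ℝ) (x : MM) : (D1 s x).v ≤ x.v := min_le_left _ _
theorem D1_w (s : ℝ) (x : MM) : (D1 s x).w ≤ x.w := min_le_left _ _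
theorem D1_r2 (s : ℝ) (x : MM) : x.r2 ≤ (D1 s x).r2 := cre_shr _ _

theorem D1_ht (s : ℝ) (x : MM) : ht (D1 s x) ≤ ht x := by
  have := D1_u s x
  have := D1_v s x
  have := D1_w s x
  have := D1_r2 s x
  simp only [ht, D1_r1]
  linarith

theorem D1_l1P (s : ℝ) (c : Circle) : D1 s (l1P c) = l1P c := by
  refine ext' ?_ ?_ ?_ rfl (shr_one _)
  · change max (1 : ℝ) (min 1 (s - 2)) = 1
    simp
  · change min (0 : ℝ) (max 0 (2 - s)) = 0
    simp
  · change min (0 : ℝ) (max 0 (2 - s)) = 0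
    simp

/-- exchange the two balloons -/
def sw (x : MM) : MM := ⟨(x.v, x.u, x.w, x.c2, x.c1), by
  obtain ⟨hu, hv, hw, h3⟩ := x.spec
  refine ⟨hv, hu, hw, ?_⟩
  rcases h3 with h | h | ⟨a, b, c, d⟩
  · exact .inr (.inl h)
  · exact .inl h
  · exact .inr (.inr ⟨b, a, d, c⟩)⟩
@[fun_prop] theorem sw_cont : Continuous sw := by
  refine Continuous.subtype_mk ?_ _
  fun_prop

noncomputable def D2 (s : ℝ) (x : MM) : MM := sw (D1 s (sw x))

theorem D2_cont {Z : Type*} [TopologicalSpace Z] {s : Z → ℝ} {x : Z → MM} (hs : Continuous s)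
    (hc : Continuous x) (h : ∀ z, -1 < (x z).r1) : Continuous fun z => D2 (s z) (x z) :=
  sw_cont.comp (D1_cont hs (sw_cont.comp hc) h)
theorem D2_c2 (s : ℝ) (x : MM) : (D2 s x).c2 = x.c2 := rfl
theorem D2_r2 (s : ℝ) (x : MM) : (D2 s x).r2 = x.r2 := rfl
theorem D2_le {s : ℝ} (h : s ≤ 0) (x : MM) : D2 s x = x := by
  unfold D2; rw [D1_le h]; rfl
theorem D2_ge {s : ℝ} (h : 3 ≤ s) (x : MM) : D2 s x = l2P x.c2 := by
  unfold D2; rw [D1_ge h]; rfl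
theorem D2_l2P (s : ℝ) (c : Circle) : D2 s (l2P c) = l2P c := by
  unfold D2
  have : sw (l2P c) = l1P c := rfl
  rw [this, D1_l1P]; rfl

theorem D2_ht (s : ℝ) (x : MM) : ht x ≤ ht (D2 s x) ∨ 0 ≤ ht (D2 s x) := by
  have h1 : (D2 s x).u ≤ x.u := D1_v s (sw x)
  have h2 : x.v ≤ (D2 s x).v := D1_u s (sw x)
  have h3 : (D2 s x).w ≤ x.w := D1_w s (sw x)
  have h4 : x.r1 ≤ (D2 s x).r1 := D1_r2 s (sw x)
  have h5 := (D2 s x).spec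
  have h6 := x.spec
  have h7 := (D2 s x).r2_le
  by_cases hw : x.w = 0
  · left
    simp only [ht, D2_r2]
    linarith [h5.2.2.1.1]
  · right
    have h8 : x.u = 0 ∧ x.r1 = 1 := by
      rcases h6.2.2.2 with h | h | h
      · exact absurd h.2.1 hw
      · exact absurd h.2.1 hw
      · exact ⟨h.1, h.2.2.1⟩
    simp only [ht]
    linarith [h5.2.2.1.1, h5.2.1.1]

theorem ht_le (x : MM) : ht x ≤ 3 := by
  have h6 := x.spec
  have h1 := x.r2_le
  have h2 := x.r1_le
  have h3 := x.le_r2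
  rcases h6.2.2.2 with h | h | h <;> (simp only [ht]; linarith [h.1, h.2.1, h6.1.1, h6.1.2, h6.2.1.1, h6.2.1.2, h6.2.2.1.1, h6.2.2.1.2, h.2.2.1])

theorem le_ht (x : MM) : -3 ≤ ht x := by
  have h6 := x.spec
  have h1 := x.r2_le
  have h3 := x.le_r1
  simp only [ht]; linarith [h6.1.1, h6.1.2, h6.2.1.1, h6.2.1.2, h6.2.2.1.1, h6.2.2.1.2]

theorem lt_r2 {x y : MM} (h : ht x < ht y) : -1 < x.r2 := by
  refine lt_of_le_of_ne x.le_r2 fun e => ?_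
  have h1 := eq_l2P (x := x) (by linarith)
  have h2 : ht x = 2 - x.r2 := by conv_lhs => rw [h1, ht_l2P]
                                  rfl
  have := ht_le y
  linarith

theorem lt_r1 {x y : MM} (h : ht x < ht y) : -1 < y.r1 := by
  refine lt_of_le_of_ne y.le_r1 fun e => ?_
  have h1 := eq_l1P (x := y) (by linarith)
  have h2 : ht y = y.r1 - 2 := by conv_lhs => rw [h1, ht_l1P]
                                  rfl
  have := le_ht x
  linarith

theorem DD_lt (s : ℝ) {x y : MM} (h : ht x < ht y) : ht (D1 s x) < ht (D2 (s - 3) y) := by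
  rcases le_total s 3 with hs | hs
  · rw [D2_le (by linarith)]; exact (D1_ht s x).trans_lt h
  · have h1 := D1_ht s x
    have h2 : ht (D1 s x) ≤ -1 := by rw [D1_ge hs, ht_l1P]; linarith [cre_le x.c1]
    rcases D2_ht (s - 3) y with h3 | h3 <;> linarith

theorem l_lt (c d : Circle) : ht (l1P c) < ht (l2P d) := by
  rw [ht_l1P, ht_l2P]; linarith [cre_le c, cre_le d]

theorem ht_ne {x y : MM} (h : ht x < ht y) : x ≠ y := fun e => by rw [e] at h; exact lt_irrefl _ h

end MM

end fileK

section fileL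
open Set Topology

section generic
variable {A B X : Type*} [TopologicalSpace A] [TopologicalSpace B] [TopologicalSpace X]

theorem prod_split (T : C(A × B, X)) {a a' : A} {d d' : B} (P : Path a a') (Q : Path d d') :
    Path.Homotopic.Quotient.mk ((P.prod Q).map T.continuous) =
      (Path.Homotopic.Quotient.mk ((P.prod (Path.refl d)).map T.continuous)).trans
        (.mk (((Path.refl a').prod Q).map T.continuous)) := by
  rw [← Path.Homotopic.Quotient.mk_trans, ← Path.map_trans]
  have h : Path.Homotopic.Quotient.mk (P.prod Q) =
      .mk ((P.prod (Path.refl d)).trans ((Path.refl a').prod Q)) := by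
    rw [Path.Homotopic.Quotient.mk_trans]
    have := Path.Homotopic.comp_prod_eq_prod_comp (.mk P) (.refl d) (.refl a') (.mk Q)
    rw [Path.Homotopic.Quotient.trans_refl, Path.Homotopic.Quotient.refl_trans] at this
    exact this.symm
  rw [Path.Homotopic.Quotient.eq] at h ⊢
  exact h.map T

theorem prod_split' (T : C(A × B, X)) {a a' : A} {d d' : B} (P : Path a a') (Q : Path d d') :
    Path.Homotopic.Quotient.mk ((P.prod Q).map T.continuous) =
      (Path.Homotopic.Quotient.mk (((Path.refl a).prod Q).map T.continuous)).trans
        (.mk ((P.prod (Path.refl d')).map T.continuous)) := by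
  rw [← Path.Homotopic.Quotient.mk_trans, ← Path.map_trans]
  have h : Path.Homotopic.Quotient.mk (P.prod Q) =
      .mk (((Path.refl a).prod Q).trans (P.prod (Path.refl d'))) := by
    rw [Path.Homotopic.Quotient.mk_trans]
    have := Path.Homotopic.comp_prod_eq_prod_comp (.refl a) (.mk Q) (.mk P) (.refl d')
    rw [Path.Homotopic.Quotient.trans_refl, Path.Homotopic.Quotient.refl_trans] at this
    exact this.symm
  rw [Path.Homotopic.Quotient.eq] at h ⊢
  exact h.map T
end generic

/-- paths of unordered pairs -/
def ucP {M : Type*} [TopologicalSpace M] {p q : UConf 2 M} (f g : unitInterval → M)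
    (hf : Continuous f) (hg : Continuous g) (hne : ∀ t, f t ≠ g t) (e0 : uc (f 0) (g 0) (hne 0) = p)
    (e1 : uc (f 1) (g 1) (hne 1) = q) : Path p q where
  toFun t := uc (f t) (g t) (hne t)
  continuous_toFun := uc_continuous hf hg hne
  source' := e0
  target' := e1

theorem uc_congr {M : Type*} [TopologicalSpace M] {x y x' y' : M} (h : x ≠ y) (h' : x' ≠ y')
    (e : x = x') (e' : y = y') : uc x y h = uc x' y' h' := by
  subst e e'; rfl

namespace MM

/-- the torus -/
noncomputable def tau : C(Circle × Circle, UConf 2 MM) :=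
  ⟨fun z => uc (l1P z.1) (l2P z.2) (ht_ne (l_lt _ _)), uc_continuous (by fun_prop) (by fun_prop) _⟩

theorem tau_apply (z) : tau z = uc (l1P z.1) (l2P z.2) (ht_ne (l_lt _ _)) := rfl

noncomputable def bb : UConf 2 MM := tau (ci, ci)

def RR : Set (MM × MM) := {z | ht z.1 < ht z.2}
theorem RR_open : IsOpen RR := isOpen_lt (by fun_prop) (by fun_prop)
theorem RR_asym (x y : MM) (h : (x, y) ∈ RR) : (y, x) ∉ RR := not_lt_of_gt (α := ℝ) h

theorem cpath_gt {c : Circle} (h : -1 < cre c) (t : unitInterval) :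
    -1 < cre (cpath (Complex.arg c) (Real.pi / 2) t) := by
  rw [cpath_apply, cre_exp]
  have h1 := arg_lt h
  have h2 := Complex.neg_pi_lt_arg (c : ℂ)
  have h3 := Real.pi_pos
  have ht0 := t.2.1
  have ht1 := t.2.2
  apply cos_gt
  · rcases ht0.eq_or_lt with h0 | h0
    · rw [← h0]; linarith
    · nlinarith
  · rcases ht0.eq_or_lt with h0 | h0
    · rw [← h0]; linarith
    · nlinarith

theorem conn {x y : MM} (h : ht x < ht y) : ∃ α : Path.Homotopic.Quotient (uc x y (ht_ne h)) bb,
    InSet (img {z : MM × MM | ht z.1 < ht z.2 ∧ (-1 < x.r1 → -1 < z.1.r1) ∧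
      (-1 < y.r2 → -1 < z.2.r2)}) α := by
  have hx := lt_r2 h
  have hy := lt_r1 h
  let γ : Path (uc x y (ht_ne h)) (tau (x.c1, y.c2)) :=
    ucP (fun t => D1 (6 * t) x) (fun t => D2 (6 * t - 3) y)
      (D1_cont (by fun_prop) (by fun_prop) fun _ => hx)
      (D2_cont (by fun_prop) (by fun_prop) fun _ => hy) (fun t => ht_ne (DD_lt _ h))
      (uc_congr _ _ (D1_le (by simp) _) (D2_le (by simp) _))
      (uc_congr _ (ht_ne (l_lt _ _)) (D1_ge (by norm_num) _) (D2_ge (by norm_num) _))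
  let δ0 := ((cpath (Complex.arg x.c1) (Real.pi / 2)).prod (cpath (Complex.arg y.c2) (Real.pi / 2))).map
    tau.continuous
  let δ : Path (tau (x.c1, y.c2)) bb := δ0.cast (by simp only [Circle.exp_arg]) rfl
  refine ⟨(Path.Homotopic.Quotient.mk γ).trans (.mk δ), InSet.trans ⟨γ, fun t => ?_, rfl⟩
    ⟨δ, fun t => ?_, rfl⟩⟩
  · change uc (D1 (6 * t) x) (D2 (6 * t - 3) y) (ht_ne (DD_lt _ h)) ∈ _
    rw [mem_img]
    exact .inl ⟨DD_lt _ h, fun h => h, fun h => h⟩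
  · change tau (cpath _ _ t, cpath _ _ t) ∈ _
    rw [tau_apply, mem_img]
    exact .inl ⟨l_lt _ _, fun h => cpath_gt h t, fun h => cpath_gt h t⟩

noncomputable def t1 : C(Circle, UConf 2 MM) := tau.comp ⟨fun c => (c, ci), by fun_prop⟩
noncomputable def t2 : C(Circle, UConf 2 MM) := tau.comp ⟨fun c => (ci, c), by fun_prop⟩

noncomputable def al1 : Path.Homotopic.Quotient bb (tau (cmi, ci)) := .mk (om1.map t1.continuous)
noncomputable def al1' : Path.Homotopic.Quotient (tau (cmi, ci)) bb := .mk (om2.map t1.continuous)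
noncomputable def al2 : Path.Homotopic.Quotient bb (tau (ci, cmi)) := .mk (om1.map t2.continuous)
noncomputable def al2' : Path.Homotopic.Quotient (tau (ci, cmi)) bb := .mk (om2.map t2.continuous)

theorem al1_eq : al1.trans al1' = .mk ((om1.trans om2).map t1.continuous) := by
  rw [Path.map_trans]; rfl
theorem al2_eq : al2.trans al2' = .mk ((om1.trans om2).map t2.continuous) := by
  rw [Path.map_trans]; rfl

theorem al_comm : (al1.trans al1').trans (al2.trans al2') = (al2.trans al2').trans (al1.trans al1') := by
  rw [al1_eq, al2_eq]
  exact (prod_split tau (om1.trans om2) (om1.trans om2)).symm.trans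
    (prod_split' tau (om1.trans om2) (om1.trans om2))

theorem loops (α : FundamentalGroup (UConf 2 MM) bb) (hα : InSet (img RR) α)
    (K : Subgroup (FundamentalGroup (UConf 2 MM) bb))
    (h1 : al1.trans al1' ∈ K) (h2 : al2.trans al2' ∈ K) : α ∈ K := by
  obtain ⟨γ, hγ, rfl⟩ := hα
  obtain ⟨f, g, hf, hg, hfg, hz⟩ := lift_img RR_open RR_asym γ γ.continuous hγ
  have e : ∀ t, γ t = bb → f t = l1P ci ∧ g t = l2P ci := by
    intro t ht
    obtain ⟨hn, ht'⟩ := hz t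
    rw [ht', bb, tau_apply, uc_eq_iff] at ht
    rcases ht with ht | ht
    · exact ht
    · exfalso
      have := hfg t
      rw [ht.1, ht.2] at this
      exact RR_asym _ _ this (l_lt _ _)
  have e0 := e 0 γ.source
  have e1 := e 1 γ.target
  let P : Path ci ci := ⟨⟨fun t => (f t).c1, by fun_prop⟩, by simp only [e0.1]; rfl, by simp only [e1.1]; rfl⟩
  let Q : Path ci ci := ⟨⟨fun t => (g t).c2, by fun_prop⟩, by simp only [e0.2]; rfl, by simp only [e1.2]; rfl⟩
  have key : Path.Homotopic.Quotient.mk γ = .mk ((P.prod Q).map tau.continuous) := by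
    refine uc_homotopic γ _ (fun z => D1 (6 * z.1) (f z.2)) (fun z => D2 (6 * z.1 - 3) (g z.2))
      (D1_cont (by fun_prop) (by fun_prop) fun z => lt_r2 (hfg z.2))
      (D2_cont (by fun_prop) (by fun_prop) fun z => lt_r1 (hfg z.2))
      (fun z => ht_ne (DD_lt _ (hfg z.2))) ?_ ?_ ?_ ?_
    · intro t
      obtain ⟨hn, ht'⟩ := hz t
      rw [ht']
      exact uc_congr _ _ (D1_le (by simp) _).symm (D2_le (by simp) _).symm
    · intro t
      exact uc_congr (ht_ne (l_lt _ _)) _ (D1_ge (by norm_num) _).symm (D2_ge (by norm_num) _).symm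
    · intro s
      exact uc_congr _ (ht_ne (l_lt _ _)) (by simp only [e0.1, D1_l1P]) (by simp only [e0.2, D2_l2P])
    · intro s
      exact uc_congr _ (ht_ne (l_lt _ _)) (by simp only [e1.1, D1_l1P]) (by simp only [e1.2, D2_l2P])
  have key2 := key.trans (prod_split tau P Q)
  let p1 : FundamentalGroup (UConf 2 MM) bb := .mk (P.map t1.continuous)
  let p2 : FundamentalGroup (UConf 2 MM) bb := .mk (Q.map t2.continuous)
  suffices hs : p2 * p1 ∈ K by
    exact key2 ▸ hs
  refine K.mul_mem ?_ ?_
  · refine circ_gen (.mk Q) (K.comap (FundamentalGroup.map t2 ci)) ?_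
    rw [al2_eq] at h2
    exact h2
  · refine circ_gen (.mk P) (K.comap (FundamentalGroup.map t1 ci)) ?_
    rw [al1_eq] at h1
    exact h1

end MM

end fileL

section fileN
open Set Topology

namespace MM

/-- sets of ordered-by-height pairs -/
def ys (Q : MM → MM → Prop) : Set (UConf 2 MM) := img {z | ht z.1 < ht z.2 ∧ Q z.1 z.2}

theorem mem_ys {Q : MM → MM → Prop} {x y : MM} (h : ht x < ht y) :
    uc x y (ht_ne h) ∈ ys Q ↔ Q x y := by
  rw [ys, mem_img]
  constructor
  · rintro (h' | h')
    · exact h'.2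
    · exact absurd h'.1 (not_lt_of_gt h)
  · intro h'; exact .inl ⟨h, h'⟩

theorem ys_ind {Q : MM → MM → Prop} {C : UConf 2 MM → Prop}
    (H : ∀ x y (h : ht x < ht y), Q x y → C (uc x y (ht_ne h))) : ∀ p ∈ ys Q, C p := by
  rintro p ⟨x, y, h, rfl, h', hQ⟩
  exact H x y h' hQ

theorem ys_mono {Q Q' : MM → MM → Prop} (h : ∀ x y, Q x y → Q' x y) : ys Q ⊆ ys Q' :=
  ys_ind fun x y hx hQ => (mem_ys hx).2 (h x y hQ)

theorem ys_open {Q : MM → MM → Prop} (hQ : IsOpen {z : MM × MM | Q z.1 z.2}) : IsOpen (ys Q) :=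
  img_open (RR_open.inter hQ)

theorem ys_inter (Q Q' : MM → MM → Prop) : ys Q ∩ ys Q' = ys fun x y => Q x y ∧ Q' x y := by
  apply Subset.antisymm
  · rintro p ⟨h1, h2⟩
    revert h2
    refine ys_ind (C := fun p => p ∈ ys Q' → p ∈ _) (fun x y h hQ hp => ?_) p h1
    exact (mem_ys h).2 ⟨hQ, (mem_ys h).1 hp⟩
  · exact fun p hp => ⟨ys_mono (fun _ _ h => h.1) hp, ys_mono (fun _ _ h => h.2) hp⟩

theorem ys_union (Q Q' : MM → MM → Prop) : ys Q ∪ ys Q' = ys fun x y => Q x y ∨ Q' x y := by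
  apply Subset.antisymm
  · exact union_subset (ys_mono fun _ _ h => .inl h) (ys_mono fun _ _ h => .inr h)
  · refine ys_ind (fun x y h hQ => ?_)
    rcases hQ with hQ | hQ
    · exact .inl ((mem_ys h).2 hQ)
    · exact .inr ((mem_ys h).2 hQ)

theorem ys_disj {Q Q' : MM → MM → Prop} (H : ∀ x y, Q x y → ¬ Q' x y) : Disjoint (ys Q) (ys Q') := by
  rw [Set.disjoint_iff_inter_eq_empty, ys_inter]
  exact eq_empty_iff_forall_notMem.2 fun p hp => ys_ind (C := fun _ => False)
    (fun x y _ h => H x y h.1 h.2) p hp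

def AN : Fin 3 → Set MM := ![{x | 0 < x.w}, {x | 0 < x.i1}, {x | 0 < x.i2}]
def BN : Fin 3 → Set MM := ![{x | 0 < x.v ∧ x.v < 1}, {x | x.i1 < 0}, {x | x.i2 < 0}]

def NN (j : Fin 3) : Set (UConf 2 MM) := img {z | z.1 ∈ AN j ∧ z.2 ∈ BN j}
def Pm (j : Fin 3) : Set (UConf 2 MM) :=
  img {z | (z.1 ∈ AN j ∧ z.2 ∈ BN j) ∧ (ht z.1, ht z.2) ∈ {p : ℝ × ℝ | p.1 < p.2}}
def Pp (j : Fin 3) : Set (UConf 2 MM) :=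
  img {z | (z.1 ∈ AN j ∧ z.2 ∈ BN j) ∧ (ht z.1, ht z.2) ∈ {p : ℝ × ℝ | p.2 < p.1}}

theorem r_of_i1 {x : MM} (h : x.i1 ≠ 0) : -1 < x.r1 ∧ x.r1 < 1 ∧ x.r2 = 1 := by
  have h1 := cim_ne h
  refine ⟨h1.1, h1.2, ?_⟩
  have := eq_l1P (x := x) h1.2
  rw [this]; simp [r2, c2, l1P]
theorem r_of_i2 {x : MM} (h : x.i2 ≠ 0) : -1 < x.r2 ∧ x.r2 < 1 ∧ x.r1 = 1 := by
  have h1 := cim_ne h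
  refine ⟨h1.1, h1.2, ?_⟩
  have := eq_l2P (x := x) h1.2
  rw [this]; simp [r1, c1, l2P]

theorem abn (j : Fin 3) (x : MM) (h : x ∈ AN j ∨ x ∈ BN j) : -1 < x.r1 ∧ -1 < x.r2 ∧
    ((j = 0 ∧ x.r1 = 1 ∧ x.r2 = 1) ∨ (j = 1 ∧ x.r1 < 1 ∧ x.r2 = 1) ∨ (j = 2 ∧ x.r1 = 1 ∧ x.r2 < 1)) := by
  fin_cases j
  · have h : 0 < x.w ∨ (0 < x.v ∧ x.v < 1) := h
    have : x.r1 = 1 ∧ x.r2 = 1 := by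
      obtain ⟨_, _, h2, h3⟩ := x.spec
      rcases h with h | h <;>
      rcases h3 with ⟨a, b, c, d⟩ | ⟨a, b, c, d | d⟩ | ⟨a, b, c, d⟩ <;>
        first | exact ⟨c, d⟩ | linarith
    rw [this.1, this.2]; norm_num
  · have h : 0 < x.i1 ∨ x.i1 < 0 := h
    have := r_of_i1 (x := x) (by rcases h with h | h <;> [exact h.ne'; exact h.ne])
    refine ⟨this.1, by rw [this.2.2]; norm_num, .inr (.inl ⟨rfl, this.2⟩)⟩
  · have h : 0 < x.i2 ∨ x.i2 < 0 := h
    have := r_of_i2 (x := x) (by rcases h with h | h <;> [exact h.ne'; exact h.ne])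
    refine ⟨by rw [this.2.2]; norm_num, this.1, .inr (.inr ⟨rfl, this.2.2, this.2.1⟩)⟩

theorem abn_eq {i j : Fin 3} {x : MM} (h : x ∈ AN i ∨ x ∈ BN i) (h' : x ∈ AN j ∨ x ∈ BN j) : i = j := by
  have a := (abn i x h).2.2
  have b := (abn j x h').2.2
  rcases a with ⟨rfl, a⟩ | ⟨rfl, a⟩ | ⟨rfl, a⟩ <;> rcases b with ⟨rfl, b⟩ | ⟨rfl, b⟩ | ⟨rfl, b⟩ <;>
    first | rfl | (exfalso; linarith)

theorem ab_disj (j : Fin 3) : Disjoint (AN j) (BN j) := by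
  rw [Set.disjoint_left]
  fin_cases j
  · intro x (h : 0 < x.w) (h' : 0 < x.v ∧ x.v < 1)
    obtain ⟨_, _, h2, h3⟩ := x.spec
    rcases h3 with ⟨a, b, c, d⟩ | ⟨a, b, c, d⟩ | ⟨a, b, c, d⟩ <;> linarith
  · intro x (h : 0 < x.i1) (h' : x.i1 < 0)
    linarith
  · intro x (h : 0 < x.i2) (h' : x.i2 < 0)
    linarith

theorem A_open (j : Fin 3) : IsOpen (AN j) := by
  fin_cases j
  · exact isOpen_lt (by fun_prop) w_cont
  · exact isOpen_lt (by fun_prop) i1_cont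
  · exact isOpen_lt (by fun_prop) i2_cont
theorem B_open (j : Fin 3) : IsOpen (BN j) := by
  fin_cases j
  · exact (isOpen_lt (by fun_prop) v_cont).inter (isOpen_lt v_cont (by fun_prop))
  · exact isOpen_lt i1_cont (by fun_prop)
  · exact isOpen_lt i2_cont (by fun_prop)

theorem ab_arc (j : Fin 3) : ∃ J J' g g', IsArc ht (AN j) J g ∧ IsArc ht (BN j) J' g' ∧
    ∃ a b, a < b ∧ a ∈ J ∧ b ∈ J ∧ a ∈ J' ∧ b ∈ J' := by
  fin_cases j
  · exact ⟨_, _, _, _, arc_st, arc_e2, 1/4, 1/2, by norm_num⟩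
  · exact ⟨_, _, _, _, arc_1p, arc_1m, -5/2, -3/2, by norm_num⟩
  · exact ⟨_, _, _, _, arc_2p, arc_2m, 3/2, 5/2, by norm_num⟩

theorem ht_of_r1 {x : MM} (h : x.r1 < 1) : ht x = x.r1 - 2 := by
  conv_lhs => rw [eq_l1P h, ht_l1P]
  rfl
theorem ht_of_r2 {x : MM} (h : x.r2 < 1) : ht x = 2 - x.r2 := by
  conv_lhs => rw [eq_l2P h, ht_l2P]
  rfl

theorem same_ht {x y : MM} (hne : x ≠ y) (h : ht x = ht y) :
    ∃ j, (x ∈ AN j ∧ y ∈ BN j) ∨ (y ∈ AN j ∧ x ∈ BN j) := by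
  have sx := x.spec
  have sy := y.spec
  by_cases h1 : x.r1 < 1 ∨ y.r1 < 1
  · have h2 : x.r1 < 1 ∧ y.r1 < 1 := by
      rcases h1 with h1 | h1
      · refine ⟨h1, ?_⟩
        by_contra! hc
        have e := ht_of_r1 h1
        rw [h, ht] at e
        linarith [sy.1.2, sy.2.1.1, sy.2.2.1.1, y.r2_le]
      · refine ⟨?_, h1⟩
        by_contra! hc
        have e := ht_of_r1 h1
        rw [← h, ht] at e
        linarith [sx.1.2, sx.2.1.1, sx.2.2.1.1, x.r2_le]
    have e : cre x.c1 = cre y.c1 := by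
      have e1 := ht_of_r1 h2.1
      have e2 := ht_of_r1 h2.2
      change x.r1 = y.r1
      linarith
    refine ⟨1, ?_⟩
    rcases c_same e with e | e | e
    · exact absurd (by rw [eq_l1P h2.1, eq_l1P h2.2, e]) hne
    · exact .inl e
    · exact .inr e
  by_cases h1' : x.r2 < 1 ∨ y.r2 < 1
  · have h2 : x.r2 < 1 ∧ y.r2 < 1 := by
      rcases h1' with h1 | h1
      · refine ⟨h1, ?_⟩
        by_contra! hc
        have e := ht_of_r2 h1
        rw [h, ht] at e
        rcases sy.2.2.2 with ⟨a, b, c, d⟩ | ⟨a, b, c, d⟩ | ⟨a, b, c, d⟩ <;>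
          linarith [sy.1.1, sy.2.1.2, sy.2.2.1.2, y.r1_le]
      · refine ⟨?_, h1⟩
        by_contra! hc
        have e := ht_of_r2 h1
        rw [← h, ht] at e
        rcases sx.2.2.2 with ⟨a, b, c, d⟩ | ⟨a, b, c, d⟩ | ⟨a, b, c, d⟩ <;>
          linarith [sx.1.1, sx.2.1.2, sx.2.2.1.2, x.r1_le]
    have e : cre x.c2 = cre y.c2 := by
      have e1 := ht_of_r2 h2.1
      have e2 := ht_of_r2 h2.2
      change x.r2 = y.r2
      linarith
    refine ⟨2, ?_⟩
    rcases c_same e with e | e | e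
    · exact absurd (by rw [eq_l2P h2.1, eq_l2P h2.2, e]) hne
    · exact .inl e
    · exact .inr e
  push Not at h1 h1'
  have a1 := le_antisymm x.r1_le h1.1
  have a2 := le_antisymm y.r1_le h1.2
  have a3 := le_antisymm x.r2_le h1'.1
  have a4 := le_antisymm y.r2_le h1'.2
  have hne' : x.u = y.u → x.v = y.v → x.w = y.w → False := fun b1 b2 b3 =>
    hne (ext' b1 b2 b3 ((c_one a1).trans (c_one a2).symm) ((c_one a3).trans (c_one a4).symm))
  refine ⟨0, ?_⟩
  change (0 < x.w ∧ (0 < y.v ∧ y.v < 1)) ∨ (0 < y.w ∧ (0 < x.v ∧ x.v < 1))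
  simp only [ht, a1, a2, a3, a4] at h
  obtain ⟨⟨p1, p2⟩, ⟨p3, p4⟩, ⟨p5, p6⟩, p⟩ := sx
  obtain ⟨⟨q1, q2⟩, ⟨q3, q4⟩, ⟨q5, q6⟩, q⟩ := sy
  have z1 : (x.v = 0 ∧ x.w = 0) ∨ (x.u = 0 ∧ x.w = 0) ∨ (x.u = 0 ∧ x.v = 0) := by
    rcases p with p | p | p
    · exact .inl ⟨p.1, p.2.1⟩
    · exact .inr (.inl ⟨p.1, p.2.1⟩)
    · exact .inr (.inr ⟨p.1, p.2.1⟩)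
  have z2 : (y.v = 0 ∧ y.w = 0) ∨ (y.u = 0 ∧ y.w = 0) ∨ (y.u = 0 ∧ y.v = 0) := by
    rcases q with p | p | p
    · exact .inl ⟨p.1, p.2.1⟩
    · exact .inr (.inl ⟨p.1, p.2.1⟩)
    · exact .inr (.inr ⟨p.1, p.2.1⟩)
  by_contra! hcon
  clear p q
  rcases z1 with ⟨a, b⟩ | ⟨a, b⟩ | ⟨a, b⟩ <;> rcases z2 with ⟨c, d⟩ | ⟨c, d⟩ | ⟨c, d⟩ <;>
    rw [a, b, c, d] at h <;> try exact hne' (by linarith) (by linarith) (by linarith)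
  · rcases q5.eq_or_lt with e | e
    · exact hne' (by linarith) (by linarith) (by linarith)
    · linarith [hcon.2 e (by linarith)]
  · rcases p5.eq_or_lt with e | e
    · exact hne' (by linarith) (by linarith) (by linarith)
    · linarith [hcon.1 e (by linarith)]

end MM

end fileN

section fileO
open Set Topology

namespace MM

theorem cvx1 : Convex ℝ {p : ℝ × ℝ | p.1 < p.2} := by
  intro p (hp : p.1 < p.2) q (hq : q.1 < q.2) a b ha hb hab
  change a * p.1 + b * q.1 < a * p.2 + b * q.2
  rcases ha.eq_or_lt with h | h
  · obtain rfl : b = 1 := by linarith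
    rw [← h]; linarith
  · nlinarith
theorem cvx2 : Convex ℝ {p : ℝ × ℝ | p.2 < p.1} := by
  intro p (hp : p.2 < p.1) q (hq : q.2 < q.1) a b ha hb hab
  change a * p.2 + b * q.2 < a * p.1 + b * q.1
  rcases ha.eq_or_lt with h | h
  · obtain rfl : b = 1 := by linarith
    rw [← h]; linarith
  · nlinarith

theorem om1_re (t : unitInterval) : cre (om1 t) < 1 := by
  change cre (Circle.exp _) < 1
  rw [cre_exp]
  have := Real.pi_pos
  have h0 := t.2.1
  have h1 := t.2.2
  have := Real.cos_nonpos_of_pi_div_two_le_of_le (x := (1 - (t : ℝ)) * (Real.pi / 2) + t * (3 * Real.pi / 2))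
    (by nlinarith) (by nlinarith)
  linarith

theorem om2_re (t : unitInterval) : -1 < cre (om2 t) := by
  change -1 < cre (Circle.exp ((1 - (t : ℝ)) * (3 * Real.pi / 2) + t * (Real.pi / 2 + (1 : ℤ) * (2 * Real.pi))))
  rw [cre_exp, ← Real.cos_sub_two_pi]
  have := Real.pi_pos
  have h0 := t.2.1
  have h1 := t.2.2
  apply cos_gt <;> push_cast <;> nlinarith

theorem ci_re : cre ci = 0 := by rw [cre_exp, Real.cos_pi_div_two]
theorem ci_im : cim ci = 1 := by rw [cim_exp, Real.sin_pi_div_two]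
theorem cmi_im : cim cmi = -1 := by
  rw [cim_exp, show 3 * Real.pi / 2 = Real.pi / 2 + Real.pi by ring, Real.sin_add_pi,
    Real.sin_pi_div_two]

theorem main : PathConnectedSpace (UConf 2 MM) ∧
    Nonempty (FundamentalGroup (UConf 2 MM) bb ≃* F3ZZ) := by
  have mtau : ∀ (Q : MM → MM → Prop) c d, Q (l1P c) (l2P d) → tau (c, d) ∈ ys Q := fun Q c d h =>
    (mem_ys (l_lt c d)).2 h
  have rY : img RR = ys fun _ _ => True := by simp [ys, RR]
  refine abstract_main bb (ys fun x _ => -1 < x.r1) (ys fun x _ => x.r1 < 1) (ys fun x _ => 0 < x.i1)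
    (ys fun x _ => x.i1 < 0) (ys fun _ y => -1 < y.r2) (ys fun _ y => y.r2 < 1)
    (ys fun _ y => 0 < y.i2) (ys fun _ y => y.i2 < 0) (img RR) NN Pm Pp ?_ ?_ ?_ ?_ ?_ ?_ ?_ ?_
    ?oN ?oPm ?oPp ?hY1 ?hY2 ?h1 ?d1 ?h2 ?d2 ?hcov ?hdisj ?hP ?hPm ?hPp ?hPd ?conY ?conA ?scN ?conN
    ?conPm ?conPp ?nem ?nep (tau (cmi, ci)) (tau (ci, cmi)) al1 al1' al2 al2' ?ha1 ?ha1' ?ha2 ?ha2'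
    ?hb1 ?hb1' ?hb2 ?hb2' al_comm ?hYl
  · exact ys_open (isOpen_lt (by fun_prop) (by fun_prop))
  · exact ys_open (isOpen_lt (by fun_prop) (by fun_prop))
  · exact ys_open (isOpen_lt (by fun_prop) (by fun_prop))
  · exact ys_open (isOpen_lt (by fun_prop) (by fun_prop))
  · exact ys_open (isOpen_lt (by fun_prop) (by fun_prop))
  · exact ys_open (isOpen_lt (by fun_prop) (by fun_prop))
  · exact ys_open (isOpen_lt (by fun_prop) (by fun_prop))
  · exact ys_open (isOpen_lt (by fun_prop) (by fun_prop))
  case oN => exact fun j => img_open ((A_open j).prod (B_open j))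
  case oPm => exact fun j => img_open (((A_open j).prod (B_open j)).inter RR_open)
  case oPp =>
    exact fun j => img_open (((A_open j).prod (B_open j)).inter (isOpen_lt (f := fun z : MM × MM => ht z.2)
      (g := fun z => ht z.1) (by fun_prop) (by fun_prop)))
  case hY1 =>
    rw [rY, ys_union]; congr 1; funext x y
    exact (eq_true (by rcases lt_or_ge (-1) x.r1 with h | h <;> [exact .inl h; exact .inr (by linarith)])).symm
  case hY2 =>
    rw [rY, ys_union]; congr 1; funext x y
    exact (eq_true (by rcases lt_or_ge (-1) y.r2 with h | h <;> [exact .inl h; exact .inr (by linarith)])).symm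
  case h1 =>
    rw [ys_inter, ys_union]
    exact ys_mono fun x y h => (cim_ne' h.1 h.2).lt_or_gt.symm
  case h2 =>
    rw [ys_inter, ys_union]
    exact ys_mono fun x y h => (cim_ne' h.1 h.2).lt_or_gt.symm
  case d1 => exact ys_disj fun x y h h' => lt_asymm h h'
  case d2 => exact ys_disj fun x y h h' => lt_asymm h h'
  case hcov =>
    intro p
    obtain ⟨x, y, h, rfl⟩ := uc_surj p
    rw [mem_img]
    rcases lt_trichotomy (ht x) (ht y) with h' | h' | h'
    · exact .inl (.inl h')
    · right
      obtain ⟨j, hj⟩ := same_ht h h'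
      exact ⟨j, (mem_img h).2 hj⟩
    · exact .inl (.inr h')
  case hdisj =>
    rintro i j p ⟨x, y, h, rfl, hx, hy⟩ hp
    rw [NN, mem_img] at hp
    refine abn_eq (.inl hx) ?_
    rcases hp with hp | hp
    · exact .inl hp.1
    · exact .inr hp.2
  case hP =>
    rintro j p ⟨⟨x, y, h, rfl, hxy⟩, hp⟩
    rw [mem_img] at hp
    rcases hp with hp | hp
    · exact .inl ((mem_img h).2 (.inl ⟨hxy, hp⟩))
    · exact .inr ((mem_img h).2 (.inl ⟨hxy, hp⟩))
  case hPm =>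
    rintro j p ⟨x, y, h, rfl, hxy, hl⟩
    refine ⟨(mem_img h).2 (.inl hxy), ?_⟩
    rw [ys_inter]
    exact (mem_ys (Q := fun x y => -1 < x.r1 ∧ -1 < y.r2) hl).2
      ⟨(abn j x (.inl hxy.1)).1, (abn j y (.inr hxy.2)).2.1⟩
  case hPp =>
    rintro j p ⟨x, y, h, rfl, hxy, hl⟩
    refine ⟨(mem_img h).2 (.inl hxy), ?_⟩
    rw [ys_inter, show uc x y h = uc y x h.symm from (uc_eq_iff _ _).2 (.inr ⟨rfl, rfl⟩)]
    exact (mem_ys (Q := fun x y => -1 < x.r1 ∧ -1 < y.r2) hl).2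
      ⟨(abn j y (.inr hxy.2)).1, (abn j x (.inl hxy.1)).2.1⟩
  case hPd =>
    intro j
    rw [Set.disjoint_left]
    rintro p ⟨x, y, h, rfl, hxy, hl⟩ hp
    rw [Pp, mem_img] at hp
    rcases hp with hp | hp
    · exact lt_asymm (a := ht x) hl hp.2
    · exact disjoint_left.1 (ab_disj j) hxy.1 hp.1.2
  case conY =>
    rw [rY]
    refine ys_ind fun x y h _ => ?_
    obtain ⟨α, hα⟩ := conn h
    have hα : InSet (ys fun x' y' => (-1 < x.r1 → -1 < x'.r1) ∧ (-1 < y.r2 → -1 < y'.r2)) α := hα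
    exact ⟨α.symm, hα.symm.mono (ys_mono fun _ _ _ => trivial)⟩
  case conA =>
    rw [ys_inter]
    refine ys_ind fun x y h hQ => ?_
    obtain ⟨α, hα⟩ := conn h
    have hα : InSet (ys fun x' y' => (-1 < x.r1 → -1 < x'.r1) ∧ (-1 < y.r2 → -1 < y'.r2)) α := hα
    exact ⟨α.symm, hα.symm.mono (ys_mono fun x' y' h' => ⟨h'.1 hQ.1, h'.2 hQ.2⟩)⟩
  case scN =>
    intro j p q α β
    obtain ⟨J, J', g, g', hA, hB, -⟩ := ab_arc j
    exact arcs_sc ht_cont hA hB (ab_disj j) (A_open j) (B_open j) p q α β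
  case conN =>
    intro j p hp q hq
    obtain ⟨J, J', g, g', hA, hB, -⟩ := ab_arc j
    have := arcs_con hA hB (ab_disj j) univ convex_univ p q
    simp only [mem_univ, and_true] at this
    exact this hp hq
  case conPm =>
    intro j p hp q hq
    obtain ⟨J, J', g, g', hA, hB, -⟩ := ab_arc j
    exact arcs_con hA hB (ab_disj j) _ cvx1 p q hp hq
  case conPp =>
    intro j p hp q hq
    obtain ⟨J, J', g, g', hA, hB, -⟩ := ab_arc j
    exact arcs_con hA hB (ab_disj j) _ cvx2 p q hp hq
  case nem =>
    intro j
    obtain ⟨J, J', g, g', hA, hB, a, b, hab, h1, h2, h3, h4⟩ := ab_arc j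
    have h : ht (g a) < ht (g' b) := by rw [hA.hg a h1, hB.hg b h4]; exact hab
    exact ⟨uc (g a) (g' b) (ht_ne h), (mem_img _).2 (.inl ⟨⟨hA.gmem a h1, hB.gmem b h4⟩, h⟩)⟩
  case nep =>
    intro j
    obtain ⟨J, J', g, g', hA, hB, a, b, hab, h1, h2, h3, h4⟩ := ab_arc j
    have h : ht (g' a) < ht (g b) := by rw [hA.hg b h2, hB.hg a h3]; exact hab
    exact ⟨uc (g b) (g' a) (ht_ne h).symm, (mem_img _).2 (.inl ⟨⟨hA.gmem b h2, hB.gmem a h3⟩, h⟩)⟩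
  case ha1 =>
    rw [ys_inter]
    exact ⟨_, fun t => mtau _ _ _ ⟨om1_re t, by change -1 < cre ci; rw [ci_re]; norm_num⟩, rfl⟩
  case ha1' =>
    rw [ys_inter]
    exact ⟨_, fun t => mtau _ _ _ ⟨om2_re t, by change -1 < cre ci; rw [ci_re]; norm_num⟩, rfl⟩
  case ha2 =>
    rw [ys_inter]
    exact ⟨_, fun t => mtau _ _ _ ⟨by change -1 < cre ci; rw [ci_re]; norm_num, om1_re t⟩, rfl⟩
  case ha2' =>
    rw [ys_inter]
    exact ⟨_, fun t => mtau _ _ _ ⟨by change -1 < cre ci; rw [ci_re]; norm_num, om2_re t⟩, rfl⟩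
  case hb1 => exact mtau _ _ _ (by change 0 < cim ci; rw [ci_im]; norm_num)
  case hb1' => exact mtau _ _ _ (by change cim cmi < 0; rw [cmi_im]; norm_num)
  case hb2 => exact mtau _ _ _ (by change 0 < cim ci; rw [ci_im]; norm_num)
  case hb2' => exact mtau _ _ _ (by change cim cmi < 0; rw [cmi_im]; norm_num)
  case hYl => exact loops

end MM

end fileO

section fileP
open Set Topology

namespace MM

theorem Mset_compact : IsCompact Mset := by
  have h1 : IsCompact ((Icc (0:ℝ) 1) ×ˢ (Icc (0:ℝ) 1) ×ˢ (Icc (0:ℝ) 1) ×ˢ (univ : Set (Circle × Circle))) :=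
    isCompact_Icc.prod (isCompact_Icc.prod (isCompact_Icc.prod isCompact_univ))
  refine h1.of_isClosed_subset ?_ ?_
  · unfold Mset
    have c1 : Continuous fun p : ℝ × ℝ × ℝ × Circle × Circle => cre p.2.2.2.1 := by fun_prop
    have c2 : Continuous fun p : ℝ × ℝ × ℝ × Circle × Circle => cre p.2.2.2.2 := by fun_prop
    simp only [Set.ofPred_and, Set.ofPred_or]
    refine IsClosed.inter ?_ (IsClosed.inter ?_ (IsClosed.inter ?_ ?_))
    · exact (isClosed_le (by fun_prop) (by fun_prop)).inter (isClosed_le (by fun_prop) (by fun_prop))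
    · exact (isClosed_le (by fun_prop) (by fun_prop)).inter (isClosed_le (by fun_prop) (by fun_prop))
    · exact (isClosed_le (by fun_prop) (by fun_prop)).inter (isClosed_le (by fun_prop) (by fun_prop))
    · refine IsClosed.union ?_ (IsClosed.union ?_ ?_)
      · refine IsClosed.inter ?_ (IsClosed.inter ?_ (IsClosed.inter ?_ (IsClosed.union ?_ ?_))) <;>
          exact isClosed_eq (by fun_prop) (by fun_prop)
      · refine IsClosed.inter ?_ (IsClosed.inter ?_ (IsClosed.inter ?_ (IsClosed.union ?_ ?_))) <;>
          exact isClosed_eq (by fun_prop) (by fun_prop)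
      · refine IsClosed.inter ?_ (IsClosed.inter ?_ (IsClosed.inter ?_ ?_)) <;>
          exact isClosed_eq (by fun_prop) (by fun_prop)
  · rintro ⟨u, v, w, c, d⟩ ⟨h1, h2, h3, -⟩
    exact ⟨h1, h2, h3, trivial⟩

/-- the first plane coordinate -/
noncomputable def fx (x : MM) : ℝ := x.u + 2 * x.v + x.i1 / 4 + x.i2 / 4
/-- the second plane coordinate -/
noncomputable def fy (x : MM) : ℝ := x.u + x.v - x.w + (1 - x.r1) / 4 + (1 - x.r2) / 4

theorem mem_bg (p : ℝ × ℝ) : p ∈ balloonGraph 2 ↔ (p.1 = 0 ∧ -1 ≤ p.2 ∧ p.2 ≤ 0) ∨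
    (0 ≤ p.2 ∧ p.2 ≤ 1 ∧ p.1 = p.2) ∨ (0 ≤ p.2 ∧ p.2 ≤ 1 ∧ p.1 = 2 * p.2) ∨
    ((p.1 - 1) ^ 2 + (p.2 - 5 / 4) ^ 2 = (1 / 4 : ℝ) ^ 2) ∨
    ((p.1 - 2) ^ 2 + (p.2 - 5 / 4) ^ 2 = (1 / 4 : ℝ) ^ 2) := by
  obtain ⟨a, b⟩ := p
  have e : Finset.Icc 1 2 = ({1, 2} : Finset ℕ) := by decide
  have s0 : (a, b) ∈ segment ℝ ((0 : ℝ), (-1 : ℝ)) ((0 : ℝ), (0 : ℝ)) ↔ (a = 0 ∧ -1 ≤ b ∧ b ≤ 0) := by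
    constructor
    · rintro ⟨s, t, hs, ht, hst, h⟩
      simp [Prod.ext_iff] at h
      refine ⟨h.1.symm, ?_, ?_⟩ <;> linarith
    · rintro ⟨rfl, h1, h2⟩
      exact ⟨-b, 1 + b, by linarith, by linarith, by ring, by simp⟩
  have s1 : ∀ i : ℝ, (a, b) ∈ segment ℝ ((0 : ℝ), (0 : ℝ)) (i, (1 : ℝ)) ↔ (0 ≤ b ∧ b ≤ 1 ∧ a = i * b) := by
    intro i
    constructor
    · rintro ⟨s, t, hs, ht, hst, h⟩
      simp [Prod.ext_iff] at h
      obtain ⟨h1, rfl⟩ := h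
      refine ⟨ht, by linarith, ?_⟩
      rw [← h1]; ring
    · rintro ⟨h1, h2, rfl⟩
      exact ⟨1 - b, b, by linarith, by linarith, by ring, by simp [mul_comm]⟩
  simp only [balloonGraph, e, mem_union, s0, mem_iUnion, Finset.mem_insert, Finset.mem_singleton,
    exists_prop, exists_eq_or_imp, exists_eq_left, s1, Set.mem_ofPred_eq]
  push_cast
  simp only [one_mul]
  tauto

theorem f_mem (x : MM) : (fx x, fy x) ∈ balloonGraph 2 := by
  rw [mem_bg]
  have k1 := cre_cim x.c1
  have k2 := cre_cim x.c2
  obtain ⟨⟨p1, p2⟩, ⟨p3, p4⟩, ⟨p5, p6⟩, p⟩ := x.spec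
  have z1 : x.r1 = 1 → x.i1 = 0 := cim_zero
  have z2 : x.r2 = 1 → x.i2 = 0 := cim_zero
  have k1 : x.r1 ^ 2 + x.i1 ^ 2 = 1 := k1
  have k2 : x.r2 ^ 2 + x.i2 ^ 2 = 1 := k2
  simp only [fx, fy]
  rcases p with ⟨a, b, c, d⟩ | ⟨a, b, c, d⟩ | ⟨a, b, c, d⟩
  · rw [a, b, z2 c, c]
    rcases d with d | d
    · rw [z1 d, d]
      refine .inr (.inl ⟨?_, ?_, ?_⟩) <;> linarith
    · rw [d]
      refine .inr (.inr (.inr (.inl ?_)))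
      nlinarith
  · rw [a, b, z1 c, c]
    rcases d with d | d
    · rw [z2 d, d]
      refine .inr (.inr (.inl ⟨?_, ?_, ?_⟩)) <;> linarith
    · rw [d]
      refine .inr (.inr (.inr (.inr ?_)))
      nlinarith
  · rw [a, b, z1 c, c, z2 d, d]
    refine .inl ⟨?_, ?_, ?_⟩ <;> linarith

noncomputable def ff (x : MM) : balloonGraph 2 := ⟨(fx x, fy x), f_mem x⟩

theorem ff_cont : Continuous ff := by
  refine Continuous.subtype_mk ?_ _
  unfold fx fy
  fun_prop

/-- a point on the circle -/
theorem exists_circ {a b : ℝ} (h : a ^ 2 + b ^ 2 = 1) : ∃ c : Circle, cre c = a ∧ cim c = b := by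
  refine ⟨⟨⟨a, b⟩, ?_⟩, rfl, rfl⟩
  change _ ∈ Metric.sphere (0 : ℂ) 1
  rw [mem_sphere_zero_iff_norm]
  have : ‖(⟨a, b⟩ : ℂ)‖ ^ 2 = 1 := by
    rw [Complex.sq_norm, Complex.normSq_mk]; linarith
  exact (pow_eq_one_iff_of_nonneg (norm_nonneg _) (by norm_num)).1 this

theorem ff_surj : Function.Surjective ff := by
  rintro ⟨⟨a, b⟩, hp⟩
  have hp' := (mem_bg _).1 hp
  dsimp only at hp'
  suffices h : ∃ x : MM, fx x = a ∧ fy x = b by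
    obtain ⟨x, h1, h2⟩ := h
    exact ⟨x, Subtype.ext (Prod.ext h1 h2)⟩
  rcases hp' with ⟨h1, h2, h3⟩ | ⟨h1, h2, h3⟩ | ⟨h1, h2, h3⟩ | h | h
  · refine ⟨stP (-b), ?_, ?_⟩
    · simp [fx, stP, u, v, i1, i2, c1, c2, h1]
    · simp [fy, stP, u, v, w, r1, r2, c1, c2, cl_of (t := -b) (by linarith) (by linarith)]
  · refine ⟨e1P b, ?_, ?_⟩
    · simp [fx, e1P, u, v, i1, i2, c1, c2, cl_of h1 h2, h3]
    · simp [fy, e1P, u, v, w, r1, r2, c1, c2, cl_of h1 h2]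
  · refine ⟨e2P b, ?_, ?_⟩
    · simp [fx, e2P, u, v, i1, i2, c1, c2, cl_of h1 h2, h3]
    · simp [fy, e2P, u, v, w, r1, r2, c1, c2, cl_of h1 h2]
  · obtain ⟨c, hc1, hc2⟩ := exists_circ (a := 1 - 4 * (b - 1)) (b := 4 * (a - 1)) (by nlinarith)
    refine ⟨l1P c, ?_, ?_⟩
    · simp [fx, l1P, u, v, i1, i2, c1, c2, hc2]
    · simp [fy, l1P, u, v, w, r1, r2, c1, c2, hc1]
  · obtain ⟨c, hc1, hc2⟩ := exists_circ (a := 1 - 4 * (b - 1)) (b := 4 * (a - 2)) (by nlinarith)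
    refine ⟨l2P c, ?_, ?_⟩
    · simp [fx, l2P, u, v, i1, i2, c1, c2, hc2]
    · simp [fy, l2P, u, v, w, r1, r2, c1, c2, hc1]

theorem five (x : MM) : (x.v = 0 ∧ x.w = 0 ∧ x.r1 = 1 ∧ x.r2 = 1 ∧ x.i1 = 0 ∧ x.i2 = 0) ∨
    (x.u = 1 ∧ x.v = 0 ∧ x.w = 0 ∧ x.r2 = 1 ∧ x.i2 = 0) ∨
    (x.u = 0 ∧ x.w = 0 ∧ x.r1 = 1 ∧ x.r2 = 1 ∧ x.i1 = 0 ∧ x.i2 = 0) ∨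
    (x.u = 0 ∧ x.v = 1 ∧ x.w = 0 ∧ x.r1 = 1 ∧ x.i1 = 0) ∨
    (x.u = 0 ∧ x.v = 0 ∧ x.r1 = 1 ∧ x.r2 = 1 ∧ x.i1 = 0 ∧ x.i2 = 0) := by
  have z1 : x.r1 = 1 → x.i1 = 0 := cim_zero
  have z2 : x.r2 = 1 → x.i2 = 0 := cim_zero
  rcases x.spec.2.2.2 with ⟨a, b, c, d | d⟩ | ⟨a, b, c, d | d⟩ | ⟨a, b, c, d⟩
  · exact .inl ⟨a, b, d, c, z1 d, z2 c⟩
  · exact .inr (.inl ⟨d, a, b, c, z2 c⟩)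
  · exact .inr (.inr (.inl ⟨a, b, c, d, z1 c, z2 d⟩))
  · exact .inr (.inr (.inr (.inl ⟨a, d, b, c, z1 c⟩)))
  · exact .inr (.inr (.inr (.inr ⟨a, b, c, d, z1 c, z2 d⟩)))

theorem cim_le (c : Circle) : cim c ≤ 1 := by nlinarith [cre_cim c, sq_nonneg (cre c)]
theorem le_cim (c : Circle) : -1 ≤ cim c := by nlinarith [cre_cim c, sq_nonneg (cre c)]

set_option maxHeartbeats 2000000 in
theorem ff_inj : Function.Injective ff := by
  intro x y h
  have h1 : fx x = fx y := congrArg (fun z => z.1.1) h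
  have h2 : fy x = fy y := congrArg (fun z => z.1.2) h
  obtain ⟨⟨p1, p2⟩, ⟨p3, p4⟩, ⟨p5, p6⟩, -⟩ := x.spec
  obtain ⟨⟨q1, q2⟩, ⟨q3, q4⟩, ⟨q5, q6⟩, -⟩ := y.spec
  have a1 := x.r1_le
  have a2 := x.r2_le
  have a3 := y.r1_le
  have a4 := y.r2_le
  have b1 : x.i1 ≤ 1 := cim_le _
  have b2 : x.i2 ≤ 1 := cim_le _
  have b3 : y.i1 ≤ 1 := cim_le _
  have b4 : y.i2 ≤ 1 := cim_le _
  have d1 : -1 ≤ x.i1 := le_cim _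
  have d2 : -1 ≤ x.i2 := le_cim _
  have d3 : -1 ≤ y.i1 := le_cim _
  have d4 : -1 ≤ y.i2 := le_cim _
  simp only [fx, fy] at h1 h2
  suffices hs : x.u = y.u ∧ x.v = y.v ∧ x.w = y.w ∧ x.r1 = y.r1 ∧ x.i1 = y.i1 ∧ x.r2 = y.r2 ∧ x.i2 = y.i2 by
    exact ext' hs.1 hs.2.1 hs.2.2.1 (c_ext hs.2.2.2.1 hs.2.2.2.2.1)
      (c_ext hs.2.2.2.2.2.1 hs.2.2.2.2.2.2)
  rcases five x with ⟨e1, e2, e3, e4, e5, e6⟩ | ⟨e1, e2, e3, e4, e5⟩ | ⟨e1, e2, e3, e4, e5, e6⟩ |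
    ⟨e1, e2, e3, e4, e5⟩ | ⟨e1, e2, e3, e4, e5, e6⟩ <;>
  rcases five y with ⟨g1, g2, g3, g4, g5, g6⟩ | ⟨g1, g2, g3, g4, g5⟩ | ⟨g1, g2, g3, g4, g5, g6⟩ |
    ⟨g1, g2, g3, g4, g5⟩ | ⟨g1, g2, g3, g4, g5, g6⟩ <;>
  first
  | (exfalso; linarith)
  | (refine ⟨?_, ?_, ?_, ?_, ?_, ?_, ?_⟩ <;> linarith)

noncomputable def hom : MM ≃ₜ balloonGraph 2 :=
  haveI : CompactSpace MM := isCompact_iff_compactSpace.1 Mset_compact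
  Continuous.homeoOfEquivCompactToT2 (f := Equiv.ofBijective ff ⟨ff_inj, ff_surj⟩) ff_cont

end MM

section transfer
variable {M M' : Type*} [TopologicalSpace M] [TopologicalSpace M']

/-- functoriality of the configuration space -/
def ucMap (e : M ≃ₜ M') (n : ℕ) : C(UConf n M, UConf n M') where
  toFun := Quotient.map (fun f => ⟨e ∘ f.1, e.injective.comp f.2⟩) (by
    rintro f g ⟨s, hs⟩
    exact ⟨s, by simp only [hs]; rfl⟩)
  continuous_toFun := by
    refine Continuous.quotient_map' ?_ _
    refine Continuous.subtype_mk ?_ _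
    refine continuous_pi fun i => e.continuous.comp ((continuous_apply i).comp continuous_subtype_val)

theorem ucMap_inv (e : M ≃ₜ M') (n : ℕ) (p : UConf n M) : ucMap e.symm n (ucMap e n p) = p := by
  induction p using Quotient.inductionOn with
  | _ f =>
    change Quotient.mk _ _ = _
    congr 1
    apply Subtype.ext
    funext i
    exact e.symm_apply_apply _

def ucHomeo (e : M ≃ₜ M') (n : ℕ) : UConf n M ≃ₜ UConf n M' where
  toFun := ucMap e n
  invFun := ucMap e.symm n
  left_inv := ucMap_inv e n
  right_inv := ucMap_inv e.symm n
  continuous_toFun := (ucMap e n).continuous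
  continuous_invFun := (ucMap e.symm n).continuous

variable {X X' : Type*} [TopologicalSpace X] [TopologicalSpace X']

theorem fg_homeo (e : X ≃ₜ X') (x : X) : Nonempty (FundamentalGroup X x ≃* FundamentalGroup X' (e x)) := by
  refine ⟨MulEquiv.ofBijective (FundamentalGroup.map (e : C(X, X')) x) ⟨?_, ?_⟩⟩
  · intro α β h
    induction α using Path.Homotopic.Quotient.ind with
    | _ γ =>
    induction β using Path.Homotopic.Quotient.ind with
    | _ γ' =>
    have h : Path.Homotopic.Quotient.mk (γ.map e.continuous) = .mk (γ'.map e.continuous) := h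
    rw [Path.Homotopic.Quotient.eq] at h
    obtain ⟨H⟩ := h
    change Path.Homotopic.Quotient.mk γ = .mk γ'
    rw [Path.Homotopic.Quotient.eq]
    refine ⟨⟨⟨⟨fun z => e.symm (H z), by fun_prop⟩, fun t => by simp, fun t => by simp⟩, ?_⟩⟩
    intro s t hs
    have := H.prop' s t hs
    apply e.injective
    simpa using this
  · intro β
    induction β using Path.Homotopic.Quotient.ind with
    | _ γ =>
    refine ⟨.mk ((γ.map e.symm.continuous).cast (by simp) (by simp)), ?_⟩
    change Path.Homotopic.Quotient.mk (Path.map _ e.continuous) = .mk γ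
    congr 1
    ext t
    simp
end transfer

theorem final_result (x : UConf 2 (balloonGraph 2)) :
    Nonempty (FundamentalGroup (UConf 2 (balloonGraph 2)) x ≃*
      Monoid.Coprod (FreeGroup (Fin 3)) (Multiplicative (ℤ × ℤ))) := by
  obtain ⟨hp, ⟨φ⟩⟩ := MM.main
  let e := ucHomeo MM.hom 2
  obtain ⟨ψ⟩ := fg_homeo e.symm x
  exact ⟨ψ.trans ((FundamentalGroup.fundamentalGroupMulEquivOfPathConnected (e.symm x) MM.bb).trans φ)⟩

end fileP

/-- The 2-strand braid group of the balloon graph with 2 balloons is isomorphic to the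
free product `F₃ ∗ ℤ²`. -/
theorem braid_group_two_balloon_graph_two (x : UConf 2 (balloonGraph 2)) :
    Nonempty (FundamentalGroup (UConf 2 (balloonGraph 2)) x ≃*
      Monoid.Coprod (FreeGroup (Fin 3)) (Multiplicative (ℤ × ℤ))) := by
  exact final_result x
end

section
/- Let n ≥ 1 and let G be a finite connected simple graph on vertex set Fin k with at least one edge. Then the n-strand graph braid group B_n(|G|) = π₁(UC^n(|G|)) (at any basepoint) is a finitely presented group. -/
/-- The geometric realization of a simple graph on `Fin k`: the union, over the edges
`{i, j}` of `G`, of the straight segments in `ℝ^{Fin k}` joining the standard basis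
vectors `e_i` and `e_j`. -/
def graphRealization {k : ℕ} (G : SimpleGraph (Fin k)) : Set (Fin k → ℝ) :=
  ⋃ (i : Fin k) (j : Fin k) (_ : G.Adj i j),
    segment ℝ (Pi.single i (1 : ℝ)) (Pi.single j (1 : ℝ))

/-- A group is finitely presented if it is isomorphic to a quotient of a finitely
generated free group by the normal closure of a finite set of relators. -/
def GroupFP (G : Type*) [Group G] : Prop :=
  ∃ (S : Type) (_ : Fintype S) (R : Finset (FreeGroup S)),
    Nonempty (PresentedGroup (R : Set (FreeGroup S)) ≃* G)

open Topology Filter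

/-- A retract of a finitely presented group is finitely presented. -/
theorem fp_of_retract {Γ H : Type*} [Group Γ] [Group H] [hΓ : Group.IsFinitelyPresented Γ]
    (φ : Γ →* H) (ψ : H →* Γ) (h : ∀ x, φ (ψ x) = x) : Group.IsFinitelyPresented H := by
  obtain ⟨n, π, hπ, -⟩ := hΓ.out
  refine Group.IsFinitelyPresented.of_surjective φ (fun x => ⟨ψ x, h x⟩) ?_
  let S : Set Γ := Set.range fun i : Fin n => (π (FreeGroup.of i))⁻¹ * ψ (φ (π (FreeGroup.of i)))
  refine ⟨S, Set.finite_range _, le_antisymm ?_ ?_⟩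
  · apply Subgroup.normalClosure_le_normal
    rintro _ ⟨i, rfl⟩
    simp [MonoidHom.mem_ker, h]
  · intro g hg
    obtain ⟨w, rfl⟩ := hπ g
    have key : ((QuotientGroup.mk' (Subgroup.normalClosure S)).comp ((ψ.comp φ).comp π)) =
        (QuotientGroup.mk' (Subgroup.normalClosure S)).comp π := by
      ext i
      simp only [MonoidHom.comp_apply, QuotientGroup.mk'_apply]
      symm
      rw [QuotientGroup.eq]
      exact Subgroup.subset_normalClosure ⟨i, rfl⟩
    have := DFunLike.congr_fun key w
    simp only [MonoidHom.comp_apply, QuotientGroup.mk'_apply] at this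
    rw [MonoidHom.mem_ker.1 hg, map_one] at this
    exact (QuotientGroup.eq_one_iff _).1 this.symm

/-- A local cocycle on `X` with values in `Γ`. -/
structure LocCocycle (X : Type*) [TopologicalSpace X] (Γ : Type*) [Group Γ] where
  U : X → Set X
  isOpen_U : ∀ x, IsOpen (U x)
  mem_U : ∀ x, x ∈ U x
  sub_U : ∀ x, ∀ y ∈ U x, U y ⊆ U x
  G : X → X → Γ
  cocyc : ∀ x, ∀ y ∈ U x, ∀ z ∈ U y, G y z * G x y = G x z

namespace LocCocycle
variable {X : Type*} [TopologicalSpace X] {Γ : Type*} [Group Γ] (c : LocCocycle X Γ)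

theorem G_self (x : X) : c.G x x = 1 := by
  simpa using c.cocyc x x (c.mem_U x) x (c.mem_U x)

theorem U_nhds (x : X) : c.U x ∈ 𝓝 x := (c.isOpen_U x).mem_nhds (c.mem_U x)

/-- The total space of the covering attached to a cocycle. -/
def Tot (_ : LocCocycle X Γ) : Type _ := X × Γ

instance : TopologicalSpace c.Tot where
  IsOpen s := ∀ (x : X) (g : Γ), ((x, g) : X × Γ) ∈ s → ∀ᶠ y in 𝓝 x, ((y, c.G x y * g) : X × Γ) ∈ s
  isOpen_univ := fun x g _ => Filter.Eventually.of_forall fun y => Set.mem_univ _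
  isOpen_inter := fun s t hs ht x g h => (hs x g h.1).and (ht x g h.2)
  isOpen_sUnion := fun S hS x g ⟨s, hs, h⟩ => (hS s hs x g h).mono fun y hy => ⟨s, hs, hy⟩

/-- Local sections. -/
def sec (x : X) (g : Γ) : X → c.Tot := fun y => (y, c.G x y * g)

/-- The projection of the total space. -/
def proj : c.Tot → X := Prod.fst

/-- The fibre coordinate. -/
def fib : c.Tot → Γ := Prod.snd

/-- A point of the total space. -/
def pt (x : X) (g : Γ) : c.Tot := (x, g)

theorem isOpen_def (s : Set c.Tot) : IsOpen s ↔ ∀ x g, c.pt x g ∈ s → ∀ᶠ y in 𝓝 x, c.sec x g y ∈ s :=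
  Iff.rfl

theorem sec_self (x : X) (g : Γ) : c.sec x g x = c.pt x g := by simp [sec, pt, G_self]; rfl

theorem sec_sec {x y z : X} (g : Γ) (hy : y ∈ c.U x) (hz : z ∈ c.U y) :
    c.sec y (c.G x y * g) z = c.sec x g z := by
  simp [sec, ← mul_assoc, c.cocyc x y hy z hz]; rfl

theorem nhds_pt (x : X) (g : Γ) : 𝓝 (c.pt x g) = map (c.sec x g) (𝓝 x) := by
  ext s
  rw [mem_map, mem_nhds_iff]
  constructor
  · rintro ⟨t, ht, ho, hm⟩
    exact ((c.isOpen_def t).1 ho x g hm).mono fun y hy => ht hy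
  · intro h
    refine ⟨{q | ∀ᶠ w in 𝓝 (c.proj q), c.sec (c.proj q) (c.fib q) w ∈ s}, ?_, ?_, h⟩
    · rintro ⟨y, k⟩ hq
      have := hq.self_of_nhds
      rwa [sec_self] at this
    · rw [isOpen_def]
      intro y k hq
      have h1 : ∀ᶠ w in 𝓝 y, ∀ᶠ v in 𝓝 w, c.sec y k v ∈ s := eventually_eventually_nhds.2 hq
      filter_upwards [h1, c.U_nhds y] with w hw hwU
      filter_upwards [hw, c.U_nhds w] with v hv hvU
      change c.sec w (c.G y w * k) v ∈ s
      rwa [c.sec_sec k hwU hvU]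

theorem continuous_proj : Continuous c.proj := by
  rw [continuous_iff_continuousAt]
  rintro ⟨x, g⟩
  change Tendsto _ (𝓝 (c.pt x g)) _
  rw [nhds_pt, tendsto_map'_iff]
  exact tendsto_id

theorem isCoveringMap_proj : IsCoveringMap c.proj := by
  intro x
  let _ : TopologicalSpace Γ := ⊥
  have : DiscreteTopology Γ := ⟨rfl⟩
  have ev : IsEvenlyCovered c.proj x Γ := by
    refine ⟨inferInstance, c.U x, c.mem_U x, c.isOpen_U x,
      (c.isOpen_U x).preimage c.continuous_proj, ?_⟩
    refine ⟨{ toFun := fun q => (⟨c.proj q.1, q.2⟩, (c.G x (c.proj q.1))⁻¹ * c.fib q.1)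
              invFun := fun r => ⟨c.sec x r.2 r.1.1, r.1.2⟩
              left_inv := ?_
              right_inv := ?_
              continuous_toFun := ?_
              continuous_invFun := ?_ }, fun q => rfl⟩
    · rintro ⟨⟨y, g⟩, hq⟩
      apply Subtype.ext
      simp [sec, proj, fib]; rfl
    · rintro ⟨⟨y, hy⟩, g⟩
      simp [sec, proj, fib]
    · refine Continuous.prodMk ?_ ?_
      · exact (c.continuous_proj.comp continuous_subtype_val).subtype_mk _
      · rw [continuous_iff_continuousAt]
        rintro ⟨⟨y, g⟩, hq⟩
        have : ∀ᶠ q in 𝓝 (c.pt y g), (c.G x (c.proj q))⁻¹ * c.fib q = (c.G x y)⁻¹ * g := by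
          rw [nhds_pt, eventually_map]
          filter_upwards [c.U_nhds y] with z hz
          have := c.cocyc x y hq z hz
          simp [sec, proj, fib, ← this]
        have h2 := (continuous_subtype_val (p := fun q => q ∈ c.proj ⁻¹' c.U x)).tendsto
          ⟨c.pt y g, hq⟩
        have h3 := h2.eventually this
        refine (tendsto_const_nhds (x := (c.G x y)⁻¹ * g)).congr' ?_
        filter_upwards [h3] with q hq'
        exact hq'.symm
    · refine Continuous.subtype_mk ?_ _
      rw [continuous_iff_continuousAt]
      rintro ⟨⟨y, hy⟩, g⟩
      change Tendsto _ _ (𝓝 (c.pt y (c.G x y * g)))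
      rw [nhds_pt, nhds_prod_eq, nhds_discrete Γ, prod_pure, tendsto_map'_iff]
      have h2 := (continuous_subtype_val (p := fun q => q ∈ c.U x)).tendsto ⟨y, hy⟩
      refine (tendsto_map.comp h2).congr' ?_
      filter_upwards [h2.eventually (c.U_nhds y)] with z hz
      exact c.sec_sec g hy hz
  exact ev.to_isEvenlyCovered_preimage

/-- Right translation. -/
def rmul (k : Γ) : c.Tot → c.Tot := fun q => (q.1, q.2 * k)

theorem continuous_rmul (k : Γ) : Continuous (c.rmul k) := by
  rw [continuous_iff_continuousAt]
  rintro ⟨x, g⟩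
  change Tendsto _ (𝓝 (c.pt x g)) (𝓝 (c.pt x (g * k)))
  rw [nhds_pt, nhds_pt, tendsto_map'_iff]
  refine tendsto_map.congr fun y => ?_
  simp [sec, rmul, mul_assoc]; rfl

/-- Transport along a path class. -/
noncomputable def tr {x y : X} (γ : Path.Homotopic.Quotient x y) : Γ :=
  c.fib (c.isCoveringMap_proj.monodromy γ ⟨c.pt x 1, rfl⟩).1

theorem monodromy_pt {x y : X} (γ : Path.Homotopic.Quotient x y) (g : Γ) :
    (c.isCoveringMap_proj.monodromy γ ⟨c.pt x g, rfl⟩).1 = c.pt y (c.tr γ * g) := by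
  obtain ⟨γ, rfl⟩ := γ.mk_surjective
  have e1 : (c.isCoveringMap_proj.monodromy (.mk γ) ⟨c.pt x 1, rfl⟩).1 = c.pt y (c.tr (.mk γ)) :=
    Prod.ext (c.isCoveringMap_proj.monodromy (.mk γ) ⟨c.pt x 1, rfl⟩).2 rfl
  set Λ := c.isCoveringMap_proj.liftPath γ (c.pt x 1) γ.source with hΛ
  have h1 : Λ 1 = c.pt y (c.tr (.mk γ)) := e1
  have h2 := (c.isCoveringMap_proj.eq_liftPath_iff (γ := γ) (e := c.pt x g) γ.source
    (Γ := c.rmul g ∘ Λ)).2 ⟨(c.continuous_rmul g).comp Λ.continuous, ?_, ?_⟩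
  · have := congrFun h2 1
    simp only [Function.comp_apply, h1] at this
    exact this.symm
  · exact c.isCoveringMap_proj.liftPath_lifts γ (c.pt x 1) γ.source
  · have := c.isCoveringMap_proj.liftPath_zero γ (c.pt x 1) γ.source
    simp only [Function.comp_apply, hΛ, this]
    simp [rmul, pt]; rfl

theorem tr_refl (x : X) : c.tr (.refl x) = 1 := by
  unfold tr
  rw [c.isCoveringMap_proj.monodromy_refl]; rfl

theorem tr_trans {x y z : X} (γ : Path.Homotopic.Quotient x y) (γ' : Path.Homotopic.Quotient y z) :
    c.tr (γ.trans γ') = c.tr γ' * c.tr γ := by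
  have h := c.monodromy_pt γ' (c.tr γ)
  have h0 := c.monodromy_pt γ 1
  rw [mul_one] at h0
  have h1 : c.isCoveringMap_proj.monodromy γ ⟨c.pt x 1, rfl⟩ = ⟨c.pt y (c.tr γ), rfl⟩ :=
    Subtype.ext h0
  have h2 := c.isCoveringMap_proj.monodromy_trans_apply γ γ' ⟨c.pt x 1, rfl⟩
  rw [h1] at h2
  have h3 := congrArg Subtype.val h2
  rw [h, c.monodromy_pt] at h3
  simpa [pt] using congrArg Prod.snd h3

/-- The local description of the transport along a path. -/
theorem exists_transport {x y : X} (γ : Path x y) : ∃ u : unitInterval → Γ, u 0 = 1 ∧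
    u 1 = c.tr (.mk γ) ∧ ∀ t, ∀ᶠ s in 𝓝 t, u s = c.G (γ t) (γ s) * u t := by
  set Λ := c.isCoveringMap_proj.liftPath γ (c.pt x 1) γ.source with hΛ
  have hl : ∀ t, c.proj (Λ t) = γ t := fun t =>
    congrFun (c.isCoveringMap_proj.liftPath_lifts γ (c.pt x 1) γ.source) t
  refine ⟨fun t => c.fib (Λ t), ?_, rfl, fun t => ?_⟩
  · have := c.isCoveringMap_proj.liftPath_zero γ (c.pt x 1) γ.source
    simp only [hΛ, this]; rfl
  · have h1 : Λ t = c.pt (γ t) (c.fib (Λ t)) := Prod.ext (hl t) rfl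
    have h2 : Tendsto Λ (𝓝 t) (𝓝 (Λ t)) := Λ.continuous.tendsto t
    rw [h1, nhds_pt] at h2
    have h3 := h2.eventually (p := fun q => q ∈ Set.range (c.sec (γ t) (c.fib (Λ t))))
      (by rw [eventually_map]; exact Eventually.of_forall fun y => ⟨y, rfl⟩)
    filter_upwards [h3] with s ⟨z, hz⟩
    have hz1 : z = γ s := by rw [← hl s, ← hz]; rfl
    rw [← hz1, ← hz]; rfl

/-- The transport homomorphism. -/
noncomputable def trHom (x : X) : FundamentalGroup X x →* Γ where
  toFun γ := c.tr γ
  map_one' := c.tr_refl x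
  map_mul' p q := c.tr_trans q p

end LocCocycle

namespace Stratif



variable {X : Type*} [TopologicalSpace X] {E : Type} [Preorder E] (p : X → E)

/-- A path class which has a representative inside the open set attached to `e`. -/
def SmallCls (e : E) {x y : X} (q : Path.Homotopic.Quotient x y) : Prop :=
  ∃ γ : Path x y, Path.Homotopic.Quotient.mk γ = q ∧ ∀ t, e ≤ p (γ t)

variable {p}

theorem SmallCls.trans {e : E} {x y z : X} {q : Path.Homotopic.Quotient x y} {r : Path.Homotopic.Quotient y z}
    (hq : SmallCls p e q) (hr : SmallCls p e r) : SmallCls p e (q.trans r) := by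
  obtain ⟨γ, rfl, h⟩ := hq
  obtain ⟨δ, rfl, k⟩ := hr
  refine ⟨γ.trans δ, rfl, fun t => ?_⟩
  rw [Path.trans_apply]
  split_ifs
  · exact h _
  · exact k _

theorem SmallCls.mono {e e' : E} (hee : e ≤ e') {x y : X} {q : Path.Homotopic.Quotient x y}
    (hq : SmallCls p e' q) : SmallCls p e q := by
  obtain ⟨γ, rfl, h⟩ := hq
  exact ⟨γ, rfl, fun t => hee.trans (h t)⟩

theorem SmallCls.unique {e : E} (hsc : SimplyConnectedSpace {y // e ≤ p y}) {x y : X}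
    {q r : Path.Homotopic.Quotient x y} (hq : SmallCls p e q) (hr : SmallCls p e r) : q = r := by
  obtain ⟨γ, rfl, h⟩ := hq
  obtain ⟨δ, rfl, k⟩ := hr
  have hx : e ≤ p x := by simpa using h 0
  have hy : e ≤ p y := by simpa using h 1
  let γ' : Path (⟨x, hx⟩ : {y // e ≤ p y}) ⟨y, hy⟩ :=
    { toFun := fun t => ⟨γ t, h t⟩
      continuous_toFun := γ.continuous.subtype_mk _
      source' := by simp
      target' := by simp }
  let δ' : Path (⟨x, hx⟩ : {y // e ≤ p y}) ⟨y, hy⟩ :=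
    { toFun := fun t => ⟨δ t, k t⟩
      continuous_toFun := δ.continuous.subtype_mk _
      source' := by simp
      target' := by simp }
  have := (SimplyConnectedSpace.paths_homotopic γ' δ').map ⟨Subtype.val, continuous_subtype_val⟩
  exact Path.Homotopic.Quotient.eq.2 this

theorem exists_small {e : E} (hsc : SimplyConnectedSpace {y // e ≤ p y}) {x y : X}
    (hx : e ≤ p x) (hy : e ≤ p y) : ∃ q : Path.Homotopic.Quotient x y, SmallCls p e q := by
  let γ := PathConnectedSpace.somePath (⟨x, hx⟩ : {y // e ≤ p y}) ⟨y, hy⟩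
  exact ⟨.mk (γ.map continuous_subtype_val), _, rfl, fun t => (γ t).2⟩

end Stratif

open Stratif in
/-- A space with a continuous surjection to a finite preorder (with the Alexandrov topology) such
that preimages of minimal open sets are simply connected has finitely presented fundamental
groups. -/
theorem fp_of_stratification {X : Type*} [TopologicalSpace X] {E : Type} [Finite E] [Preorder E]
    (p : X → E) (hsurj : Function.Surjective p)
    (hopen : ∀ e, IsOpen {y | e ≤ p y}) (hsc : ∀ e, SimplyConnectedSpace {y // e ≤ p y}) (x₀ : X) :
    Group.IsFinitelyPresented (FundamentalGroup X x₀) := by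
  classical
  let b : E → X := Function.surjInv hsurj
  have hb : ∀ e, p (b e) = e := Function.surjInv_eq hsurj
  have hQ : ∀ (e : E) (x y : X), e ≤ p x → e ≤ p y → ∃ q : Path.Homotopic.Quotient x y, SmallCls p e q :=
    fun e x y hx hy => exists_small (hsc e) hx hy
  choose Q Qs using hQ
  have Qt : ∀ {e e' e'' x y z} (hx : e ≤ p x) (hy : e ≤ p y) (hy' : e' ≤ p y) (hz : e' ≤ p z)
      (hx'' : e'' ≤ p x) (hz'' : e'' ≤ p z) (_ : e'' ≤ e) (_ : e'' ≤ e'),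
      (Q e x y hx hy).trans (Q e' y z hy' hz) = Q e'' x z hx'' hz'' := by
    intro e e' e'' x y z hx hy hy' hz hx'' hz'' h h'
    exact SmallCls.unique (hsc e'') (((Qs ..).mono h).trans ((Qs ..).mono h')) (Qs ..)
  have jQ : ∀ {e x y}, e ≤ p x → e ≤ p y → Joined x y := fun hx hy => by
    obtain ⟨γ, -⟩ := Path.Homotopic.Quotient.mk_surjective (Q _ _ _ hx hy)
    exact ⟨γ⟩
  let K : ∀ y, Joined x₀ y → Path.Homotopic.Quotient x₀ y := fun y h => .mk h.somePath
  let val : E × E → FundamentalGroup X x₀ := fun cd =>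
    if h : cd.1 ≤ cd.2 ∧ Joined x₀ (b cd.1) then
      ((K _ h.2).trans (Q cd.1 (b cd.1) (b cd.2) (hb _).ge (h.1.trans (hb _).ge))).trans
        (K (b cd.2) (h.2.trans (jQ (e := cd.1) (hb _).ge (h.1.trans (hb _).ge)))).symm
    else (1 : FundamentalGroup X x₀)
  have val_pos : ∀ {c d : E} (h : c ≤ d) (hc : Joined x₀ (b c)) (hd : Joined x₀ (b d)) ,
      val (c, d) = ((K _ hc).trans (Q c (b c) (b d) (hb _).ge (h.trans (hb _).ge))).trans
        (K (b d) hd).symm := by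
    intro c d h hc hd
    simp only [val]
    rw [dif_pos ⟨h, hc⟩]
  let rels : Set (FreeGroup (E × E)) :=
    (fun t : E × E × E => FreeGroup.of (t.2.1, t.2.2) * FreeGroup.of (t.1, t.2.1) *
      (FreeGroup.of (t.1, t.2.2))⁻¹) '' {t | t.1 ≤ t.2.1 ∧ t.2.1 ≤ t.2.2}
  have : Finite rels := (Set.toFinite _).image _
  have hrel : ∀ {c d e : E}, c ≤ d → d ≤ e →
      (PresentedGroup.of (d, e) * PresentedGroup.of (c, d) : PresentedGroup rels) =
        PresentedGroup.of (c, e) := by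
    intro c d e hcd hde
    rw [← mul_inv_eq_one]
    exact PresentedGroup.one_of_mem (rels := rels) ⟨(c, d, e), ⟨hcd, hde⟩, rfl⟩
  have hval : ∀ r ∈ rels, FreeGroup.lift val r = 1 := by
    rintro _ ⟨⟨c, d, e⟩, ⟨hcd, hde⟩, rfl⟩
    dsimp only at hcd hde
    simp only [map_mul, map_inv, FreeGroup.lift_apply_of, mul_inv_eq_one]
    by_cases hc : Joined x₀ (b c)
    · have hd : Joined x₀ (b d) := hc.trans (jQ (e := c) (hb _).ge (hcd.trans (hb _).ge))
      have he : Joined x₀ (b e) := hd.trans (jQ (e := d) (hb _).ge (hde.trans (hb _).ge))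
      rw [val_pos hcd hc hd, val_pos hde hd he, val_pos (hcd.trans hde) hc he]
      rw [FundamentalGroup.mul_def]
      rw [← Qt (hb c).ge (hcd.trans (hb _).ge) (hb d).ge (hde.trans (hb _).ge) (hb c).ge
        ((hcd.trans hde).trans (hb _).ge) le_rfl hcd]
      simp only [Path.Homotopic.Quotient.trans_assoc]
      congr 2
      rw [← Path.Homotopic.Quotient.trans_assoc, Path.Homotopic.Quotient.symm_trans, Path.Homotopic.Quotient.refl_trans]
    · have hd : ¬ Joined x₀ (b d) := fun h => hc (h.trans
        (jQ (e := c) (hb _).ge (hcd.trans (hb _).ge)).symm)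
      simp [val, hc, hd]
  let φ : PresentedGroup rels →* FundamentalGroup X x₀ := PresentedGroup.toGroup hval
  let c : LocCocycle X (PresentedGroup rels) :=
    { U := fun x => {y | p x ≤ p y}
      isOpen_U := fun x => hopen _
      mem_U := fun x => le_refl (p x)
      sub_U := fun x y hy z hz => le_trans hy hz
      G := fun x y => PresentedGroup.of (p x, p y)
      cocyc := fun x y hy z hz => hrel hy hz }
  have hG : ∀ x y, φ (c.G x y) = val (p x, p y) := fun x y => PresentedGroup.toGroup.of hval
  let Lp : ∀ y, Joined x₀ y → Path.Homotopic.Quotient x₀ y := fun y h =>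
    (K (b (p y)) (h.trans (jQ (e := p y) le_rfl (hb _).ge))).trans
      (Q (p y) (b (p y)) y (hb _).ge le_rfl)
  have step : ∀ (x y : X) (hx : Joined x₀ x) (hy : Joined x₀ y) (hxy : p x ≤ p y)
      (q : Path.Homotopic.Quotient x y), SmallCls p (p x) q →
      (Lp x hx).trans q = Path.Homotopic.Quotient.trans (φ (c.G x y)) (Lp y hy) := by
    intro x y hx hy hxy q hq
    have hbx := hx.trans (jQ (e := p x) le_rfl (hb (p x)).ge)
    have hby := hy.trans (jQ (e := p y) le_rfl (hb (p y)).ge)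
    rw [hG, val_pos hxy hbx hby]
    have e1 : q = Q (p x) x y le_rfl hxy := SmallCls.unique (hsc _) hq (Qs ..)
    simp only [Lp, e1, Path.Homotopic.Quotient.trans_assoc]
    congr 1
    rw [← Path.Homotopic.Quotient.trans_assoc (K _ _).symm, Path.Homotopic.Quotient.symm_trans, Path.Homotopic.Quotient.refl_trans,
      Qt (e'' := p x) _ _ _ _ (hb _).ge hxy le_rfl le_rfl,
      Qt (e'' := p x) _ _ _ _ (hb _).ge hxy le_rfl hxy]
  have main : ∀ γ : Path.Homotopic.Quotient x₀ x₀, Path.Homotopic.Quotient.trans (Lp x₀ (Joined.refl x₀)) γ =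
      Path.Homotopic.Quotient.trans (φ (c.tr γ)) (Lp x₀ (Joined.refl x₀)) := by
    intro γ
    obtain ⟨γ, rfl⟩ := γ.mk_surjective
    obtain ⟨u, hu0, hu1, hu⟩ := c.exists_transport γ
    have hj : ∀ t, Joined x₀ (γ t) := fun t => ⟨(γ.subpath 0 t).cast γ.source.symm rfl⟩
    let B : unitInterval → Path.Homotopic.Quotient (γ 0) x₀ := fun t =>
      (((Path.Homotopic.Quotient.mk (γ.subpath 0 t)).trans (Lp (γ t) (hj t)).symm).trans
        (Path.Homotopic.Quotient.symm (φ (u t))))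
    have hB : IsLocallyConstant B := by
      rw [IsLocallyConstant.iff_eventually_eq]
      intro t
      have hn : {s | p (γ t) ≤ p (γ s)} ∈ 𝓝 t :=
        ((hopen (p (γ t))).preimage γ.continuous).mem_nhds (le_refl (p (γ t)))
      obtain ⟨V, hV, hVo, hVs⟩ : ∃ V ∈ 𝓝 t, V.OrdConnected ∧ V ⊆ {s | p (γ t) ≤ p (γ s)} :=
        ⟨_, Set.ordConnectedComponent_mem_nhds.2 hn, inferInstance,
          Set.ordConnectedComponent_subset⟩
      filter_upwards [hu t, hV] with s hs hsV
      have hsm : SmallCls p (p (γ t)) (Path.Homotopic.Quotient.mk (γ.subpath t s)) := by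
        refine ⟨_, rfl, fun r => ?_⟩
        have h1 : (γ.subpath t s) r ∈ Set.range (γ.subpath t s) := ⟨r, rfl⟩
        rw [Path.range_subpath] at h1
        obtain ⟨w, hw, hw'⟩ := h1
        rw [← hw']
        exact hVs (hVo.uIcc_subset (mem_of_mem_nhds hV) hsV hw)
      have hst := step (γ t) (γ s) (hj t) (hj s) (hVs hsV) _ hsm
      have e1 : Path.Homotopic.Quotient.mk (γ.subpath 0 s) =
          (Path.Homotopic.Quotient.mk (γ.subpath 0 t)).trans (Path.Homotopic.Quotient.mk (γ.subpath t s)) := by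
        rw [← Path.Homotopic.Quotient.mk_trans]
        exact (Path.Homotopic.Quotient.eq.2 ⟨Path.Homotopy.subpathTransSubpath γ 0 t s⟩).symm
      have e2 : Path.Homotopic.Quotient.mk (γ.subpath t s) = (Lp (γ t) (hj t)).symm.trans
          (Path.Homotopic.Quotient.trans (φ (c.G (γ t) (γ s))) (Lp (γ s) (hj s))) := by
        rw [← hst, ← Path.Homotopic.Quotient.trans_assoc, Path.Homotopic.Quotient.symm_trans, Path.Homotopic.Quotient.refl_trans]
      have e3 : Path.Homotopic.Quotient.symm (φ (u s)) = Path.Homotopic.Quotient.trans (Path.Homotopic.Quotient.symm (φ (c.G (γ t) (γ s))))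
          (Path.Homotopic.Quotient.symm (φ (u t))) := by
        rw [hs, map_mul]
        change (φ (c.G (γ t) (γ s)) * φ (u t))⁻¹ = (φ (u t))⁻¹ * (φ (c.G (γ t) (γ s)))⁻¹
        exact mul_inv_rev _ _
      simp only [B, e1, e2, e3, Path.Homotopic.Quotient.trans_assoc]
      rw [← Path.Homotopic.Quotient.trans_assoc (Lp (γ s) (hj s)), Path.Homotopic.Quotient.trans_symm, Path.Homotopic.Quotient.refl_trans]
      rw [← Path.Homotopic.Quotient.trans_assoc _ (Path.Homotopic.Quotient.symm (φ (c.G (γ t) (γ s)))),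
        Path.Homotopic.Quotient.trans_symm, Path.Homotopic.Quotient.refl_trans]
    have hB01 : B 1 = B 0 := hB.apply_eq_of_isPreconnected isPreconnected_univ
      (Set.mem_univ _) (Set.mem_univ _)
    simp only [B, hu0, hu1, Path.subpath_self, Path.subpath_zero_one, map_one] at hB01
    have gen : ∀ (a a' : X) (ha : x₀ = a) (ha' : x₀ = a') (h : Joined x₀ a) (h' : Joined x₀ a'),
        ((Path.Homotopic.Quotient.mk (γ.cast ha.symm ha'.symm)).trans (Lp a' h').symm).trans
          (Path.Homotopic.Quotient.symm (φ (c.tr (.mk γ)))) =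
        ((Path.Homotopic.Quotient.mk (Path.refl a)).trans (Lp a h).symm).trans
          (Path.Homotopic.Quotient.symm (1 : FundamentalGroup X x₀)) →
        Path.Homotopic.Quotient.trans (Lp x₀ (Joined.refl x₀)) (.mk γ) =
      Path.Homotopic.Quotient.trans (φ (c.tr (.mk γ))) (Lp x₀ (Joined.refl x₀)) := by
      intro a a' ha ha' h h' H
      subst ha
      subst ha'
      let ℓ : FundamentalGroup X x₀ := Lp x₀ (Joined.refl x₀)
      let g : FundamentalGroup X x₀ := Path.Homotopic.Quotient.mk γ
      let w : FundamentalGroup X x₀ := φ (c.tr (.mk γ))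
      change w⁻¹ * (ℓ⁻¹ * g) = (1 : FundamentalGroup X x₀)⁻¹ * (ℓ⁻¹ * 1) at H
      change g * ℓ = ℓ * w
      rw [inv_one, one_mul, mul_one, inv_mul_eq_iff_eq_mul, inv_mul_eq_iff_eq_mul] at H
      rw [H]
      group
    exact gen _ _ γ.source.symm γ.target.symm (hj 0) (hj 1) hB01
  let ℓ : FundamentalGroup X x₀ := Lp x₀ (Joined.refl x₀)
  refine fp_of_retract ((MulAut.conj ℓ).toMonoidHom.comp φ) (c.trHom x₀) fun γ => ?_
  have := main γ
  change (γ * ℓ : FundamentalGroup X x₀) = ℓ * φ (c.tr γ) at this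
  change ℓ * φ (c.tr γ) * ℓ⁻¹ = γ
  rw [← this]; exact mul_inv_cancel_right γ ℓ

namespace GraphBraid

/-- The combinatorial type of an ordered configuration. -/
abbrev Ty (n k : ℕ) : Type := (Fin n → Fin n → Fin k → Prop) × (Fin n → Fin k → Prop)

/-- The type of a tuple of vectors. -/
def ty {n k : ℕ} (v : Fin n → Fin k → ℝ) : Ty n k :=
  (fun i j a => v i a < v j a, fun i a => v i a ≠ 0)

theorem ty_le {n k : ℕ} {v w : Fin n → Fin k → ℝ} : ty v ≤ ty w ↔
    (∀ i j a, v i a < v j a → w i a < w j a) ∧ (∀ i a, v i a ≠ 0 → w i a ≠ 0) := Iff.rfl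

theorem ty_le_comp {n k : ℕ} {v w : Fin n → Fin k → ℝ} (h : ty v ≤ ty w)
    (σ : Equiv.Perm (Fin n)) : ty (v ∘ σ) ≤ ty (w ∘ σ) :=
  ⟨fun i j a => h.1 (σ i) (σ j) a, fun i a => h.2 (σ i) a⟩

theorem isOpen_ty_le {n k : ℕ} (v : Fin n → Fin k → ℝ) : IsOpen {w | ty v ≤ ty w} := by
  simp only [ty_le, Set.ofPred_and, Set.ofPred_forall]
  refine IsOpen.inter ?_ ?_
  · refine isOpen_iInter_of_finite fun i => isOpen_iInter_of_finite fun j =>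
      isOpen_iInter_of_finite fun a => isOpen_iInter_of_finite fun _ => ?_
    exact isOpen_lt (by fun_prop) (by fun_prop)
  · refine isOpen_iInter_of_finite fun i => isOpen_iInter_of_finite fun a =>
      isOpen_iInter_of_finite fun _ => ?_
    exact isOpen_ne_fun (by fun_prop) (by fun_prop)

/-- Rigidity: a permutation preserving the open star of an injective tuple is trivial. -/
theorem perm_eq_one {n k : ℕ} {v w : Fin n → Fin k → ℝ} (hv : Function.Injective v)
    (σ : Equiv.Perm (Fin n)) (h1 : ty v ≤ ty w) (h2 : ty v ≤ ty (w ∘ σ)) : σ = 1 := by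
  have key : v ∘ σ.symm = v := by
    funext i a
    let F : Fin n → ℝ := fun i => v i a
    let W : Fin n → ℝ := fun i => w i a
    let τ := Tuple.sort W
    have hm : Monotone (W ∘ τ) := Tuple.monotone_sort W
    have m1 : Monotone (F ∘ τ) := by
      intro i j hij
      by_contra hlt
      exact absurd (hm hij) (not_le.2 (h1.1 _ _ a (not_le.1 hlt)))
    have m2 : Monotone (F ∘ (τ.trans σ.symm : Equiv.Perm (Fin n))) := by
      intro i j hij
      by_contra hlt
      have := h2.1 _ _ a (not_le.1 hlt)
      simp [ty] at this
      exact absurd (hm hij) (not_le.2 this)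
    have e1 := Tuple.comp_sort_eq_comp_iff_monotone.2 m1
    have e2 := Tuple.comp_sort_eq_comp_iff_monotone.2 m2
    have e3 := congrFun (e2.trans e1.symm) (τ.symm i)
    simpa [F] using e3
  ext i
  have := hv (congrFun key (σ i))
  simp at this
  simp [← this]

theorem real_nonneg {k : ℕ} {G : SimpleGraph (Fin k)} {z : Fin k → ℝ}
    (hz : z ∈ graphRealization G) (a : Fin k) : 0 ≤ z a := by
  simp only [graphRealization, Set.mem_iUnion] at hz
  obtain ⟨i, j, -, s, t, hs, ht, -, rfl⟩ := hz
  have h1 : ∀ (i : Fin k), 0 ≤ (Pi.single i (1 : ℝ) : Fin k → ℝ) a := fun i => by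
    by_cases h : a = i
    · subst h; simp
    · simp [h]
  simp only [Pi.add_apply, Pi.smul_apply, smul_eq_mul]
  have := h1 i
  have := h1 j
  positivity

theorem real_sum {k : ℕ} {G : SimpleGraph (Fin k)} {z : Fin k → ℝ}
    (hz : z ∈ graphRealization G) : ∑ a, z a = 1 := by
  simp only [graphRealization, Set.mem_iUnion] at hz
  obtain ⟨i, j, -, s, t, hs, ht, hst, rfl⟩ := hz
  simp [Finset.sum_add_distrib, ← Finset.mul_sum, hst]

theorem real_supp {k : ℕ} {G : SimpleGraph (Fin k)} {z : Fin k → ℝ}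
    (hz : z ∈ graphRealization G) : ∃ i j, G.Adj i j ∧ ∀ a, z a ≠ 0 → a = i ∨ a = j := by
  simp only [graphRealization, Set.mem_iUnion] at hz
  obtain ⟨i, j, hij, s, t, hs, ht, hst, rfl⟩ := hz
  refine ⟨i, j, hij, fun a ha => ?_⟩
  by_contra! h
  simp [h.1, h.2] at ha

theorem real_of {k : ℕ} {G : SimpleGraph (Fin k)} {z : Fin k → ℝ} (h0 : ∀ a, 0 ≤ z a)
    (h1 : ∑ a, z a = 1) {i j : Fin k} (hij : G.Adj i j) (hs : ∀ a, z a ≠ 0 → a = i ∨ a = j) :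
    z ∈ graphRealization G := by
  simp only [graphRealization, Set.mem_iUnion]
  have hne : i ≠ j := hij.ne
  refine ⟨i, j, hij, z i, z j, h0 i, h0 j, ?_, ?_⟩
  · rw [← h1, ← Finset.sum_pair hne]
    refine Finset.sum_subset (Finset.subset_univ _) fun a _ ha => ?_
    by_contra hza
    simpa using ha (by simpa using hs a hza)
  · funext a
    by_cases hai : a = i
    · subst hai; simp [hne]
    · by_cases haj : a = j
      · subst haj; simp [hai]
      · have : z a = 0 := by
          by_contra hza
          exact (hs a hza).elim hai haj
        simp [hai, haj, this]

variable {n k : ℕ} (G : SimpleGraph (Fin k))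

/-- Coordinates of a configuration. -/
def vec (f : Conf n (graphRealization G)) : Fin n → Fin k → ℝ := fun i => (f.1 i).1

theorem vec_injective (f : Conf n (graphRealization G)) : Function.Injective (vec G f) :=
  fun _ _ h => f.2 (Subtype.ext h)

theorem vec_embedding : IsEmbedding (vec (n := n) G) := by
  have h1 : IsEmbedding (fun f : Fin n → graphRealization G => fun i => (f i).1) :=
    IsEmbedding.piMap fun _ => IsEmbedding.subtypeVal
  exact h1.comp IsEmbedding.subtypeVal

/-- Star of a configuration. -/
def St (f : Conf n (graphRealization G)) : Set (Conf n (graphRealization G)) :=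
  {g | ty (vec G f) ≤ ty (vec G g)}

theorem isOpen_St (f : Conf n (graphRealization G)) : IsOpen (St G f) :=
  (isOpen_ty_le (vec G f)).preimage (vec_embedding G).continuous

theorem starConvex_St (f : Conf n (graphRealization G)) :
    StarConvex ℝ (vec G f) (vec G '' St G f) := by
  rintro _ ⟨g, hg, rfl⟩ s t hs ht hst
  rcases ht.eq_or_lt with rfl | ht
  · obtain rfl : s = 1 := by linarith
    exact ⟨f, le_refl (ty (vec G f)), by simp⟩
  set w : Fin n → Fin k → ℝ := s • vec G f + t • vec G g with hw
  have hwa : ∀ i a, w i a = s * vec G f i a + t * vec G g i a := fun i a => rfl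
  have fn : ∀ i a, 0 ≤ vec G f i a := fun i a => real_nonneg (f.1 i).2 a
  have gn : ∀ i a, 0 ≤ vec G g i a := fun i a => real_nonneg (g.1 i).2 a
  have hty : ty (vec G f) ≤ ty w := by
    refine ⟨fun i j a h => ?_, fun i a h => ?_⟩
    · have h' := hg.1 i j a h
      change w i a < w j a
      change vec G f i a < vec G f j a at h
      change vec G g i a < vec G g j a at h'
      rw [hwa, hwa]
      nlinarith
    · have h' : vec G g i a ≠ 0 := hg.2 i a h
      have h'' := lt_of_le_of_ne (gn i a) h'.symm
      change w i a ≠ 0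
      rw [hwa]
      have := fn i a
      positivity
  have hr : ∀ i, w i ∈ graphRealization G := by
    intro i
    obtain ⟨p, q, hpq, hsupp⟩ := real_supp (g.1 i).2
    refine real_of (fun a => ?_) ?_ hpq fun a ha => hsupp a fun h0 => ha ?_
    · rw [hwa]
      have := fn i a
      have := gn i a
      positivity
    · have e1 : ∑ a, vec G f i a = 1 := real_sum (f.1 i).2
      have e2 : ∑ a, vec G g i a = 1 := real_sum (g.1 i).2
      simp only [hwa, Finset.sum_add_distrib, ← Finset.mul_sum, e1, e2]
      linarith
    · have hf0 : vec G f i a = 0 := by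
        by_contra hne
        exact hg.2 i a hne h0
      have hg0 : vec G g i a = 0 := h0
      rw [hwa, hf0, hg0]; simp
  have hinj : Function.Injective w := by
    intro i j hij
    by_contra hne
    have h1 : vec G f i ≠ vec G f j := fun h => hne (vec_injective G f h)
    obtain ⟨a, ha⟩ := Function.ne_iff.1 h1
    rcases lt_or_gt_of_ne ha with h | h
    · have h2 : w i a < w j a := hty.1 i j a h
      exact h2.ne (congrFun hij a)
    · have h2 : w j a < w i a := hty.1 j i a h
      exact h2.ne (congrFun hij a).symm
  exact ⟨⟨fun i => ⟨w i, hr i⟩, fun i j h => hinj (congrArg Subtype.val h)⟩, hty, rfl⟩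

theorem simplyConnected_St (f : Conf n (graphRealization G)) : IsSimplyConnected (St G f) := by
  rw [← (vec_embedding G).isSimplyConnected_image]
  have := (starConvex_St G f).contractibleSpace ⟨_, f, le_refl (ty (vec G f)), rfl⟩
  change SimplyConnectedSpace _
  infer_instance

/-- Permuting a configuration. -/
def perm (σ : Equiv.Perm (Fin n)) (f : Conf n (graphRealization G)) :
    Conf n (graphRealization G) := ⟨f.1 ∘ σ, f.2.comp σ.injective⟩

theorem vec_perm (σ : Equiv.Perm (Fin n)) (f : Conf n (graphRealization G)) :
    vec G (perm G σ f) = vec G f ∘ σ := rfl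

theorem continuous_perm (σ : Equiv.Perm (Fin n)) : Continuous (perm G σ) := by
  refine Continuous.subtype_mk ?_ _
  exact continuous_pi fun i => (continuous_apply (σ i)).comp continuous_subtype_val

/-- The quotient map. -/
def proj (f : Conf n (graphRealization G)) : UConf n (graphRealization G) :=
  Quotient.mk _ f

theorem proj_eq {f g : Conf n (graphRealization G)} :
    proj G f = proj G g ↔ ∃ σ, f = perm G σ g := by
  rw [proj, proj, Quotient.eq]
  exact exists_congr fun σ => (Subtype.ext_iff (a1 := f) (a2 := perm G σ g)).symm

theorem proj_perm (σ : Equiv.Perm (Fin n)) (f : Conf n (graphRealization G)) :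
    proj G (perm G σ f) = proj G f := (proj_eq G).2 ⟨σ, rfl⟩

theorem continuous_proj : Continuous (proj (n := n) G) := continuous_quot_mk

theorem isOpenMap_proj : IsOpenMap (proj (n := n) G) := by
  intro W hW
  refine isQuotientMap_quot_mk.isOpen_preimage.1 ?_
  have : (proj G) ⁻¹' (proj G '' W) = ⋃ σ : Equiv.Perm (Fin n), perm G σ ⁻¹' W := by
    ext f
    simp only [Set.mem_preimage, Set.mem_image, Set.mem_iUnion]
    constructor
    · rintro ⟨g, hg, h⟩
      obtain ⟨σ, rfl⟩ := (proj_eq G).1 h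
      exact ⟨σ, hg⟩
    · rintro ⟨σ, h⟩
      exact ⟨_, h, proj_perm G σ f⟩
  change IsOpen ((proj G) ⁻¹' (proj G '' W))
  rw [this]
  exact isOpen_iUnion fun σ => hW.preimage (continuous_perm G σ)

theorem injOn_proj (f : Conf n (graphRealization G)) : Set.InjOn (proj G) (St G f) := by
  intro g hg g' hg' h
  obtain ⟨σ, rfl⟩ := (proj_eq G).1 h
  have := perm_eq_one (vec_injective G f) σ hg' hg
  subst this
  rfl

theorem simplyConnected_image (f : Conf n (graphRealization G)) :
    IsSimplyConnected (proj G '' St G f) := by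
  have h1 : IsOpenEmbedding ((St G f).domRestrict (proj G)) :=
    .of_continuous_injective_isOpenMap ((continuous_proj G).comp continuous_subtype_val)
      (Set.injOn_iff_injective.1 (injOn_proj G f))
      ((isOpenMap_proj G).domRestrict (isOpen_St G f))
  have h2 : IsSimplyConnected (Set.univ : Set (St G f)) := by
    rw [← IsEmbedding.subtypeVal.isSimplyConnected_image]
    simpa using simplyConnected_St G f
  have h3 := h1.isEmbedding.isSimplyConnected_image.2 h2
  rwa [Set.image_univ, Set.range_domRestrict] at h3

/-- Sets of types, with the preorder making stars into up-sets. -/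
structure TySet (n k : ℕ) : Type where
  carrier : Set (Ty n k)

instance : Preorder (TySet n k) where
  le A B := ∀ b ∈ B.carrier, ∃ a ∈ A.carrier, a ≤ b
  le_refl A b hb := ⟨b, hb, le_rfl⟩
  le_trans A B C h1 h2 c hc := by
    obtain ⟨b, hb, hbc⟩ := h2 c hc
    obtain ⟨a, ha, hab⟩ := h1 b hb
    exact ⟨a, ha, hab.trans hbc⟩

instance : Finite (TySet n k) :=
  Finite.of_injective TySet.carrier fun A B h => by cases A; cases B; cases h; rfl

/-- The set of types of all orderings of a configuration. -/
def tySet (x : UConf n (graphRealization G)) : TySet n k :=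
  ⟨{a | ∃ f, proj G f = x ∧ ty (vec G f) = a}⟩

theorem tySet_le (f : Conf n (graphRealization G)) (x : UConf n (graphRealization G)) :
    tySet G (proj G f) ≤ tySet G x ↔ x ∈ proj G '' St G f := by
  constructor
  · intro h
    obtain ⟨g, rfl⟩ := Quotient.mk_surjective x
    obtain ⟨_, ⟨f', hf', rfl⟩, hle⟩ := h _ ⟨g, rfl, rfl⟩
    obtain ⟨σ, rfl⟩ := (proj_eq G).1 hf'.symm
    exact ⟨perm G σ g, ty_le_comp hle σ, proj_perm G σ g⟩
  · rintro ⟨g, hg, rfl⟩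
    rintro _ ⟨g', hg', rfl⟩
    obtain ⟨σ, rfl⟩ := (proj_eq G).1 hg'
    exact ⟨_, ⟨perm G σ f, proj_perm G σ f, rfl⟩, ty_le_comp hg σ⟩

theorem fp (x : UConf n (graphRealization G)) :
    Group.IsFinitelyPresented (FundamentalGroup (UConf n (graphRealization G)) x) := by
  have key : ∀ e : Set.range (tySet (n := n) G), ∃ f,
      {y | e ≤ Set.rangeFactorization (tySet G) y} = proj G '' St G f := by
    rintro ⟨_, x, rfl⟩
    obtain ⟨f, rfl⟩ := Quotient.mk_surjective x
    exact ⟨f, Set.ext fun y => tySet_le G f y⟩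
  refine fp_of_stratification (Set.rangeFactorization (tySet (n := n) G))
    Set.rangeFactorization_surjective (fun e => ?_) (fun e => ?_) x
  · obtain ⟨f, hf⟩ := key e
    rw [hf]
    exact isOpenMap_proj G _ (isOpen_St G f)
  · obtain ⟨f, hf⟩ := key e
    have := simplyConnected_image G f
    rw [← hf] at this
    exact this

end GraphBraid

/-- For `n ≥ 1` and a finite connected graph `G` with at least one edge, the `n`-strand
graph braid group `B_n(|G|)` is finitely presented. -/
theorem braid_group_finitely_presented {k : ℕ} (n : ℕ) (hn : 1 ≤ n)
    (G : SimpleGraph (Fin k)) (hconn : G.Connected) (hedge : G.edgeSet.Nonempty)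
    (x : UConf n (graphRealization G)) :
    GroupFP (FundamentalGroup (UConf n (graphRealization G)) x) := by
  have := GraphBraid.fp G x
  obtain ⟨m, s, hs, ⟨e⟩⟩ := Group.IsFinitelyPresented.exists_mulEquiv_presentedGroup
    (G := FundamentalGroup (UConf n (graphRealization G)) x)
  refine ⟨Fin m, inferInstance, hs.toFinset, ⟨?_⟩⟩
  rw [Set.Finite.coe_toFinset]
  exact e.symm
end
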